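/- arXiv:2310.02244 — 2 statements merged into one kernel-verified Lean document; each statement's English description precedes it below -/
import Mathlib

section
/- With Γ^L and C^L as defined in the context, there exist a constant c > 0 and an integer k₀ such that for every L = 2^k with k ≥ k₀ + 1, every admissible index (t, r, a, b) with r < t, every p ∈ {0, 1/L, 2/L, …, 1} (p > 0 for C) and every q ∈ (0,1]: |Γ^{L/2}_{t,r,a,b}(p, q) − Γ^L_{t,r,a,b}(p, q)| ≤ c/L and |C^{L/2}_{t,r,a}(p) − C^L_{t,r,a}(p)| ≤ c/L. In particular the dyadic sequences (Γ^{2^k}(p,q))_k and (C^{2^k}(p))_k converge at geometric rate. -/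
open MeasureTheory Set Finset Filter Topology

/-- The defining recursion (from the Tensor-Program analysis of a depth-`L` linear residual
network `x^l = x^{l−1} + L^{−1/2} W^l x^{l−1}` trained for `T` SGD steps under Depth-μP)
for the coefficient functions `Γ^L_{t,r,a,b}(p,q)` and covariance functions `C^L_{t,s,a}(p)`,
together with the output values `f̊_t` and loss derivatives `χ̊_t = ℓ'_t(f̊_t)`.

Conventions: Booleans encode the indices `a, b ∈ {0,1}` (`false = 0`, `true = 1`); the
time index `r, s = −1` refers to the input/output layers `U, V`; `C_{−1,−1,·} ≡ 1`;
`C_{t,s,·} ≡ 0` if exactly one of `t, s` is `−1`; `C` is symmetric; `Γ_{s,r,·,·} ≡ 0` for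
`r > s`; `Γ^L` is constant in `p` on each interval `((l−1)/L, l/L]`. -/
structure IsLinearTP (T L : ℕ) (ξ : ℕ → ℝ) (ℓ' : ℕ → ℝ → ℝ)
    (Γ : ℕ → ℤ → Bool → Bool → ℝ → ℝ → ℝ)
    (C : ℤ → ℤ → Bool → ℝ → ℝ)
    (f χ : ℕ → ℝ) : Prop where
  C_symm : ∀ (t s : ℤ) (b : Bool) (p : ℝ), C t s b p = C s t b p
  C_base : ∀ (b : Bool) (p : ℝ), C (-1) (-1) b p = 1
  C_mixed : ∀ t : ℤ, 0 ≤ t → ∀ (b : Bool) (p : ℝ), C t (-1) b p = 0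
  Γ_vanish : ∀ (t : ℕ) (r : ℤ), (t : ℤ) < r → ∀ (a b : Bool) (p q : ℝ), Γ t r a b p q = 0
  Γ_const : ∀ t : ℕ, t < T → ∀ r : ℤ, -1 ≤ r → r ≤ (t : ℤ) → ∀ a b : Bool,
    ∀ l : ℕ, 1 ≤ l → l ≤ L → ∀ p q : ℝ, ((l : ℝ) - 1) / L < p → p ≤ (l : ℝ) / L →
      0 < q → q ≤ 1 → Γ t r a b p q = Γ t r a b ((l : ℝ) / L) q
  fwd_init : ∀ t : ℕ, t < T → ∀ r : ℤ, -1 ≤ r → r ≤ (t : ℤ) → ∀ b : Bool,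
    ∀ q : ℝ, 0 < q → q ≤ 1 →
      Γ t r false b 0 q = if r = -1 ∧ b = false then ξ t else 0
  fwd_step : ∀ t : ℕ, t < T → ∀ l : ℕ, 1 ≤ l → l ≤ L → ∀ r : ℤ, -1 ≤ r → r ≤ (t : ℤ) →
    ∀ b : Bool, ∀ p q : ℝ, ((l : ℝ) - 1) / L < p → p ≤ (l : ℝ) / L → 0 < q → q ≤ 1 →
      Γ t r false b p q =
        Γ t r false b (((l : ℝ) - 1) / L) q
          + (if (t : ℤ) = r ∧ b = false ∧ (l : ℤ) = ⌈(L : ℝ) * q⌉ then 1 else 0)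
          + (1 / (L : ℝ)) * ∑ s ∈ Finset.range t,
              Γ s r true b ((l : ℝ) / L) q *
                (Γ t (s : ℤ) false true (((l : ℝ) - 1) / L) ((l : ℝ) / L)
                  - C (t : ℤ) (s : ℤ) false ((l : ℝ) / L))
  fwd_C : ∀ t : ℕ, t < T → ∀ s : ℕ, s ≤ t → ∀ l : ℕ, 1 ≤ l → l ≤ L →
    ∀ p : ℝ, ((l : ℝ) - 1) / L < p → p ≤ (l : ℝ) / L →
      C (t : ℤ) (s : ℤ) false p =
        ∑ t' ∈ Finset.Icc (-1 : ℤ) (t : ℤ), ∑ s' ∈ Finset.Icc (-1 : ℤ) (s : ℤ), ∑ b : Bool,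
          ∫ q in Ioc (0 : ℝ) 1,
            Γ t t' false b (((l : ℝ) - 1) / L) q * C t' s' b q *
              Γ s s' false b (((l : ℝ) - 1) / L) q
  f_def : ∀ t : ℕ, t < T → f t = Γ t (-1) false true 1 1
  χ_def : ∀ t : ℕ, t < T → χ t = ℓ' t (f t)
  bwd_init : ∀ t : ℕ, t < T → ∀ r : ℤ, -1 ≤ r → r ≤ (t : ℤ) → ∀ b : Bool,
    ∀ q : ℝ, 0 < q → q ≤ 1 →
      Γ t r true b 1 q = if r = -1 ∧ b = true then χ t else 0
  bwd_step : ∀ t : ℕ, t < T → ∀ l : ℕ, 1 ≤ l → l ≤ L → ∀ r : ℤ, -1 ≤ r → r ≤ (t : ℤ) →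
    ∀ b : Bool, ∀ p q : ℝ, ((l : ℝ) - 2) / L < p → p ≤ ((l : ℝ) - 1) / L → 0 ≤ p →
      0 < q → q ≤ 1 →
      Γ t r true b p q =
        Γ t r true b ((l : ℝ) / L) q
          + (if (t : ℤ) = r ∧ b = true ∧ (l : ℤ) = ⌈(L : ℝ) * q⌉ then 1 else 0)
          + (1 / (L : ℝ)) * ∑ s ∈ Finset.range t,
              Γ s r false b (((l : ℝ) - 1) / L) q *
                (Γ t (s : ℤ) true false ((l : ℝ) / L) ((l : ℝ) / L)
                  - C (t : ℤ) (s : ℤ) true ((l : ℝ) / L))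
  bwd_C : ∀ t : ℕ, t < T → ∀ s : ℕ, s ≤ t → ∀ l : ℕ, 1 ≤ l → l ≤ L →
    ∀ p : ℝ, ((l : ℝ) - 1) / L < p → p ≤ (l : ℝ) / L →
      C (t : ℤ) (s : ℤ) true p =
        ∑ t' ∈ Finset.Icc (-1 : ℤ) (t : ℤ), ∑ s' ∈ Finset.Icc (-1 : ℤ) (s : ℤ), ∑ b : Bool,
          ∫ q in Ioc (0 : ℝ) 1,
            Γ t t' true b ((l : ℝ) / L) q * C t' s' b q * Γ s s' true b ((l : ℝ) / L) q

/-! ## Discrete Gronwall and elementary sums -/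

lemma gron_aux (A θ : ℝ) (i : ℕ) :
    A + θ * ∑ l ∈ Finset.range i, A * (1 + θ) ^ l = A * (1 + θ) ^ i := by
  induction i with
  | zero => simp
  | succ n ih => rw [Finset.sum_range_succ, mul_add, ← add_assoc, ih, pow_succ]; ring

lemma gron2 (L : ℕ) (hL : 1 ≤ L) (K A : ℝ) (hK : 0 ≤ K) (hA : 0 ≤ A) (P Q : ℕ → ℝ → Prop)
    (hPm : ∀ i x y, P i x → x ≤ y → P i y) (hQm : ∀ i x y, Q i x → x ≤ y → Q i y)
    (hP : ∀ i ≤ L, ∀ w v : ℕ → ℝ, (∀ l, 0 ≤ w l) → (∀ l, 0 ≤ v l) → (∀ l < i, P l (w l)) →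
      (∀ l < i, Q l (v l)) → P i (A + K / L * ∑ l ∈ Finset.range i, (w l + v l)))
    (hQ : ∀ i < L, ∀ (w : ℝ) (v : ℕ → ℝ), 0 ≤ w → (∀ l, 0 ≤ v l) → P i w →
      (∀ l < i, Q l (v l)) → Q i (A + K * w + K / L * ∑ l ∈ Finset.range i, v l)) :
    (∀ i ≤ L, P i (A * Real.exp (K * (K + 2)))) ∧
      ∀ i < L, Q i ((K + 1) * A * Real.exp (K * (K + 2))) := by
  have hL0 : (0 : ℝ) < L := by exact_mod_cast hL
  set M : ℝ := K * (K + 2) with hM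
  have hM0 : 0 ≤ M := by positivity
  set W : ℕ → ℝ := fun i => A * (1 + M / L) ^ i with hW
  have hW0 : ∀ i, 0 ≤ W i := fun i => by positivity
  have hWs : ∀ i, A + M / L * ∑ l ∈ Finset.range i, W l = W i := fun i => gron_aux A (M / L) i
  have key : ∀ i, (i ≤ L → P i (W i)) ∧ (i < L → Q i ((K + 1) * W i)) := by
    intro i
    induction i using Nat.strong_induction_on with
    | _ i ih =>
      have h1 : i ≤ L → P i (W i) := by
        intro hi
        have := hP i hi W (fun l => (K + 1) * W l) hW0
          (fun l => mul_nonneg (by linarith) (hW0 l))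
          (fun l hl => (ih l hl).1 (by omega)) (fun l hl => (ih l hl).2 (by omega))
        refine hPm _ _ _ this (le_of_eq ?_)
        rw [← hWs i]
        have : ∀ l, W l + (K + 1) * W l = (K + 2) * W l := fun l => by ring
        simp only [this]
        rw [← Finset.mul_sum, hM]; ring
      refine ⟨h1, fun hi => ?_⟩
      have := hQ i hi (W i) (fun l => (K + 1) * W l) (hW0 i)
        (fun l => mul_nonneg (by linarith) (hW0 l)) (h1 hi.le)
        (fun l hl => (ih l hl).2 (by omega))
      refine hQm _ _ _ this ?_
      rw [← Finset.mul_sum]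
      have h3 := hWs i
      have h4 : 0 ≤ ∑ l ∈ Finset.range i, W l := Finset.sum_nonneg fun l _ => hW0 l
      have h5 : K / L * ((K + 1) * ∑ l ∈ Finset.range i, W l) ≤
          M / L * ∑ l ∈ Finset.range i, W l := by
        rw [← mul_assoc]
        apply mul_le_mul_of_nonneg_right _ h4
        rw [div_mul_eq_mul_div, hM]
        gcongr
        linarith
      linarith
  have hWe : ∀ i ≤ L, W i ≤ A * Real.exp M := by
    intro i hi
    apply mul_le_mul_of_nonneg_left _ hA
    calc (1 + M / L) ^ i ≤ (Real.exp (M / L)) ^ i := by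
          apply pow_le_pow_left₀ (by positivity)
          rw [add_comm]; exact Real.add_one_le_exp _
      _ = Real.exp (i * (M / L)) := by rw [← Real.exp_nat_mul]
      _ ≤ Real.exp M := by
          apply Real.exp_le_exp.mpr
          have : (i : ℝ) ≤ L := by exact_mod_cast hi
          rw [← mul_div_assoc, div_le_iff₀ hL0, mul_comm]
          exact mul_le_mul_of_nonneg_left this hM0
  refine ⟨fun i hi => hPm _ _ _ ((key i).1 hi) (hWe i hi), fun i hi => ?_⟩
  refine hQm _ _ _ ((key i).2 hi) ?_
  rw [mul_assoc]
  exact mul_le_mul_of_nonneg_left (hWe i hi.le) (by linarith)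

lemma sum_trunc (L i : ℕ) (hi : i ≤ L) (v : ℕ → ℝ) :
    ∑ m ∈ Finset.range L, (if m < i then v m else 0) = ∑ m ∈ Finset.range i, v m := by
  rw [← Finset.sum_filter]
  congr 1
  ext m; simp; omega

lemma sum_triple (T : ℕ) (t s : ℕ) (ht : t < T) (hs : s ≤ t) (E : ℝ) (hE : 0 ≤ E)
    (F : ℤ → ℤ → Bool → ℝ)
    (hF : ∀ t' s' : ℤ, -1 ≤ t' → t' ≤ t → -1 ≤ s' → s' ≤ s → ∀ b, |F t' s' b| ≤ E) :
    |∑ t' ∈ Finset.Icc (-1 : ℤ) (t : ℤ), ∑ s' ∈ Finset.Icc (-1 : ℤ) (s : ℤ), ∑ b : Bool,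
      F t' s' b| ≤ 2 * ((T : ℝ) + 1) ^ 2 * E := by
  have hT : ((t : ℝ) + 2) ≤ T + 1 := by
    have : (t : ℝ) + 1 ≤ T := by exact_mod_cast ht
    linarith
  have hS : ((s : ℝ) + 2) ≤ T + 1 := by
    have : (s : ℝ) ≤ t := by exact_mod_cast hs
    linarith
  have cT : ((Finset.Icc (-1 : ℤ) (t : ℤ)).card : ℝ) = t + 2 := by
    have : (Finset.Icc (-1 : ℤ) (t : ℤ)).card = t + 2 := by simp; omega
    rw [this]; push_cast; ring
  have cS : ((Finset.Icc (-1 : ℤ) (s : ℤ)).card : ℝ) = s + 2 := by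
    have : (Finset.Icc (-1 : ℤ) (s : ℤ)).card = s + 2 := by simp; omega
    rw [this]; push_cast; ring
  calc _ ≤ ∑ t' ∈ Finset.Icc (-1 : ℤ) (t : ℤ), |∑ s' ∈ Finset.Icc (-1 : ℤ) (s : ℤ), ∑ b : Bool,
        F t' s' b| := Finset.abs_sum_le_sum_abs _ _
    _ ≤ ∑ t' ∈ Finset.Icc (-1 : ℤ) (t : ℤ), ∑ s' ∈ Finset.Icc (-1 : ℤ) (s : ℤ), (2 * E) := by
        refine Finset.sum_le_sum fun t' ht' => (Finset.abs_sum_le_sum_abs _ _).trans ?_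
        refine Finset.sum_le_sum fun s' hs' => (Finset.abs_sum_le_sum_abs _ _).trans ?_
        rw [Finset.mem_Icc] at ht' hs'
        have := hF t' s' ht'.1 ht'.2 hs'.1 hs'.2
        have h1 := this true
        have h2 := this false
        simp only [Fintype.sum_bool]
        linarith
    _ = ((t : ℝ) + 2) * ((s + 2) * (2 * E)) := by
        simp only [Finset.sum_const, nsmul_eq_mul, cT, cS]
    _ ≤ (T + 1) * ((T + 1) * (2 * E)) := by gcongr
    _ = _ := by ring

lemma sum_double (j : ℕ) (F : ℕ → ℝ) :
    ∑ l ∈ Finset.range (2 * j), F (l / 2) = 2 * ∑ l ∈ Finset.range j, F l := by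
  induction j with
  | zero => simp
  | succ n ih =>
    rw [show 2 * (n + 1) = 2 * n + 1 + 1 by ring, Finset.sum_range_succ, Finset.sum_range_succ,
      Finset.sum_range_succ, ih, show (2 * n + 1) / 2 = n by omega,
      show (2 * n) / 2 = n by omega]
    ring

lemma sum_shift_diff (p i : ℕ) (h1 : p ≤ i + 1) (h2 : i ≤ p + 1) (A B : ℕ → ℝ) (Z : ℝ)
    (hZ : 0 ≤ Z) (hA : ∀ l < p, |A l| ≤ Z) (hB : ∀ l < i, |B l| ≤ Z) (E : ℕ → ℝ)
    (hE : ∀ l < i, 0 ≤ E l) (hAB : ∀ l < i, l < p → |A l - B l| ≤ E l) :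
    |∑ l ∈ Finset.range p, A l - ∑ l ∈ Finset.range i, B l| ≤
      Z + ∑ l ∈ Finset.range i, E l := by
  have core : ∀ n, n ≤ i → n ≤ p →
      |∑ l ∈ Finset.range n, A l - ∑ l ∈ Finset.range n, B l| ≤ ∑ l ∈ Finset.range n, E l := by
    intro n hn1 hn2
    rw [← Finset.sum_sub_distrib]
    refine (Finset.abs_sum_le_sum_abs _ _).trans (Finset.sum_le_sum fun l hl => ?_)
    rw [Finset.mem_range] at hl
    exact hAB l (by omega) (by omega)
  rcases lt_trichotomy p i with h | h | h
  · obtain rfl : i = p + 1 := by omega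
    rw [Finset.sum_range_succ, Finset.sum_range_succ]
    have c := core p (by omega) le_rfl
    have b := hB p (by omega)
    have e := hE p (by omega)
    rw [abs_le] at *
    constructor <;> linarith [c.1, c.2, b.1, b.2]
  · subst h
    linarith [core p le_rfl le_rfl]
  · obtain rfl : p = i + 1 := by omega
    rw [Finset.sum_range_succ]
    have c := core i le_rfl (by omega)
    have b := hA i (by omega)
    rw [abs_le] at *
    constructor <;> linarith [c.1, c.2, b.1, b.2]

/-- Near-diagonal indicator. -/
noncomputable def dlt (i m : ℕ) : ℝ := if m = i ∨ m = i + 1 then 1 else 0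

lemma dlt_nonneg (i m : ℕ) : 0 ≤ dlt i m := by unfold dlt; split_ifs <;> norm_num

lemma dlt_le (i m : ℕ) : dlt i m ≤ (if m = i then 1 else 0) + (if m = i + 1 then 1 else 0) := by
  unfold dlt; split_ifs <;> first | omega | norm_num

lemma sum_dlt_right (i n : ℕ) : ∑ m ∈ Finset.range n, dlt i (m + 1) ≤ 2 := by
  calc _ ≤ ∑ m ∈ Finset.range n, (((if m + 1 = i then 1 else 0) : ℝ)
        + (if m = i then 1 else 0)) := by
        refine Finset.sum_le_sum fun m _ => (dlt_le _ _).trans (le_of_eq ?_)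
        simp
    _ ≤ 1 + 1 := by
        rw [Finset.sum_add_distrib]
        refine add_le_add ?_ ?_
        · rcases i with _ | i
          · simp
          · simp only [Nat.add_right_cancel_iff, Finset.sum_ite_eq']
            split_ifs <;> norm_num
        · rw [Finset.sum_ite_eq']
          split_ifs <;> norm_num
    _ = 2 := by norm_num

lemma sum_dlt_left (m n : ℕ) : ∑ l ∈ Finset.range n, dlt (l + 1) m ≤ 2 := by
  calc _ ≤ ∑ l ∈ Finset.range n, (((if l + 1 = m then 1 else 0) : ℝ)
        + (if l + 2 = m then 1 else 0)) := by
        refine Finset.sum_le_sum fun l _ => (dlt_le _ _).trans (le_of_eq ?_)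
        simp only [eq_comm]
    _ ≤ 1 + 1 := by
        rw [Finset.sum_add_distrib]
        refine add_le_add ?_ ?_
        · rcases m with _ | m
          · simp
          · simp only [Nat.add_right_cancel_iff, Finset.sum_ite_eq']
            split_ifs <;> norm_num
        · rcases m with _ | _ | m
          · simp
          · simp
          · simp only [Nat.add_right_cancel_iff, Finset.sum_ite_eq']
            split_ifs <;> norm_num
    _ = 2 := by norm_num


/-! ## The discrete, direction-symmetric form of the recursion -/

/-- Covariance read in the orientation of a sweep in direction `a`. -/
def cbar (L : ℕ) (c : ℤ → ℤ → Bool → ℕ → ℝ) (a : Bool) (t s : ℤ) (b : Bool) (m : ℕ) : ℝ :=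
  if b = a then c t s b m else c t s b (L + 1 - m)

/-- Direction-symmetric discrete recursion. -/
structure DTP (T L : ℕ) (x : ℕ → Bool → ℝ) (g : ℕ → ℤ → Bool → Bool → ℕ → ℕ → ℝ)
    (c : ℤ → ℤ → Bool → ℕ → ℝ) : Prop where
  c_symm : ∀ t s a m, c t s a m = c s t a m
  c_base : ∀ a m, c (-1) (-1) a m = 1
  c_mixed : ∀ t : ℤ, 0 ≤ t → ∀ a m, c t (-1) a m = 0
  g_vanish : ∀ (t : ℕ) (r : ℤ), (t : ℤ) < r → ∀ a b i m, g t r a b i m = 0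
  init : ∀ t < T, ∀ r : ℤ, -1 ≤ r → r ≤ t → ∀ a b m, 1 ≤ m → m ≤ L →
    g t r a b 0 m = if r = -1 ∧ b = a then x t a else 0
  step : ∀ t < T, ∀ i < L, ∀ r : ℤ, -1 ≤ r → r ≤ t → ∀ a b m, 1 ≤ m → m ≤ L →
    g t r a b (i + 1) m = g t r a b i m
      + (if (t : ℤ) = r ∧ b = a ∧ i + 1 = m then 1 else 0)
      + (1 / (L : ℝ)) * ∑ s ∈ Finset.range t,
          g s r (!a) b (L - (i + 1)) (L + 1 - m) *
            (g t s a (!a) i (i + 1) - c t s a (i + 1))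
  cov : ∀ t < T, ∀ s ≤ t, ∀ i < L, ∀ a,
    c t s a (i + 1) = ∑ t' ∈ Finset.Icc (-1 : ℤ) (t : ℤ), ∑ s' ∈ Finset.Icc (-1 : ℤ) (s : ℤ),
      ∑ b : Bool, (1 / (L : ℝ)) * ∑ m ∈ Finset.range L,
        g t t' a b i (m + 1) * cbar L c a t' s' b (m + 1) * g s s' a b i (m + 1)

section
variable {T L : ℕ} {x : ℕ → Bool → ℝ} {g : ℕ → ℤ → Bool → Bool → ℕ → ℕ → ℝ}
  {c : ℤ → ℤ → Bool → ℕ → ℝ}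

lemma DTP.diag (h : DTP T L x g c) {t : ℕ} (ht : t < T) (a b : Bool) {m : ℕ} (hm1 : 1 ≤ m)
    (hm2 : m ≤ L) : ∀ i ≤ L, g t t a b i m = if b = a ∧ m ≤ i then 1 else 0 := by
  intro i
  induction i with
  | zero =>
    intro _
    rw [h.init t ht t (by omega) le_rfl a b m hm1 hm2, if_neg, if_neg]
    · omega
    · rintro ⟨h1, -⟩; omega
  | succ i ih =>
    intro hi
    rw [h.step t ht i (by omega) t (by omega) le_rfl a b m hm1 hm2, ih (by omega),
      Finset.sum_eq_zero]
    · by_cases hb : b = a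
      · simp only [hb, true_and]
        split_ifs <;> first | omega | simp
      · simp [hb]
    · intro s hs
      rw [Finset.mem_range] at hs
      rw [h.g_vanish s t (by exact_mod_cast hs), zero_mul]

/-- The increment of the recursion. -/
def zinc (L : ℕ) (g : ℕ → ℤ → Bool → Bool → ℕ → ℕ → ℝ)
    (c : ℤ → ℤ → Bool → ℕ → ℝ) (t : ℕ) (r : ℤ) (a b : Bool) (m l : ℕ) : ℝ :=
  ∑ s ∈ Finset.range t, g s r (!a) b (L - (l + 1)) (L + 1 - m) *
            (g t s a (!a) l (l + 1) - c t s a (l + 1))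

lemma DTP.sum_form (h : DTP T L x g c) {t : ℕ} (ht : t < T) (a b : Bool) {m : ℕ} (hm1 : 1 ≤ m)
    (hm2 : m ≤ L) {r : ℤ} (hr1 : -1 ≤ r) (hr2 : r < t) : ∀ i ≤ L,
    g t r a b i m = (if r = -1 ∧ b = a then x t a else 0)
      + (1 / (L : ℝ)) * ∑ l ∈ Finset.range i, zinc L g c t r a b m l := by
  intro i
  induction i with
  | zero =>
    intro _
    rw [h.init t ht r hr1 hr2.le a b m hm1 hm2]; simp
  | succ i ih =>
    intro hi
    rw [h.step t ht i (by omega) r hr1 hr2.le a b m hm1 hm2, ih (by omega),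
      Finset.sum_range_succ, if_neg (show ¬ ((t : ℤ) = r ∧ b = a ∧ i + 1 = m) by
        rintro ⟨h1, -⟩; omega), zinc]
    ring

/-- Uniform bound on the coefficients. -/
def GB (L : ℕ) (g : ℕ → ℤ → Bool → Bool → ℕ → ℕ → ℝ) (K : ℝ) (t : ℕ) (a : Bool) : Prop :=
  ∀ r : ℤ, -1 ≤ r → ∀ b, ∀ i ≤ L, ∀ m, 1 ≤ m → m ≤ L → |g t r a b i m| ≤ K

/-- Uniform bound on the covariances. -/
def CB (L : ℕ) (c : ℤ → ℤ → Bool → ℕ → ℝ) (K : ℝ) (t : ℕ) (a : Bool) : Prop :=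
  ∀ s : ℤ, -1 ≤ s → s ≤ t → ∀ m, 1 ≤ m → m ≤ L → |c t s a m| ≤ K

lemma DTP.past_c (h : DTP T L x g c) {t : ℕ} {K : ℝ} (hK : 1 ≤ K)
    (hp : ∀ s < t, ∀ a, CB L c K s a) (t' s' : ℤ) (h1 : -1 ≤ t') (h2 : t' < t)
    (h3 : -1 ≤ s') (h4 : s' < t) (a : Bool) (m : ℕ) (hm1 : 1 ≤ m) (hm2 : m ≤ L) :
    |c t' s' a m| ≤ K := by
  wlog hle : s' ≤ t' generalizing t' s'
  · rw [h.c_symm]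
    exact this s' t' h3 h4 h1 h2 (by omega)
  rcases eq_or_lt_of_le h1 with h5 | h5
  · obtain rfl : s' = -1 := by omega
    rw [← h5, h.c_base]; simpa using hK
  · lift t' to ℕ using (by omega)
    exact hp t' (by omega) a s' h3 hle m hm1 hm2

lemma DTP.past_cbar (h : DTP T L x g c) {t : ℕ} {K : ℝ} (hK : 1 ≤ K)
    (hp : ∀ s < t, ∀ a, CB L c K s a) (t' s' : ℤ) (h1 : -1 ≤ t') (h2 : t' < t)
    (h3 : -1 ≤ s') (h4 : s' < t) (a b : Bool) (m : ℕ) (hm1 : 1 ≤ m) (hm2 : m ≤ L) :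
    |cbar L c a t' s' b m| ≤ K := by
  unfold cbar
  split_ifs
  · exact h.past_c hK hp t' s' h1 h2 h3 h4 b m hm1 hm2
  · exact h.past_c hK hp t' s' h1 h2 h3 h4 b _ (by omega) (by omega)

lemma DTP.c_neg_one (h : DTP T L x g c) (t : ℕ) (a : Bool) (m : ℕ) : c t (-1) a m = 0 :=
  h.c_mixed t (by omega) a m

/-- Product bound used in the covariance estimate, both for `s < t` and `s = t`. -/
lemma DTP.prod_bound (h : DTP T L x g c) {t : ℕ} (ht : t < T) {K : ℝ} (hK : 1 ≤ K)
    (hp : ∀ s < t, ∀ a, CB L c K s a) (a : Bool) {s : ℕ} (hs : s ≤ t) {i : ℕ} (hi : i ≤ L)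
    (hG : ∀ s' : ℤ, -1 ≤ s' → s' ≤ s → ∀ b m, 1 ≤ m → m ≤ L → |g s s' a b i m| ≤ K)
    (hC : s = t → ∀ s' : ℕ, s' < t → ∀ m, 1 ≤ m → m ≤ L → |c t s' a m| ≤ K)
    (t' s' : ℤ) (h1 : -1 ≤ t') (h2 : t' < t) (h3 : -1 ≤ s') (h4 : s' ≤ s) (b : Bool) (m : ℕ)
    (hm1 : 1 ≤ m) (hm2 : m ≤ L) :
    |cbar L c a t' s' b m| * |g s s' a b i m| ≤ K ^ 2 := by
  have hg := hG s' h3 h4 b m hm1 hm2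
  rw [sq]
  by_cases h5 : s' < t
  · exact mul_le_mul (h.past_cbar hK hp t' s' h1 h2 h3 h5 a b m hm1 hm2) hg (abs_nonneg _)
      (by linarith)
  · obtain rfl : s = t := by omega
    obtain rfl : s' = s := by omega
    by_cases hb : b = a
    · refine mul_le_mul ?_ hg (abs_nonneg _) (by linarith)
      rw [cbar, if_pos hb, hb, h.c_symm]
      rcases eq_or_lt_of_le h1 with h6 | h6
      · rw [← h6, h.c_neg_one]; simp; linarith
      · lift t' to ℕ using (by omega)
        exact hC rfl t' (by omega) m hm1 hm2
    · rw [h.diag ht a b hm1 hm2 i hi, if_neg (by simp [hb])]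
      simp; nlinarith

lemma DTP.cov_bound (h : DTP T L x g c) (hL : 1 ≤ L) {t : ℕ} (ht : t < T) {K : ℝ} (hK : 1 ≤ K)
    (hp : ∀ s < t, ∀ a, CB L c K s a) (a : Bool) {s : ℕ} (hs : s ≤ t) {i : ℕ} (hi : i < L)
    (hG : ∀ s' : ℤ, -1 ≤ s' → s' ≤ s → ∀ b m, 1 ≤ m → m ≤ L → |g s s' a b i m| ≤ K)
    (hC : s = t → ∀ s' : ℕ, s' < t → ∀ m, 1 ≤ m → m ≤ L → |c t s' a m| ≤ K)
    {w : ℝ} {v : ℕ → ℝ} (hw : 0 ≤ w) (hv : ∀ l, 0 ≤ v l)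
    (hX : ∀ r : ℤ, -1 ≤ r → r < t → ∀ b m, 1 ≤ m → m ≤ L → |g t r a b i m| ≤ w)
    (hY : ∀ l < i, ∀ s' : ℕ, s' ≤ s → |c t s' a (l + 1)| ≤ v l) :
    |c t s a (i + 1)| ≤ 2 * ((T : ℝ) + 1) ^ 2 *
      (K ^ 2 * w + K / L * ∑ l ∈ Finset.range i, v l) := by
  have hL0 : (0 : ℝ) < L := by exact_mod_cast hL
  rw [h.cov t ht s hs i hi a]
  have hsv : 0 ≤ ∑ l ∈ Finset.range i, v l := Finset.sum_nonneg fun l _ => hv l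
  refine sum_triple T t s ht hs _ (by positivity) _ ?_
  intro t' s' h1 h2 h3 h4 b
  have term : ∀ m ∈ Finset.range L,
      |g t t' a b i (m + 1) * cbar L c a t' s' b (m + 1) * g s s' a b i (m + 1)| ≤
        K ^ 2 * w + K * (if m < i then v m else 0) := by
    intro m hm
    rw [Finset.mem_range] at hm
    have hv' : 0 ≤ (if m < i then v m else 0) := by split_ifs; exacts [hv m, le_rfl]
    rw [mul_assoc, abs_mul, abs_mul]
    rcases lt_or_eq_of_le h2 with h5 | h5
    · have e1 := h.prod_bound ht hK hp a hs hi.le hG hC t' s' h1 h5 h3 h4 b (m + 1)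
        (by omega) (by omega)
      have e2 := hX t' h1 h5 b (m + 1) (by omega) (by omega)
      have := mul_le_mul e2 e1 (by positivity) hw
      nlinarith
    · subst h5
      rw [h.diag ht a b (by omega) (by omega) i hi.le]
      by_cases hb : b = a ∧ m + 1 ≤ i
      · rw [if_pos hb, abs_one, one_mul, if_pos (by omega), cbar, if_pos hb.1, hb.1]
        have e1 := hG s' h3 h4 a (m + 1) (by omega) (by omega)
        have e2 : |c t s' a (m + 1)| ≤ v m := by
          rcases eq_or_lt_of_le h3 with h6 | h6
          · rw [← h6, h.c_neg_one]; simpa using hv m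
          · lift s' to ℕ using (by omega)
            exact hY m (by omega) s' (by omega)
        have := mul_le_mul e2 e1 (abs_nonneg _) (hv m)
        nlinarith [mul_nonneg (sq_nonneg K) hw]
      · rw [if_neg hb]
        simp only [abs_zero, zero_mul]
        positivity
  rw [abs_mul, abs_of_pos (by positivity)]
  calc _ ≤ 1 / (L : ℝ) * ∑ m ∈ Finset.range L, (K ^ 2 * w + K * (if m < i then v m else 0)) := by
        apply mul_le_mul_of_nonneg_left _ (by positivity)
        exact (Finset.abs_sum_le_sum_abs _ _).trans (Finset.sum_le_sum term)
    _ = _ := by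
        rw [Finset.sum_add_distrib, ← Finset.mul_sum, ← Finset.mul_sum, sum_trunc L i hi.le]
        simp
        field_simp

lemma zinc_bound {t : ℕ} (ht : t < T) {K : ℝ} (hK : 1 ≤ K)
    (a b : Bool) {r : ℤ} {m : ℕ} {l : ℕ} {w : ℝ} (hw : 0 ≤ w)
    (hg : ∀ s < t, |g s r (!a) b (L - (l + 1)) (L + 1 - m)| ≤ K)
    (hX : ∀ s < t, |g t s a (!a) l (l + 1) - c t s a (l + 1)| ≤ w) :
    |zinc L g c t r a b m l| ≤ T * K * w := by
  unfold zinc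
  calc _ ≤ ∑ s ∈ Finset.range t, K * w := by
        refine (Finset.abs_sum_le_sum_abs _ _).trans (Finset.sum_le_sum fun s hs => ?_)
        rw [Finset.mem_range] at hs
        rw [abs_mul]
        exact mul_le_mul (hg s hs) (hX s hs) (abs_nonneg _) (by linarith)
    _ = t * (K * w) := by simp
    _ ≤ T * (K * w) := by gcongr
    _ = _ := by ring

end

set_option maxHeartbeats 1000000 in
lemma sweep_bound (T t : ℕ) (ht : t < T) (K : ℝ) (hK : 1 ≤ K) : ∃ K' : ℝ, 1 ≤ K' ∧
    ∀ (L : ℕ) (_ : 1 ≤ L) (x : ℕ → Bool → ℝ) (g : ℕ → ℤ → Bool → Bool → ℕ → ℕ → ℝ)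
      (c : ℤ → ℤ → Bool → ℕ → ℝ), DTP T L x g c → ∀ a : Bool,
      (∀ s < t, ∀ a, GB L g K s a ∧ CB L c K s a) → |x t a| ≤ K →
      GB L g K' t a ∧ CB L c K' t a := by
  obtain ⟨K1, hK1⟩ : ∃ y : ℝ, y = 2 * ((T : ℝ) + 1) ^ 2 * K ^ 2 := ⟨_, rfl⟩
  have hT0 : (0 : ℝ) ≤ T := by positivity
  have hK1K : T * K ≤ K1 := by
    rw [hK1]
    have : (T : ℝ) * K ≤ T * K ^ 2 := by
      apply mul_le_mul_of_nonneg_left _ hT0; nlinarith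
    have h2 : (T : ℝ) ≤ 2 * ((T : ℝ) + 1) ^ 2 := by nlinarith
    exact this.trans (mul_le_mul_of_nonneg_right h2 (sq_nonneg K))
  have hK10 : 0 ≤ K1 := by rw [hK1]; positivity
  obtain ⟨B1, hB1⟩ : ∃ y : ℝ, y = (K1 + 1) * K * Real.exp (K1 * (K1 + 2)) := ⟨_, rfl⟩
  have hexp : 1 ≤ Real.exp (K1 * (K1 + 2)) := Real.one_le_exp (by positivity)
  have hKB : K * Real.exp (K1 * (K1 + 2)) ≤ B1 := by
    rw [hB1, mul_assoc (K1 + 1)]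
    apply le_mul_of_one_le_left (by positivity)
    linarith
  have hB11 : K ≤ B1 := by nlinarith
  have hB1' : 1 ≤ B1 := hK.trans hB11
  obtain ⟨K2, hK2⟩ : ∃ y : ℝ, y = 2 * ((T : ℝ) + 1) ^ 2 * B1 ^ 2 := ⟨_, rfl⟩
  have hK20 : 0 ≤ K2 := by rw [hK2]; positivity
  obtain ⟨A2, hA2⟩ : ∃ y : ℝ, y = 2 * K2 * B1 := ⟨_, rfl⟩
  obtain ⟨B2, hB2⟩ : ∃ y : ℝ, y = (K2 + 1) * A2 * Real.exp (K2 * (K2 + 2)) := ⟨_, rfl⟩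
  have hA20 : 0 ≤ A2 := by rw [hA2]; positivity
  have hB20 : 0 ≤ B2 := by rw [hB2]; positivity
  refine ⟨B1 + B2, by linarith, ?_⟩
  intro L hL x g c h a hp hx
  have hL0 : (0 : ℝ) < L := by exact_mod_cast hL
  have hpc : ∀ s < t, ∀ a, CB L c K s a := fun s hs a => (hp s hs a).2
  have stage1 := gron2 L hL K1 K hK10 (by linarith)
    (fun i w => ∀ r : ℤ, -1 ≤ r → r < t → ∀ b m, 1 ≤ m → m ≤ L → |g t r a b i m| ≤ w)
    (fun i v => ∀ s : ℕ, s < t → |c t s a (i + 1)| ≤ v)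
    (fun i y z hy hyz r h1 h2 b m h3 h4 => (hy r h1 h2 b m h3 h4).trans hyz)
    (fun i y z hy hyz s hs => (hy s hs).trans hyz)
    (by
      intro i hi w v hw hv hP hQ r hr1 hr2 b m hm1 hm2
      rw [h.sum_form ht a b hm1 hm2 hr1 hr2 i hi]
      refine (abs_add_le _ _).trans (add_le_add ?_ ?_)
      · split_ifs
        · exact hx
        · simp; linarith
      · rw [abs_mul, abs_of_pos (by positivity)]
        calc _ ≤ 1 / (L : ℝ) * ∑ l ∈ Finset.range i, (K1 * (w l + v l)) := by
              apply mul_le_mul_of_nonneg_left _ (by positivity)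
              refine (Finset.abs_sum_le_sum_abs _ _).trans (Finset.sum_le_sum fun l hl => ?_)
              rw [Finset.mem_range] at hl
              have hwv : 0 ≤ w l + v l := add_nonneg (hw l) (hv l)
              refine (zinc_bound ht hK a b hwv ?_ ?_).trans
                (mul_le_mul_of_nonneg_right hK1K hwv)
              · intro s hs
                exact (hp s hs _).1 r hr1 b _ (by omega) _ (by omega) (by omega)
              · intro s hs
                refine (abs_sub _ _).trans (add_le_add ?_ ?_)
                · exact hP l hl s (by omega) (by omega) _ _ (by omega) (by omega)
                · exact hQ l hl s hs
          _ = _ := by rw [← Finset.mul_sum]; ring)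
    (by
      intro i hi w v hw hv hP hQ s hs
      have hsv : 0 ≤ ∑ l ∈ Finset.range i, v l := Finset.sum_nonneg fun l _ => hv l
      refine (h.cov_bound hL ht hK hpc a hs.le hi ?_ ?_ hw hv hP ?_).trans ?_
      · intro s' h3 _ b m hm1 hm2
        exact (hp s hs a).1 s' h3 b i hi.le m hm1 hm2
      · intro he; omega
      · intro l hl s' hs'
        exact hQ l hl s' (by omega)
      · have : K / L * ∑ l ∈ Finset.range i, v l ≤ K ^ 2 * (1 / L * ∑ l ∈ Finset.range i, v l) := by
          rw [div_eq_mul_one_div, mul_assoc]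
          apply mul_le_mul_of_nonneg_right _ (by positivity)
          nlinarith
        calc _ ≤ 2 * ((T : ℝ) + 1) ^ 2 *
              (K ^ 2 * w + K ^ 2 * (1 / L * ∑ l ∈ Finset.range i, v l)) := by gcongr
          _ = K1 * w + K1 / L * ∑ l ∈ Finset.range i, v l := by rw [hK1]; ring
          _ ≤ _ := by linarith)
  obtain ⟨s1P, s1Q⟩ := stage1
  have hGB : GB L g B1 t a := by
    intro r hr b i hi m hm1 hm2
    rcases lt_trichotomy r t with h1 | h1 | h1
    · exact (s1P i hi r hr h1 b m hm1 hm2).trans hKB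
    · rw [h1, h.diag ht a b hm1 hm2 i hi]
      split_ifs <;> simp <;> linarith
    · rw [h.g_vanish t r h1]; simp; linarith
  have hCB : ∀ s' : ℕ, s' < t → ∀ m, 1 ≤ m → m ≤ L → |c t s' a m| ≤ B1 := by
    intro s' hs' m hm1 hm2
    obtain ⟨m, rfl⟩ : ∃ n, m = n + 1 := ⟨m - 1, by omega⟩
    rw [hB1]
    exact s1Q m (by omega) s' hs'
  have hpc' : ∀ s < t, ∀ a, CB L c B1 s a := fun s hs a s' h1 h2 m h3 h4 =>
    (hpc s hs a s' h1 h2 m h3 h4).trans hB11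
  have stage2 := gron2 L hL K2 A2 hK20 hA20 (fun _ _ => True)
    (fun i v => |c t t a (i + 1)| ≤ v) (fun _ _ _ _ _ => trivial)
    (fun i y z hy hyz => hy.trans hyz)
    (fun _ _ _ _ _ _ _ _ => trivial)
    (by
      intro i hi w v hw hv _ hQ
      have hsv : 0 ≤ ∑ l ∈ Finset.range i, v l := Finset.sum_nonneg fun l _ => hv l
      refine (h.cov_bound (w := B1) (v := fun l => B1 + v l) hL ht hB1' hpc' a le_rfl hi ?_ ?_
        (by linarith) (fun l => by linarith [hv l]) ?_ ?_).trans ?_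
      · intro s' h3 _ b m hm1 hm2
        exact hGB s' h3 b i hi.le m hm1 hm2
      · intro _; exact hCB
      · intro r hr _ b m hm1 hm2
        exact hGB r hr b i hi.le m hm1 hm2
      · intro l hl s' hs'
        rcases lt_or_eq_of_le hs' with h1 | h1
        · linarith [hCB s' h1 (l + 1) (by omega) (by omega), hv l]
        · subst h1
          linarith [hQ l hl]
      · have e1 : B1 / L * ∑ l ∈ Finset.range i, (B1 + v l) ≤
            B1 ^ 2 * B1 + B1 ^ 2 * (1 / L * ∑ l ∈ Finset.range i, v l) := by
          rw [Finset.sum_add_distrib, mul_add]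
          refine add_le_add ?_ ?_
          · simp only [Finset.sum_const, Finset.card_range, nsmul_eq_mul]
            have : (i : ℝ) ≤ L := by exact_mod_cast hi.le
            rw [div_mul_eq_mul_div, div_le_iff₀ hL0]
            have h6 : B1 * (i * B1) ≤ B1 * (L * B1) := by gcongr
            have h7 : B1 * (L * B1) * 1 ≤ B1 * (L * B1) * B1 := by gcongr
            linarith [show B1 * (L * B1) * B1 = B1 ^ 2 * B1 * L by ring]
          · rw [div_eq_mul_one_div, mul_assoc]
            apply mul_le_mul_of_nonneg_right _ (by positivity)
            nlinarith
        calc _ ≤ 2 * ((T : ℝ) + 1) ^ 2 * (B1 ^ 2 * B1 +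
              (B1 ^ 2 * B1 + B1 ^ 2 * (1 / L * ∑ l ∈ Finset.range i, v l))) := by gcongr
          _ = A2 + K2 / L * ∑ l ∈ Finset.range i, v l := by rw [hA2, hK2]; ring
          _ ≤ _ := by linarith [mul_nonneg hK20 hw])
  refine ⟨fun r hr b i hi m hm1 hm2 => (hGB r hr b i hi m hm1 hm2).trans (by linarith), ?_⟩
  intro s hs1 hs2 m hm1 hm2
  rcases eq_or_lt_of_le hs1 with h6 | h6
  · rw [← h6, h.c_neg_one]; simp; linarith
  · lift s to ℕ using (by omega)
    rcases lt_or_eq_of_le hs2 with h7 | h7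
    · linarith [hCB s (by omega) m hm1 hm2]
    · obtain rfl : s = t := by omega
      obtain ⟨m, rfl⟩ : ∃ n, m = n + 1 := ⟨m - 1, by omega⟩
      have := stage2.2 m (by omega)
      rw [← hB2] at this
      linarith


/-! ## Comparison of depths `N` and `L = 2 N` -/

lemma abs_mul_sub_le {x y x' y' A B u v : ℝ} (hx : |x - x'| ≤ u) (hy : |y - y'| ≤ v)
    (hA : |y| ≤ A) (hB : |x'| ≤ B) : |x * y - x' * y'| ≤ u * A + B * v := by
  have e : x * y - x' * y' = (x - x') * y + x' * (y - y') := by ring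
  rw [e]
  refine (abs_add_le _ _).trans ?_
  rw [abs_mul, abs_mul]
  have h1 : |x - x'| * |y| ≤ u * A :=
    mul_le_mul hx hA (abs_nonneg _) ((abs_nonneg _).trans hx)
  have h2 : |x'| * |y - y'| ≤ B * v :=
    mul_le_mul hB hy (abs_nonneg _) ((abs_nonneg _).trans hB)
  linarith

lemma avg_double (N L : ℕ) (hN : 1 ≤ N) (hL : L = 2 * N) (j : ℕ) (F : ℕ → ℝ) :
    (1 / (N : ℝ)) * ∑ l ∈ Finset.range j, F l =
      (1 / (L : ℝ)) * ∑ l ∈ Finset.range (2 * j), F (l / 2) := by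
  have hN0 : (0 : ℝ) < N := by exact_mod_cast hN
  rw [sum_double, hL]
  push_cast
  field_simp

/-- Difference bound on the coefficients. -/
def GD (N L : ℕ) (gN g : ℕ → ℤ → Bool → Bool → ℕ → ℕ → ℝ) (K : ℝ) (t : ℕ) (a : Bool) : Prop :=
  ∀ r : ℤ, -1 ≤ r → r < t → ∀ b, ∀ i j, i ≤ L → j ≤ N → i ≤ 2 * j + 1 → 2 * j ≤ i + 1 →
    ∀ m < L, |gN t r a b j (m / 2 + 1) - g t r a b i (m + 1)| ≤ K / L

/-- Difference bound on the covariances. -/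
def CD (L : ℕ) (cN c : ℤ → ℤ → Bool → ℕ → ℝ) (K : ℝ) (t : ℕ) (a : Bool) : Prop :=
  ∀ s : ℤ, -1 ≤ s → s ≤ t → ∀ m < L, |cN t s a (m / 2 + 1) - c t s a (m + 1)| ≤ K / L

section
variable {T N L : ℕ} {xN x : ℕ → Bool → ℝ} {gN g : ℕ → ℤ → Bool → Bool → ℕ → ℕ → ℝ}
  {cN c : ℤ → ℤ → Bool → ℕ → ℝ}

lemma ind_diff {i j m : ℕ} (h1 : i ≤ 2 * j + 1) (h2 : 2 * j ≤ i + 1)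
    (h : ¬ (m + 1 = i ∨ m + 1 = i + 1)) : (m / 2 + 1 ≤ j ↔ m + 1 ≤ i) := by omega

lemma GD_all (hN : DTP T N xN gN cN) (h : DTP T L x g c) (hL : L = 2 * N)
    {t : ℕ} (ht : t < T) {K : ℝ} (hK : 1 ≤ K) {a : Bool} (hd : GD N L gN g K t a)
    {r : ℤ} (hr : -1 ≤ r) (b : Bool) {i j : ℕ} (hi : i ≤ L) (hj : j ≤ N) (h1 : i ≤ 2 * j + 1)
    (h2 : 2 * j ≤ i + 1) {m : ℕ} (hm : m < L) :
    |gN t r a b j (m / 2 + 1) - g t r a b i (m + 1)| ≤ K * (1 / L + dlt i (m + 1)) := by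
  have hd0 := dlt_nonneg i (m + 1)
  have hL0 : (0 : ℝ) ≤ 1 / L := by positivity
  rcases lt_trichotomy r t with h3 | h3 | h3
  · refine (hd r hr h3 b i j hi hj h1 h2 m hm).trans ?_
    rw [div_eq_mul_one_div]
    apply mul_le_mul_of_nonneg_left _ (by linarith)
    linarith
  · rw [h3, hN.diag ht a b (by omega) (by omega) j hj, h.diag ht a b (by omega) (by omega) i hi]
    by_cases h4 : (m + 1 = i ∨ m + 1 = i + 1)
    · rw [dlt, if_pos h4]
      have : (1 : ℝ) ≤ K * (1 / L + 1) := by nlinarith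
      refine le_trans ?_ this
      split_ifs <;> norm_num
    · simp only [ind_diff h1 h2 h4, sub_self, abs_zero]
      positivity
  · rw [hN.g_vanish t r h3, h.g_vanish t r h3]
    simp only [sub_self, abs_zero]
    positivity

lemma past_cd (hN : DTP T N xN gN cN) (h : DTP T L x g c) {t : ℕ} {K : ℝ} (hK : 1 ≤ K)
    (hp : ∀ s < t, ∀ a, CD L cN c K s a) (t' s' : ℤ) (h1 : -1 ≤ t') (h2 : t' < t)
    (h3 : -1 ≤ s') (h4 : s' < t) (a : Bool) (m : ℕ) (hm : m < L) :
    |cN t' s' a (m / 2 + 1) - c t' s' a (m + 1)| ≤ K / L := by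
  wlog hle : s' ≤ t' generalizing t' s'
  · rw [h.c_symm, hN.c_symm]
    exact this s' t' h3 h4 h1 h2 (by omega)
  rcases eq_or_lt_of_le h1 with h5 | h5
  · obtain rfl : s' = -1 := by omega
    rw [← h5, h.c_base, hN.c_base]
    simp only [sub_self, abs_zero]
    positivity
  · lift t' to ℕ using (by omega)
    exact hp t' (by omega) a s' h3 hle m hm

lemma past_cbard (hN : DTP T N xN gN cN) (h : DTP T L x g c) (hL : L = 2 * N) {t : ℕ} {K : ℝ}
    (hK : 1 ≤ K)
    (hp : ∀ s < t, ∀ a, CD L cN c K s a) (t' s' : ℤ) (h1 : -1 ≤ t') (h2 : t' < t)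
    (h3 : -1 ≤ s') (h4 : s' < t) (a b : Bool) (m : ℕ) (hm : m < L) :
    |cbar N cN a t' s' b (m / 2 + 1) - cbar L c a t' s' b (m + 1)| ≤ K / L := by
  unfold cbar
  split_ifs
  · exact past_cd hN h hK hp t' s' h1 h2 h3 h4 b m hm
  · have := past_cd hN h hK hp t' s' h1 h2 h3 h4 b (L - 1 - m) (by omega)
    rwa [show (L - 1 - m) / 2 + 1 = N + 1 - (m / 2 + 1) by omega,
      show L - 1 - m + 1 = L + 1 - (m + 1) by omega] at this

lemma prod_diff (hN : DTP T N xN gN cN) (h : DTP T L x g c) (hL : L = 2 * N)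
    {t : ℕ} (ht : t < T) {K : ℝ} (hK : 1 ≤ K)
    (hp : ∀ s < t, ∀ a, CB L c K s a)
    (hpd : ∀ s < t, ∀ a, CD L cN c K s a) (a : Bool) {s : ℕ} (hs : s ≤ t) {i : ℕ} (hi : i ≤ L)
    (hCt : CB L c K t a)
    (hGN : ∀ s' : ℤ, -1 ≤ s' → s' ≤ s → ∀ b m, 1 ≤ m → m ≤ N → |gN s s' a b (i / 2) m| ≤ K)
    (hGd : ∀ s' : ℤ, -1 ≤ s' → s' ≤ s → ∀ b, ∀ m < L,
      |gN s s' a b (i / 2) (m / 2 + 1) - g s s' a b i (m + 1)| ≤ K * (1 / L + dlt i (m + 1)))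
    (hCd : s = t → ∀ s' : ℕ, s' < t → ∀ m < L, |cN t s' a (m / 2 + 1) - c t s' a (m + 1)| ≤ K / L)
    (t' s' : ℤ) (h1 : -1 ≤ t') (h2 : t' < t) (h3 : -1 ≤ s') (h4 : s' ≤ s) (b : Bool) (m : ℕ)
    (hm : m < L) :
    |cbar N cN a t' s' b (m / 2 + 1) * gN s s' a b (i / 2) (m / 2 + 1)
      - cbar L c a t' s' b (m + 1) * g s s' a b i (m + 1)| ≤
      2 * K ^ 2 * (1 / L + dlt i (m + 1)) := by
  have hd0 := dlt_nonneg i (m + 1)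
  have hL0 : (0 : ℝ) ≤ 1 / L := by positivity
  have g1 := hGN s' h3 h4 b (m / 2 + 1) (by omega) (by omega)
  have g2 := hGd s' h3 h4 b m hm
  have fin : K / L * K + K * (K * (1 / L + dlt i (m + 1))) ≤
      2 * K ^ 2 * (1 / L + dlt i (m + 1)) := by
    have : K / L * K = K ^ 2 * (1 / L) := by ring
    nlinarith [mul_nonneg (sq_nonneg K) hd0]
  by_cases h5 : s' < t
  · exact (abs_mul_sub_le (past_cbard hN h hL hK hpd t' s' h1 h2 h3 h5 a b m hm) g2 g1
      (h.past_cbar hK hp t' s' h1 h2 h3 h5 a b (m + 1) (by omega) (by omega))).trans fin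
  · obtain rfl : s = t := by omega
    obtain rfl : s' = s := by omega
    by_cases hb : b = a
    · refine (abs_mul_sub_le (A := K) (B := K) (u := K / L) ?_ g2 g1 ?_).trans fin
      · rw [cbar, cbar, if_pos hb, if_pos hb, hb, h.c_symm, hN.c_symm]
        rcases eq_or_lt_of_le h1 with h6 | h6
        · rw [← h6, h.c_neg_one, hN.c_neg_one]
          simp only [sub_self, abs_zero]
          positivity
        · lift t' to ℕ using (by omega)
          exact hCd rfl t' (by omega) m hm
      · rw [cbar, if_pos hb, hb, h.c_symm]
        exact hCt t' h1 h2.le (m + 1) (by omega) (by omega)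
    · rw [h.diag ht a b (by omega) (by omega) i hi, if_neg (by simp [hb]),
        hN.diag ht a b (by omega) (by omega) (i / 2) (by omega), if_neg (by simp [hb])]
      simp only [mul_zero, sub_self, abs_zero]
      positivity

lemma cov_diff (hN : DTP T N xN gN cN) (h : DTP T L x g c) (hL : L = 2 * N) (hN1 : 1 ≤ N)
    {t : ℕ} (ht : t < T) {K : ℝ} (hK : 1 ≤ K)
    (hp : ∀ s < t, ∀ a, CB L c K s a) (hpN : ∀ s < t, ∀ a, CB N cN K s a)
    (hpd : ∀ s < t, ∀ a, CD L cN c K s a) (a : Bool) {s : ℕ} (hs : s ≤ t) {i : ℕ} (hi : i < L)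
    (hCt : CB L c K t a) (hCtN : CB N cN K t a) (hGt : GB L g K t a)
    (hG : GB L g K s a) (hGN : GB N gN K s a)
    (hGd : ∀ s' : ℤ, -1 ≤ s' → s' ≤ s → ∀ b, ∀ m < L,
      |gN s s' a b (i / 2) (m / 2 + 1) - g s s' a b i (m + 1)| ≤ K * (1 / L + dlt i (m + 1)))
    (hCd : s = t → ∀ s' : ℕ, s' < t → ∀ m < L, |cN t s' a (m / 2 + 1) - c t s' a (m + 1)| ≤ K / L)
    {w : ℝ} {v : ℕ → ℝ} (hw : 0 ≤ w) (hv : ∀ l, 0 ≤ v l)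
    (hX : ∀ r : ℤ, -1 ≤ r → r < t → ∀ b, ∀ m < L,
      |gN t r a b (i / 2) (m / 2 + 1) - g t r a b i (m + 1)| ≤ w)
    (hY : ∀ l < i, ∀ s' : ℕ, s' ≤ s → |cN t s' a (l / 2 + 1) - c t s' a (l + 1)| ≤ v l) :
    |cN t s a (i / 2 + 1) - c t s a (i + 1)| ≤ 2 * ((T : ℝ) + 1) ^ 2 *
      (K ^ 2 * w + K / L * ∑ l ∈ Finset.range i, v l + 6 * K ^ 3 / L) := by
  have hL1 : 1 ≤ L := by omega
  have hL0 : (0 : ℝ) < L := by exact_mod_cast hL1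
  have hK0 : 0 ≤ K := by linarith
  have hK12 : K ≤ K ^ 2 := by nlinarith
  have hK23 : K ^ 2 ≤ K ^ 3 := by nlinarith [sq_nonneg K]
  rw [h.cov t ht s hs i hi a, hN.cov t ht s hs (i / 2) (by omega) a]
  simp only [← Finset.sum_sub_distrib]
  have hsv : 0 ≤ ∑ l ∈ Finset.range i, v l := Finset.sum_nonneg fun l _ => hv l
  refine sum_triple T t s ht hs _ (by positivity) _ ?_
  intro t' s' h1 h2 h3 h4 b
  rw [avg_double N L hN1 hL N
    (fun m => gN t t' a b (i / 2) (m + 1) * cbar N cN a t' s' b (m + 1) *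
      gN s s' a b (i / 2) (m + 1)), ← hL, ← mul_sub, ← Finset.sum_sub_distrib]
  have term : ∀ m ∈ Finset.range L,
      |gN t t' a b (i / 2) (m / 2 + 1) * cbar N cN a t' s' b (m / 2 + 1) *
        gN s s' a b (i / 2) (m / 2 + 1) -
        g t t' a b i (m + 1) * cbar L c a t' s' b (m + 1) * g s s' a b i (m + 1)| ≤
        K ^ 2 * w + K * (if m < i then v m else 0) + 2 * K ^ 3 * (1 / L + dlt i (m + 1)) := by
    intro m hm
    rw [Finset.mem_range] at hm
    have hv' : 0 ≤ (if m < i then v m else 0) := by split_ifs; exacts [hv m, le_rfl]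
    have hd0 := dlt_nonneg i (m + 1)
    have hL0' : (0 : ℝ) ≤ 1 / L := by positivity
    rw [mul_assoc, mul_assoc]
    rcases lt_or_eq_of_le h2 with h5 | h5
    · have e0 := hN.prod_bound ht hK hpN a hs (i := i / 2) (by omega)
        (fun s' h6 _ b m h7 h8 => hGN s' h6 b _ (by omega) m h7 h8)
        (fun _ s' h6 m h7 h8 => hCtN s' (by omega) (by omega) m h7 h8)
        t' s' h1 h5 h3 h4 b (m / 2 + 1) (by omega) (by omega)
      have e1 := prod_diff hN h hL ht hK hp hpd a hs hi.le hCt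
        (fun s' h6 _ b m h7 h8 => hGN s' h6 b _ (by omega) m h7 h8) hGd hCd
        t' s' h1 h5 h3 h4 b m hm
      have e2 := hX t' h1 h5 b m hm
      have e3 := hGt t' h1 b i hi.le (m + 1) (by omega) (by omega)
      rw [← abs_mul] at e0
      refine (abs_mul_sub_le e2 e1 e0 e3).trans ?_
      nlinarith [mul_nonneg hK0 hv']
    · subst h5
      rw [h.diag ht a b (by omega) (by omega) i hi.le,
        hN.diag ht a b (by omega) (by omega) (i / 2) (by omega)]
      by_cases hb : b = a
      · subst hb
        simp only [true_and]
        have c1 : |c t s' b (m + 1)| ≤ K := hCt s' h3 (by omega) _ (by omega) (by omega)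
        have c2 : |cN t s' b (m / 2 + 1)| ≤ K := hCtN s' h3 (by omega) _ (by omega) (by omega)
        have g1 := hG s' h3 b i hi.le (m + 1) (by omega) (by omega)
        have g2 := hGN s' h3 b (i / 2) (by omega) (m / 2 + 1) (by omega) (by omega)
        have p1 : |cbar L c b t s' b (m + 1) * g s s' b b i (m + 1)| ≤ K ^ 2 := by
          rw [cbar, if_pos rfl, abs_mul, sq]
          exact mul_le_mul c1 g1 (abs_nonneg _) hK0
        have p2 : |cbar N cN b t s' b (m / 2 + 1) * gN s s' b b (i / 2) (m / 2 + 1)|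
            ≤ K ^ 2 := by
          rw [cbar, if_pos rfl, abs_mul, sq]
          exact mul_le_mul c2 g2 (abs_nonneg _) hK0
        by_cases h4' : (m + 1 = i ∨ m + 1 = i + 1)
        · have hd1 : dlt i (m + 1) = 1 := by rw [dlt, if_pos h4']
          rw [hd1]
          have q1 : ∀ (P : Prop) [Decidable P] (y : ℝ), |y| ≤ K ^ 2 →
              |(if P then 1 else 0) * y| ≤ K ^ 2 := by
            intro P _ y hy
            split_ifs
            · simpa using hy
            · simp only [zero_mul, abs_zero]; positivity
          refine (abs_sub _ _).trans ((add_le_add (q1 _ _ p2) (q1 _ _ p1)).trans ?_)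
          nlinarith [mul_nonneg hK0 hv', mul_nonneg (sq_nonneg K) hw,
            mul_nonneg (pow_nonneg hK0 3) hL0']
        · simp only [ind_diff (show i ≤ 2 * (i / 2) + 1 by omega)
            (show 2 * (i / 2) ≤ i + 1 by omega) h4']
          split_ifs with h6 h7 h7
          · rw [one_mul, one_mul, cbar, cbar, if_pos rfl, if_pos rfl]
            have e2 : |cN t s' b (m / 2 + 1) - c t s' b (m + 1)| ≤ v m := by
              rcases eq_or_lt_of_le h3 with h6 | h6
              · rw [← h6, h.c_neg_one, hN.c_neg_one]; simpa using hv m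
              · lift s' to ℕ using (by omega)
                exact hY m (by omega) s' (by omega)
            refine (abs_mul_sub_le e2 (hGd s' h3 h4 b m hm) g2 c1).trans ?_
            have : K * (K * (1 / L + dlt i (m + 1))) ≤
                2 * K ^ 3 * (1 / L + dlt i (m + 1)) := by
              rw [← mul_assoc]
              apply mul_le_mul_of_nonneg_right _ (by positivity)
              nlinarith
            nlinarith [mul_nonneg (sq_nonneg K) hw]
          · omega
          · omega
          · simp only [zero_mul, sub_self, abs_zero]
            positivity
      · simp only [hb, false_and, if_false, zero_mul, sub_self, abs_zero]
        positivity
  rw [abs_mul, abs_of_pos (show (0 : ℝ) < 1 / L by positivity)]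
  calc _ ≤ 1 / (L : ℝ) * ∑ m ∈ Finset.range L, (K ^ 2 * w + K * (if m < i then v m else 0)
          + 2 * K ^ 3 * (1 / L + dlt i (m + 1))) := by
        apply mul_le_mul_of_nonneg_left _ (by positivity)
        exact (Finset.abs_sum_le_sum_abs _ _).trans (Finset.sum_le_sum term)
    _ = K ^ 2 * w + K / L * ∑ l ∈ Finset.range i, v l
        + 2 * K ^ 3 / L * (1 + ∑ m ∈ Finset.range L, dlt i (m + 1)) := by
        rw [Finset.sum_add_distrib, Finset.sum_add_distrib, ← Finset.mul_sum, ← Finset.mul_sum,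
          ← Finset.mul_sum, sum_trunc L i hi.le, Finset.sum_add_distrib]
        simp
        field_simp
    _ ≤ K ^ 2 * w + K / L * ∑ l ∈ Finset.range i, v l + 2 * K ^ 3 / L * (1 + 2) := by
        gcongr
        exact sum_dlt_right i L
    _ = _ := by ring

lemma zinc_diff (hN : DTP T N xN gN cN) (h : DTP T L x g c) (hL : L = 2 * N)
    {t : ℕ} (ht : t < T) {K : ℝ} (hK : 1 ≤ K) (a b : Bool) {r : ℤ} (hr : -1 ≤ r)
    (hGp : ∀ s < t, ∀ a, GB L g K s a)
    (hGd : ∀ s < t, ∀ a, GD N L gN g K s a)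
    (hGN : GB N gN K t a) (hCN : CB N cN K t a)
    {m l : ℕ} (hm : m < L) (hl : l < L) {w v : ℝ} (hw : 0 ≤ w) (hv : 0 ≤ v)
    (hX : ∀ s < t, |gN t s a (!a) (l / 2) (l / 2 + 1) - g t s a (!a) l (l + 1)| ≤ w)
    (hY : ∀ s < t, |cN t s a (l / 2 + 1) - c t s a (l + 1)| ≤ v) :
    |zinc N gN cN t r a b (m / 2 + 1) (l / 2) - zinc L g c t r a b (m + 1) l| ≤
      T * (2 * K ^ 2 * (1 / L + dlt (l + 1) (m + 1)) + K * (w + v)) := by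
  have hd0 := dlt_nonneg (l + 1) (m + 1)
  have hK0 : 0 ≤ K := by linarith
  unfold zinc
  rw [← Finset.sum_sub_distrib]
  calc _ ≤ ∑ s ∈ Finset.range t,
        (2 * K ^ 2 * (1 / L + dlt (l + 1) (m + 1)) + K * (w + v)) := by
        refine (Finset.abs_sum_le_sum_abs _ _).trans (Finset.sum_le_sum fun s hs => ?_)
        rw [Finset.mem_range] at hs
        have e1 := GD_all hN h hL (hs.trans ht) hK (hGd s hs (!a)) hr b
          (i := L - (l + 1)) (j := N - (l / 2 + 1)) (by omega) (by omega) (by omega) (by omega)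
          (m := L - 1 - m) (by omega)
        rw [show (L - 1 - m) / 2 + 1 = N + 1 - (m / 2 + 1) by omega,
          show L - 1 - m + 1 = L + 1 - (m + 1) by omega] at e1
        have e2 : dlt (L - (l + 1)) (L + 1 - (m + 1)) = dlt (l + 1) (m + 1) := by
          unfold dlt
          congr 1
          apply propext
          omega
        rw [e2] at e1
        have e3 : |(gN t s a (!a) (l / 2) (l / 2 + 1) - cN t s a (l / 2 + 1)) -
            (g t s a (!a) l (l + 1) - c t s a (l + 1))| ≤ w + v := by
          have := abs_sub (gN t s a (!a) (l / 2) (l / 2 + 1) - g t s a (!a) l (l + 1))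
            (cN t s a (l / 2 + 1) - c t s a (l + 1))
          rw [show ∀ p q r s : ℝ, (p - q) - (r - s) = (p - r) - (q - s) from
            fun p q r s => by ring]
          linarith [hX s hs, hY s hs]
        have e4 : |gN t s a (!a) (l / 2) (l / 2 + 1) - cN t s a (l / 2 + 1)| ≤ 2 * K := by
          refine (abs_sub _ _).trans ?_
          linarith [hGN s (by omega) (!a) (l / 2) (by omega) (l / 2 + 1) (by omega) (by omega),
            hCN s (by omega) (by omega) (l / 2 + 1) (by omega) (by omega)]
        have e5 := hGp s hs (!a) r hr b (L - (l + 1)) (by omega) (L + 1 - (m + 1)) (by omega)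
          (by omega)
        refine (abs_mul_sub_le e1 e3 e4 e5).trans (le_of_eq ?_)
        ring
    _ = t * (2 * K ^ 2 * (1 / L + dlt (l + 1) (m + 1)) + K * (w + v)) := by
        rw [Finset.sum_const, Finset.card_range, nsmul_eq_mul]
    _ ≤ _ := by gcongr

lemma x_diff (hN : DTP T N xN gN cN) (h : DTP T L x g c) (hL : L = 2 * N) (hN1 : 1 ≤ N)
    {t : ℕ} (ht : t < T) {K : ℝ} (hK : 1 ≤ K) (a b : Bool) {r : ℤ} (hr : -1 ≤ r) (hr2 : r < t)
    (hGp : ∀ s < t, ∀ a, GB L g K s a) (hGpN : ∀ s < t, ∀ a, GB N gN K s a)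
    (hGd : ∀ s < t, ∀ a, GD N L gN g K s a)
    (hG : GB L g K t a) (hC : CB L c K t a)
    (hGN : GB N gN K t a) (hCN : CB N cN K t a) (hx : |xN t a - x t a| ≤ K / L)
    {m i j : ℕ} (hm : m < L) (hi : i ≤ L) (hj : j ≤ N) (h1 : i ≤ 2 * j + 1) (h2 : 2 * j ≤ i + 1)
    {w v : ℕ → ℝ} (hw : ∀ l, 0 ≤ w l) (hv : ∀ l, 0 ≤ v l)
    (hX : ∀ l < i, ∀ s < t, |gN t s a (!a) (l / 2) (l / 2 + 1) - g t s a (!a) l (l + 1)| ≤ w l)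
    (hY : ∀ l < i, ∀ s < t, |cN t s a (l / 2 + 1) - c t s a (l + 1)| ≤ v l) :
    |gN t r a b j (m / 2 + 1) - g t r a b i (m + 1)| ≤
      (K + 8 * T * K ^ 2) / L + T * K / L * ∑ l ∈ Finset.range i, (w l + v l) := by
  have hL1 : 1 ≤ L := by omega
  have hL0 : (0 : ℝ) < L := by exact_mod_cast hL1
  have hK0 : 0 ≤ K := by linarith
  rw [h.sum_form ht a b (by omega) (by omega) hr hr2 i hi,
    hN.sum_form ht a b (by omega) (by omega) hr hr2 j hj, avg_double N L hN1 hL j]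
  have key := sum_shift_diff (2 * j) i h2 h1
    (fun l => zinc N gN cN t r a b (m / 2 + 1) (l / 2))
    (fun l => zinc L g c t r a b (m + 1) l) (T * K * (2 * K)) (by positivity)
    (by
      intro l hl
      refine zinc_bound ht hK a b (by positivity) ?_ ?_
      · intro s hs
        exact hGpN s hs _ r hr b _ (by omega) _ (by omega) (by omega)
      · intro s hs
        refine (abs_sub _ _).trans ?_
        linarith [hGN s (by omega) (!a) (l / 2) (by omega) (l / 2 + 1) (by omega) (by omega),
          hCN s (by omega) (by omega) (l / 2 + 1) (by omega) (by omega)])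
    (by
      intro l hl
      refine zinc_bound ht hK a b (by positivity) ?_ ?_
      · intro s hs
        exact hGp s hs _ r hr b _ (by omega) _ (by omega) (by omega)
      · intro s hs
        refine (abs_sub _ _).trans ?_
        linarith [hG s (by omega) (!a) l (by omega) (l + 1) (by omega) (by omega),
          hC s (by omega) (by omega) (l + 1) (by omega) (by omega)])
    (fun l => T * (2 * K ^ 2 * (1 / L + dlt (l + 1) (m + 1)) + K * (w l + v l)))
    (by
      intro l _
      have := dlt_nonneg (l + 1) (m + 1)
      have := hw l
      have := hv l
      positivity)
    (by
      intro l hl hl2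
      exact zinc_diff hN h hL ht hK a b hr hGp hGd hGN hCN hm (by omega) (hw l) (hv l)
        (hX l hl) (hY l hl))
  have init : |(if r = -1 ∧ b = a then xN t a else 0) - (if r = -1 ∧ b = a then x t a else 0)|
      ≤ K / L := by
    split_ifs
    · exact hx
    · simp only [sub_self, abs_zero]; positivity
  have hsum : ∑ l ∈ Finset.range i,
      (T * (2 * K ^ 2 * (1 / L + dlt (l + 1) (m + 1)) + K * (w l + v l))) ≤
      6 * T * K ^ 2 + T * K * ∑ l ∈ Finset.range i, (w l + v l) := by
    rw [← Finset.mul_sum, Finset.sum_add_distrib, ← Finset.mul_sum, ← Finset.mul_sum,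
      Finset.sum_add_distrib (f := fun _ => 1 / (L : ℝ))]
    have s1 : ∑ l ∈ Finset.range i, (1 / (L : ℝ)) ≤ 1 := by
      simp only [Finset.sum_const, Finset.card_range, nsmul_eq_mul]
      rw [mul_one_div, div_le_one hL0]
      exact_mod_cast hi
    have s2 := sum_dlt_left (m + 1) i
    calc _ ≤ (T : ℝ) * (2 * K ^ 2 * (1 + 2) + K * ∑ l ∈ Finset.range i, (w l + v l)) := by
          gcongr
      _ = _ := by ring
  have e : ∀ p q y z u : ℝ, (p + u * y) - (q + u * z) = (p - q) + u * (y - z) :=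
    fun p q y z u => by ring
  rw [e]
  refine (abs_add_le _ _).trans ?_
  rw [abs_mul, abs_of_pos (show (0 : ℝ) < 1 / L by positivity)]
  calc _ ≤ K / L + 1 / L * (T * K * (2 * K) + (6 * T * K ^ 2 +
          T * K * ∑ l ∈ Finset.range i, (w l + v l))) := by
        refine add_le_add init (mul_le_mul_of_nonneg_left ?_ (by positivity))
        linarith
    _ = _ := by ring

end

lemma GB.mono {L g K K' t a} (h : GB L g K t a) (hK : K ≤ K') : GB L g K' t a :=
  fun r h1 b i hi m h2 h3 => (h r h1 b i hi m h2 h3).trans hK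

lemma CB.mono {L c K K' t a} (h : CB L c K t a) (hK : K ≤ K') : CB L c K' t a :=
  fun s h1 h2 m h3 h4 => (h s h1 h2 m h3 h4).trans hK

lemma GD.mono {N L gN g K K' t a} (h : GD N L gN g K t a) (hK : K ≤ K') :
    GD N L gN g K' t a :=
  fun r h1 h2 b i j h3 h4 h5 h6 m hm => (h r h1 h2 b i j h3 h4 h5 h6 m hm).trans
    (div_le_div_of_nonneg_right hK (by positivity))

lemma CD.mono {L cN c K K' t a} (h : CD L cN c K t a) (hK : K ≤ K') : CD L cN c K' t a :=
  fun s h1 h2 m h3 => (h s h1 h2 m h3).trans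
    (div_le_div_of_nonneg_right hK (by positivity))


set_option maxHeartbeats 1000000 in
lemma sweep_diff (T t : ℕ) (ht : t < T) (K : ℝ) (hK : 1 ≤ K) : ∃ K' : ℝ, 1 ≤ K' ∧
    ∀ (N L : ℕ) (_ : 1 ≤ N) (_ : L = 2 * N) (xN x : ℕ → Bool → ℝ)
      (gN g : ℕ → ℤ → Bool → Bool → ℕ → ℕ → ℝ)
      (cN c : ℤ → ℤ → Bool → ℕ → ℝ), DTP T N xN gN cN → DTP T L x g c → ∀ a : Bool,
      (∀ s < t, ∀ a, GB N gN K s a ∧ CB N cN K s a) →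
      (∀ s < t, ∀ a, GB L g K s a ∧ CB L c K s a) →
      GB N gN K t a → CB N cN K t a → GB L g K t a → CB L c K t a →
      (∀ s < t, ∀ a, GD N L gN g K s a ∧ CD L cN c K s a) → |xN t a - x t a| ≤ K / L →
      GD N L gN g K' t a ∧ CD L cN c K' t a := by
  have hT0 : (0 : ℝ) ≤ T := by positivity
  obtain ⟨K1, hK1⟩ : ∃ y : ℝ, y = 2 * ((T : ℝ) + 1) ^ 2 * K ^ 2 := ⟨_, rfl⟩
  have hK1K : T * K ≤ K1 := by
    rw [hK1]
    have : (T : ℝ) * K ≤ T * K ^ 2 := by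
      apply mul_le_mul_of_nonneg_left _ hT0; nlinarith
    have h2 : (T : ℝ) ≤ 2 * ((T : ℝ) + 1) ^ 2 := by nlinarith
    exact this.trans (mul_le_mul_of_nonneg_right h2 (sq_nonneg K))
  have hK10 : 0 ≤ K1 := by rw [hK1]; positivity
  obtain ⟨A1, hA1⟩ : ∃ y : ℝ, y = (K + 8 * T * K ^ 2) + 2 * ((T : ℝ) + 1) ^ 2 * (6 * K ^ 3) :=
    ⟨_, rfl⟩
  have hA1a : K + 8 * T * K ^ 2 ≤ A1 := by
    rw [hA1]; linarith [show 0 ≤ 2 * ((T : ℝ) + 1) ^ 2 * (6 * K ^ 3) by positivity]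
  have hA1b : 2 * ((T : ℝ) + 1) ^ 2 * (6 * K ^ 3) ≤ A1 := by
    rw [hA1]; linarith [show 0 ≤ K + 8 * T * K ^ 2 by positivity]
  have hA1K : K ≤ A1 := by linarith [show 0 ≤ 8 * T * K ^ 2 by positivity]
  have hA10 : 0 ≤ A1 := by linarith
  obtain ⟨B1, hB1⟩ : ∃ y : ℝ, y = (K1 + 1) * A1 * Real.exp (K1 * (K1 + 2)) := ⟨_, rfl⟩
  have hexp : 1 ≤ Real.exp (K1 * (K1 + 2)) := Real.one_le_exp (by positivity)
  have hKB : A1 * Real.exp (K1 * (K1 + 2)) ≤ B1 := by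
    rw [hB1, mul_assoc (K1 + 1)]
    apply le_mul_of_one_le_left (by positivity)
    linarith
  have hB11 : K ≤ B1 := by nlinarith
  have hB1' : 1 ≤ B1 := hK.trans hB11
  have hB10 : 0 ≤ B1 := by linarith
  obtain ⟨K2, hK2⟩ : ∃ y : ℝ, y = 2 * ((T : ℝ) + 1) ^ 2 * B1 ^ 2 := ⟨_, rfl⟩
  have hK20 : 0 ≤ K2 := by rw [hK2]; positivity
  obtain ⟨A2, hA2⟩ : ∃ y : ℝ, y = 8 * K2 * B1 := ⟨_, rfl⟩
  have hA20 : 0 ≤ A2 := by rw [hA2]; positivity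
  obtain ⟨B2, hB2⟩ : ∃ y : ℝ, y = (K2 + 1) * A2 * Real.exp (K2 * (K2 + 2)) := ⟨_, rfl⟩
  have hB20 : 0 ≤ B2 := by rw [hB2]; positivity
  refine ⟨B1 + B2, by linarith, ?_⟩
  intro N L hN1 hL xN x gN g cN c hN h a hpN hp hGN hCN hG hC hpd hx
  have hL1 : 1 ≤ L := by omega
  have hL0 : (0 : ℝ) < L := by exact_mod_cast hL1
  have hpc : ∀ s < t, ∀ a, CB L c K s a := fun s hs a => (hp s hs a).2
  have hpcN : ∀ s < t, ∀ a, CB N cN K s a := fun s hs a => (hpN s hs a).2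
  have hpg : ∀ s < t, ∀ a, GB L g K s a := fun s hs a => (hp s hs a).1
  have hpgN : ∀ s < t, ∀ a, GB N gN K s a := fun s hs a => (hpN s hs a).1
  have hpgd : ∀ s < t, ∀ a, GD N L gN g K s a := fun s hs a => (hpd s hs a).1
  have hpcd : ∀ s < t, ∀ a, CD L cN c K s a := fun s hs a => (hpd s hs a).2
  have stage1 := gron2 L hL1 K1 (A1 / L) hK10 (by positivity)
    (fun i w => ∀ r : ℤ, -1 ≤ r → r < t → ∀ b j, j ≤ N → i ≤ 2 * j + 1 → 2 * j ≤ i + 1 →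
      ∀ m < L, |gN t r a b j (m / 2 + 1) - g t r a b i (m + 1)| ≤ w)
    (fun i v => ∀ s : ℕ, s < t → |cN t s a (i / 2 + 1) - c t s a (i + 1)| ≤ v)
    (fun i y z hy hyz r h1 h2 b j h3 h4 h5 m h6 => (hy r h1 h2 b j h3 h4 h5 m h6).trans hyz)
    (fun i y z hy hyz s hs => (hy s hs).trans hyz)
    (by
      intro i hi w v hw hv hP hQ r hr1 hr2 b j hj h1 h2 m hm
      have hwv : 0 ≤ ∑ l ∈ Finset.range i, (w l + v l) :=
        Finset.sum_nonneg fun l _ => add_nonneg (hw l) (hv l)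
      refine (x_diff hN h hL hN1 ht hK a b hr1 hr2 hpg hpgN hpgd hG hC hGN hCN hx hm hi hj h1 h2
        hw hv ?_ ?_).trans ?_
      · intro l hl s hs
        exact hP l hl s (by omega) (by omega) _ _ (by omega) (by omega) (by omega) l (by omega)
      · intro l hl s hs
        exact hQ l hl s hs
      · gcongr)
    (by
      intro i hi w v hw hv hP hQ s hs
      have hsv : 0 ≤ ∑ l ∈ Finset.range i, v l := Finset.sum_nonneg fun l _ => hv l
      refine (cov_diff hN h hL hN1 ht hK hpc hpcN hpcd a hs.le hi hC hCN hG (hpg s hs a)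
        (hpgN s hs a) ?_ ?_ hw hv ?_ ?_).trans ?_
      · intro s' h3 _ b m hm
        exact GD_all hN h hL (hs.trans ht) hK (hpgd s hs a) h3 b hi.le (by omega) (by omega)
          (by omega) hm
      · intro he; omega
      · intro r hr1 hr2 b m hm
        exact hP r hr1 hr2 b (i / 2) (by omega) (by omega) (by omega) m hm
      · intro l hl s' hs'
        exact hQ l hl s' (by omega)
      · have : K / L * ∑ l ∈ Finset.range i, v l ≤ K ^ 2 * (1 / L * ∑ l ∈ Finset.range i, v l) := by
          rw [div_eq_mul_one_div, mul_assoc]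
          apply mul_le_mul_of_nonneg_right _ (by positivity)
          nlinarith
        calc _ ≤ 2 * ((T : ℝ) + 1) ^ 2 *
              (K ^ 2 * w + K ^ 2 * (1 / L * ∑ l ∈ Finset.range i, v l) + 6 * K ^ 3 / L) := by
              gcongr
          _ = 2 * ((T : ℝ) + 1) ^ 2 * (6 * K ^ 3) / L + K1 * w
              + K1 / L * ∑ l ∈ Finset.range i, v l := by rw [hK1]; ring
          _ ≤ _ := by gcongr)
  obtain ⟨s1P, s1Q⟩ := stage1
  have hGD : GD N L gN g B1 t a := by
    intro r hr1 hr2 b i j hi hj h1 h2 m hm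
    refine (s1P i hi r hr1 hr2 b j hj h1 h2 m hm).trans ?_
    rw [div_mul_eq_mul_div]
    gcongr
  have hCD : ∀ s' : ℕ, s' < t → ∀ m < L, |cN t s' a (m / 2 + 1) - c t s' a (m + 1)| ≤ B1 / L := by
    intro s' hs' m hm
    refine (s1Q m hm s' hs').trans (le_of_eq ?_)
    rw [hB1]; ring
  have hpc' : ∀ s < t, ∀ a, CB L c B1 s a := fun s hs a => (hpc s hs a).mono hB11
  have hpcN' : ∀ s < t, ∀ a, CB N cN B1 s a := fun s hs a => (hpcN s hs a).mono hB11
  have hpcd' : ∀ s < t, ∀ a, CD L cN c B1 s a := fun s hs a => (hpcd s hs a).mono hB11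
  have stage2 := gron2 L hL1 K2 (A2 / L) hK20 (by positivity) (fun _ _ => True)
    (fun i v => |cN t t a (i / 2 + 1) - c t t a (i + 1)| ≤ v) (fun _ _ _ _ _ => trivial)
    (fun i y z hy hyz => hy.trans hyz)
    (fun _ _ _ _ _ _ _ _ => trivial)
    (by
      intro i hi w v hw hv _ hQ
      have hsv : 0 ≤ ∑ l ∈ Finset.range i, v l := Finset.sum_nonneg fun l _ => hv l
      have hBL : 0 ≤ B1 / L := by positivity
      refine (cov_diff (w := B1 / L) (v := fun l => B1 / L + v l) hN h hL hN1 ht hB1' hpc' hpcN'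
        hpcd' a le_rfl hi (hC.mono hB11) (hCN.mono hB11) (hG.mono hB11) (hG.mono hB11)
        (hGN.mono hB11) ?_ ?_ hBL (fun l => by linarith [hv l]) ?_ ?_).trans ?_
      · intro s' h3 _ b m hm
        exact GD_all hN h hL ht hB1' hGD h3 b hi.le (by omega) (by omega) (by omega) hm
      · intro _; exact hCD
      · intro r hr1 hr2 b m hm
        exact hGD r hr1 hr2 b i _ hi.le (by omega) (by omega) (by omega) m hm
      · intro l hl s' hs'
        rcases lt_or_eq_of_le hs' with h1 | h1
        · linarith [hCD s' h1 l (by omega), hv l]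
        · subst h1
          linarith [hQ l hl]
      · have e1 : B1 / L * ∑ l ∈ Finset.range i, (B1 / L + v l) ≤
            B1 ^ 2 * B1 / L + B1 ^ 2 * (1 / L * ∑ l ∈ Finset.range i, v l) := by
          rw [Finset.sum_add_distrib, mul_add]
          refine add_le_add ?_ ?_
          · simp only [Finset.sum_const, Finset.card_range, nsmul_eq_mul]
            have h5 : (i : ℝ) ≤ L := by exact_mod_cast hi.le
            have h6 : (i : ℝ) * (B1 / L) ≤ L * (B1 / L) := by gcongr
            rw [mul_div_cancel₀ _ hL0.ne'] at h6
            calc B1 / L * (i * (B1 / L)) ≤ B1 / L * B1 := by gcongr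
              _ = (B1 ^ 2 * 1) / L := by ring
              _ ≤ B1 ^ 2 * B1 / L := by gcongr
          · rw [div_eq_mul_one_div, mul_assoc]
            apply mul_le_mul_of_nonneg_right _ (by positivity)
            nlinarith
        calc _ ≤ 2 * ((T : ℝ) + 1) ^ 2 * (B1 ^ 2 * (B1 / L) +
              (B1 ^ 2 * B1 / L + B1 ^ 2 * (1 / L * ∑ l ∈ Finset.range i, v l))
              + 6 * B1 ^ 3 / L) := by gcongr
          _ = A2 / L + K2 / L * ∑ l ∈ Finset.range i, v l := by rw [hA2, hK2]; ring
          _ ≤ _ := by linarith [mul_nonneg hK20 hw])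
  refine ⟨hGD.mono (by linarith), ?_⟩
  intro s hs1 hs2 m hm
  rcases eq_or_lt_of_le hs1 with h6 | h6
  · rw [← h6, h.c_neg_one, hN.c_neg_one]
    simp only [sub_self, abs_zero]
    positivity
  · lift s to ℕ using (by omega)
    rw [add_div]
    have q1 : 0 ≤ B1 / L := by positivity
    have q2 : 0 ≤ B2 / L := by positivity
    rcases lt_or_eq_of_le hs2 with h7 | h7
    · linarith [hCD s (by omega) m hm]
    · obtain rfl : s = t := by omega
      have := stage2.2 m hm
      have e : (K2 + 1) * (A2 / L) * Real.exp (K2 * (K2 + 2)) = B2 / L := by rw [hB2]; ring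
      rw [e] at this
      linarith


/-! ## Induction over the training steps -/

lemma exists_lip (φ : ℝ → ℝ) (h : LocallyLipschitz φ) (B : ℝ) : ∃ M : ℝ, 1 ≤ M ∧
    (∀ y, |y| ≤ B → |φ y| ≤ M) ∧
    (∀ y z, |y| ≤ B → |z| ≤ B → |φ y - φ z| ≤ M * |y - z|) := by
  have hcomp : IsCompact (Set.Icc (-B) B) := isCompact_Icc
  obtain ⟨M1, hM1⟩ := hcomp.exists_bound_of_continuousOn (f := φ) h.continuous.continuousOn
  obtain ⟨M2, hM2⟩ := (h.locallyLipschitzOn (s := Set.Icc (-B) B)).exists_lipschitzOnWith_of_compact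
    hcomp
  refine ⟨1 + |M1| + M2, by linarith [abs_nonneg M1, M2.coe_nonneg], ?_, ?_⟩
  · intro y hy
    have := hM1 y (abs_le.mp hy)
    rw [Real.norm_eq_abs] at this
    linarith [le_abs_self M1, M2.coe_nonneg]
  · intro y z hy hz
    have := hM2.dist_le_mul y (abs_le.mp hy) z (abs_le.mp hz)
    rw [Real.dist_eq, Real.dist_eq] at this
    refine this.trans (mul_le_mul_of_nonneg_right ?_ (abs_nonneg _))
    linarith [abs_nonneg M1]

section
variable {T : ℕ} {ξ : ℕ → ℝ} {ℓ' : ℕ → ℝ → ℝ} {x : ℕ → ℕ → Bool → ℝ}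
  {g : ℕ → ℕ → ℤ → Bool → Bool → ℕ → ℕ → ℝ} {c : ℕ → ℤ → ℤ → Bool → ℕ → ℝ}

lemma all_bounds (hlip : ∀ t : ℕ, LocallyLipschitz (ℓ' t))
    (hD : ∀ L, 1 ≤ L → DTP T L (x L) (g L) (c L))
    (hx0 : ∀ L, 1 ≤ L → ∀ t < T, x L t false = ξ t)
    (hx1 : ∀ L, 1 ≤ L → ∀ t < T, x L t true = ℓ' t (g L t (-1) false true L L)) :
    ∀ t ≤ T, ∃ K : ℝ, 1 ≤ K ∧ ∀ L, 1 ≤ L → ∀ s < t, ∀ a, GB L (g L) K s a ∧ CB L (c L) K s a := by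
  intro t
  induction t with
  | zero => intro _; exact ⟨1, le_rfl, fun L _ s hs => absurd hs (by omega)⟩
  | succ t ih =>
    intro htT
    obtain ⟨K, hK, hp⟩ := ih (by omega)
    have ht : t < T := by omega
    obtain ⟨K1, hK1, hs1⟩ := sweep_bound T t ht (K + |ξ t|) (by linarith [abs_nonneg (ξ t)])
    have f1 : ∀ L, 1 ≤ L → GB L (g L) K1 t false ∧ CB L (c L) K1 t false := by
      intro L hL
      refine hs1 L hL (x L) (g L) (c L) (hD L hL) false ?_ ?_
      · intro s hs a
        have h0 : K ≤ K + |ξ t| := by linarith [abs_nonneg (ξ t)]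
        exact ⟨(hp L hL s hs a).1.mono h0, (hp L hL s hs a).2.mono h0⟩
      · rw [hx0 L hL t ht]; linarith
    obtain ⟨M, hM, hMb, -⟩ := exists_lip (ℓ' t) (hlip t) K1
    obtain ⟨K2, hK2, hs2⟩ := sweep_bound T t ht (K + M) (by linarith)
    have f2 : ∀ L, 1 ≤ L → GB L (g L) K2 t true ∧ CB L (c L) K2 t true := by
      intro L hL
      refine hs2 L hL (x L) (g L) (c L) (hD L hL) true ?_ ?_
      · intro s hs a
        have h0 : K ≤ K + M := by linarith
        exact ⟨(hp L hL s hs a).1.mono h0, (hp L hL s hs a).2.mono h0⟩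
      · rw [hx1 L hL t ht]
        linarith [hMb _ ((f1 L hL).1 (-1) le_rfl true L le_rfl L hL le_rfl)]
    refine ⟨K + K1 + K2, by linarith, ?_⟩
    intro L hL s hs a
    rcases Nat.lt_succ_iff_lt_or_eq.mp hs with h | rfl
    · have h0 : K ≤ K + K1 + K2 := by linarith
      exact ⟨(hp L hL s h a).1.mono h0, (hp L hL s h a).2.mono h0⟩
    · cases a
      · have h0 : K1 ≤ K + K1 + K2 := by linarith
        exact ⟨(f1 L hL).1.mono h0, (f1 L hL).2.mono h0⟩
      · have h0 : K2 ≤ K + K1 + K2 := by linarith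
        exact ⟨(f2 L hL).1.mono h0, (f2 L hL).2.mono h0⟩

lemma all_diffs (hlip : ∀ t : ℕ, LocallyLipschitz (ℓ' t))
    (hD : ∀ L, 1 ≤ L → DTP T L (x L) (g L) (c L))
    (hx0 : ∀ L, 1 ≤ L → ∀ t < T, x L t false = ξ t)
    (hx1 : ∀ L, 1 ≤ L → ∀ t < T, x L t true = ℓ' t (g L t (-1) false true L L)) :
    ∀ t ≤ T, ∃ K : ℝ, 1 ≤ K ∧ ∀ N, 1 ≤ N → ∀ s < t, ∀ a,
      GD N (2 * N) (g N) (g (2 * N)) K s a ∧ CD (2 * N) (c N) (c (2 * N)) K s a := by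
  obtain ⟨B, hB, hb⟩ := all_bounds hlip hD hx0 hx1 T le_rfl
  intro t
  induction t with
  | zero => intro _; exact ⟨1, le_rfl, fun L _ s hs => absurd hs (by omega)⟩
  | succ t ih =>
    intro htT
    obtain ⟨K, hK, hp⟩ := ih (by omega)
    have ht : t < T := by omega
    obtain ⟨K1, hK1, hs1⟩ := sweep_diff T t ht (K + B) (by linarith)
    have gen : ∀ K' : ℝ, B ≤ K' → ∀ L, 1 ≤ L → ∀ s < T, ∀ a,
        GB L (g L) K' s a ∧ CB L (c L) K' s a := fun K' hK' L hL s hs a =>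
      ⟨(hb L hL s hs a).1.mono hK', (hb L hL s hs a).2.mono hK'⟩
    have gen2 : ∀ K' : ℝ, K ≤ K' → ∀ N, 1 ≤ N → ∀ s < t, ∀ a,
        GD N (2 * N) (g N) (g (2 * N)) K' s a ∧ CD (2 * N) (c N) (c (2 * N)) K' s a :=
      fun K' hK' L hL s hs a => ⟨(hp L hL s hs a).1.mono hK', (hp L hL s hs a).2.mono hK'⟩
    have f1 : ∀ N, 1 ≤ N → GD N (2 * N) (g N) (g (2 * N)) K1 t false ∧
        CD (2 * N) (c N) (c (2 * N)) K1 t false := by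
      intro N hN
      have h0 := gen (K + B) (by linarith) N hN
      have h1 := gen (K + B) (by linarith) (2 * N) (by omega)
      refine hs1 N (2 * N) hN rfl (x N) (x (2 * N)) (g N) (g (2 * N)) (c N) (c (2 * N)) (hD N hN)
        (hD _ (by omega)) false (fun s hs => h0 s (by omega)) (fun s hs => h1 s (by omega))
        (h0 t ht _).1 (h0 t ht _).2 (h1 t ht _).1 (h1 t ht _).2
        (gen2 _ (by linarith) N hN) ?_
      rw [hx0 N hN t ht, hx0 _ (by omega) t ht]
      simp only [sub_self, abs_zero]
      positivity
    obtain ⟨M, hM, -, hMl⟩ := exists_lip (ℓ' t) (hlip t) B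
    obtain ⟨K2, hK2, hs2⟩ := sweep_diff T t ht (K + B + M * K1)
      (by linarith [show 0 ≤ M * K1 by positivity])
    have hMK : 0 ≤ M * K1 := by positivity
    have f2 : ∀ N, 1 ≤ N → GD N (2 * N) (g N) (g (2 * N)) K2 t true ∧
        CD (2 * N) (c N) (c (2 * N)) K2 t true := by
      intro N hN
      have h0 := gen (K + B + M * K1) (by linarith) N hN
      have h1 := gen (K + B + M * K1) (by linarith) (2 * N) (by omega)
      refine hs2 N (2 * N) hN rfl (x N) (x (2 * N)) (g N) (g (2 * N)) (c N) (c (2 * N)) (hD N hN)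
        (hD _ (by omega)) true (fun s hs => h0 s (by omega)) (fun s hs => h1 s (by omega))
        (h0 t ht _).1 (h0 t ht _).2 (h1 t ht _).1 (h1 t ht _).2
        (gen2 _ (by linarith) N hN) ?_
      rw [hx1 N hN t ht, hx1 _ (by omega) t ht]
      have e1 := hMl _ _ ((hb N hN t ht false).1 (-1) le_rfl true N le_rfl N hN le_rfl)
        ((hb (2 * N) (by omega) t ht false).1 (-1) le_rfl true (2 * N) le_rfl (2 * N) (by omega)
          le_rfl)
      have e2 := (f1 N hN).1 (-1) le_rfl (by omega) true (2 * N) N le_rfl le_rfl (by omega)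
        (by omega) (2 * N - 1) (by omega)
      rw [show (2 * N - 1) / 2 + 1 = N by omega, show 2 * N - 1 + 1 = 2 * N by omega] at e2
      refine e1.trans ?_
      calc _ ≤ M * (K1 / ((2 * N : ℕ) : ℝ)) := by gcongr
        _ = (M * K1) / ((2 * N : ℕ) : ℝ) := by ring
        _ ≤ _ := by
          gcongr
          linarith
    refine ⟨K + K1 + K2, by linarith, ?_⟩
    intro N hN s hs a
    rcases Nat.lt_succ_iff_lt_or_eq.mp hs with h | rfl
    · exact gen2 _ (by linarith) N hN s h a
    · cases a
      · have h0 : K1 ≤ K + K1 + K2 := by linarith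
        exact ⟨(f1 N hN).1.mono h0, (f1 N hN).2.mono h0⟩
      · have h0 : K2 ≤ K + K1 + K2 := by linarith
        exact ⟨(f2 N hN).1.mono h0, (f2 N hN).2.mono h0⟩

end



section
variable {T L : ℕ} {ξ : ℕ → ℝ} {ℓ' : ℕ → ℝ → ℝ} {Γ : ℕ → ℤ → Bool → Bool → ℝ → ℝ → ℝ}
  {C : ℤ → ℤ → Bool → ℝ → ℝ} {f χ : ℕ → ℝ}

lemma tp_fwd (h : IsLinearTP T L ξ ℓ' Γ C f χ) (hL : 1 ≤ L) {t : ℕ} (ht : t < T) {i : ℕ}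
    (hi : i < L) {r : ℤ} (hr : -1 ≤ r) (hrt : r ≤ t) (b : Bool) {q : ℝ} (hq : 0 < q) (hq1 : q ≤ 1) :
    Γ t r false b (((i + 1 : ℕ) : ℝ) / L) q = Γ t r false b ((i : ℝ) / L) q
      + (if (t : ℤ) = r ∧ b = false ∧ ((i + 1 : ℕ) : ℤ) = ⌈(L : ℝ) * q⌉ then 1 else 0)
      + (1 / (L : ℝ)) * ∑ s ∈ Finset.range t,
          Γ s r true b (((i + 1 : ℕ) : ℝ) / L) q *
            (Γ t (s : ℤ) false true ((i : ℝ) / L) (((i + 1 : ℕ) : ℝ) / L)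
              - C (t : ℤ) (s : ℤ) false (((i + 1 : ℕ) : ℝ) / L)) := by
  have hLp : (0 : ℝ) < L := by exact_mod_cast hL
  have e : ((i + 1 : ℕ) : ℝ) - 1 = i := by push_cast; ring
  have := h.fwd_step t ht (i + 1) (by omega) (by omega) r hr hrt b (((i + 1 : ℕ) : ℝ) / L) q
    (by gcongr; linarith) le_rfl hq hq1
  rw [e] at this
  exact this

lemma tp_bwd (h : IsLinearTP T L ξ ℓ' Γ C f χ) (hL : 1 ≤ L) {t : ℕ} (ht : t < T) {i : ℕ}
    (hi : i < L) {r : ℤ} (hr : -1 ≤ r) (hrt : r ≤ t) (b : Bool) {q : ℝ} (hq : 0 < q) (hq1 : q ≤ 1) :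
    Γ t r true b ((i : ℝ) / L) q = Γ t r true b (((i + 1 : ℕ) : ℝ) / L) q
      + (if (t : ℤ) = r ∧ b = true ∧ ((i + 1 : ℕ) : ℤ) = ⌈(L : ℝ) * q⌉ then 1 else 0)
      + (1 / (L : ℝ)) * ∑ s ∈ Finset.range t,
          Γ s r false b ((i : ℝ) / L) q *
            (Γ t (s : ℤ) true false (((i + 1 : ℕ) : ℝ) / L) (((i + 1 : ℕ) : ℝ) / L)
              - C (t : ℤ) (s : ℤ) true (((i + 1 : ℕ) : ℝ) / L)) := by
  have hLp : (0 : ℝ) < L := by exact_mod_cast hL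
  have e : ((i + 1 : ℕ) : ℝ) - 1 = i := by push_cast; ring
  have := h.bwd_step t ht (i + 1) (by omega) (by omega) r hr hrt b ((i : ℝ) / L) q
    (by gcongr; linarith) (by rw [e]) (by positivity) hq hq1
  rw [e] at this
  exact this

lemma tp_qconst (h : IsLinearTP T L ξ ℓ' Γ C f χ) (hL : 1 ≤ L) {q q' : ℝ} (hq : 0 < q)
    (hq1 : q ≤ 1) (hq' : 0 < q') (hq1' : q' ≤ 1) (hqq : ⌈(L : ℝ) * q⌉ = ⌈(L : ℝ) * q'⌉) :
    ∀ t < T, ∀ r : ℤ, -1 ≤ r → ∀ a b, ∀ i : ℕ, i ≤ L →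
      Γ t r a b ((i : ℝ) / L) q = Γ t r a b ((i : ℝ) / L) q' := by
  have hLp : (0 : ℝ) < L := by exact_mod_cast hL
  intro t
  induction t using Nat.strong_induction_on with
  | _ t ih =>
  intro ht r hr a b
  by_cases hrt : (t : ℤ) < r
  · intro i _
    rw [h.Γ_vanish t r hrt, h.Γ_vanish t r hrt]
  push Not at hrt
  cases a with
  | false =>
    intro i
    induction i with
    | zero =>
      intro _
      simp only [Nat.cast_zero, zero_div]
      rw [h.fwd_init t ht r hr hrt b q hq hq1, h.fwd_init t ht r hr hrt b q' hq' hq1']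
    | succ i ihi =>
      intro hi
      rw [tp_fwd h hL ht (by omega) hr hrt b hq hq1, tp_fwd h hL ht (by omega) hr hrt b hq' hq1',
        ihi (by omega), hqq]
      congr 2
      refine Finset.sum_congr rfl fun s hs => ?_
      rw [ih s (Finset.mem_range.mp hs) (by have := Finset.mem_range.mp hs; omega) r hr true b
        (i + 1) hi]
  | true =>
    have key : ∀ j : ℕ, j ≤ L →
        Γ t r true b (((L - j : ℕ) : ℝ) / L) q = Γ t r true b (((L - j : ℕ) : ℝ) / L) q' := by
      intro j
      induction j with
      | zero =>
        intro _
        simp only [Nat.sub_zero]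
        rw [div_self hLp.ne', h.bwd_init t ht r hr hrt b q hq hq1,
          h.bwd_init t ht r hr hrt b q' hq' hq1']
      | succ j ihj =>
        intro hj
        have e : L - j = (L - (j + 1)) + 1 := by omega
        have ihj' := ihj (by omega)
        rw [e] at ihj'
        rw [tp_bwd h hL ht (by omega) hr hrt b hq hq1, tp_bwd h hL ht (by omega) hr hrt b hq' hq1',
          ihj', hqq]
        congr 2
        refine Finset.sum_congr rfl fun s hs => ?_
        rw [ih s (Finset.mem_range.mp hs) (by have := Finset.mem_range.mp hs; omega) r hr false b
          (L - (j + 1)) (by omega)]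
    intro i hi
    have := key (L - i) (by omega)
    rwa [show L - (L - i) = i by omega] at this

lemma tp_cconst_nat (h : IsLinearTP T L ξ ℓ' Γ C f χ) (hL : 1 ≤ L) {t s : ℕ} (ht : t < T)
    (hs : s ≤ t) (a : Bool) {i : ℕ} (hi : i < L) {q : ℝ} (h1 : (i : ℝ) / L < q)
    (h2 : q ≤ ((i + 1 : ℕ) : ℝ) / L) : C t s a q = C t s a (((i + 1 : ℕ) : ℝ) / L) := by
  have hLp : (0 : ℝ) < L := by exact_mod_cast hL
  have e : ((i + 1 : ℕ) : ℝ) - 1 = i := by push_cast; ring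
  cases a with
  | false =>
    rw [h.fwd_C t ht s hs (i + 1) (by omega) (by omega) q (by rw [e]; exact h1) h2,
      h.fwd_C t ht s hs (i + 1) (by omega) (by omega) _ (by rw [e]; exact h1.trans_le h2) le_rfl]
  | true =>
    rw [h.bwd_C t ht s hs (i + 1) (by omega) (by omega) q (by rw [e]; exact h1) h2,
      h.bwd_C t ht s hs (i + 1) (by omega) (by omega) _ (by rw [e]; exact h1.trans_le h2) le_rfl]

lemma tp_cconst (h : IsLinearTP T L ξ ℓ' Γ C f χ) (hL : 1 ≤ L) {t s : ℤ} (ht : t < T)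
    (ht0 : -1 ≤ t) (hs : s < T) (hs0 : -1 ≤ s) (a : Bool) {i : ℕ} (hi : i < L) {q : ℝ}
    (h1 : (i : ℝ) / L < q) (h2 : q ≤ ((i + 1 : ℕ) : ℝ) / L) :
    C t s a q = C t s a (((i + 1 : ℕ) : ℝ) / L) := by
  wlog hst : s ≤ t generalizing s t
  · rw [h.C_symm t s, h.C_symm t s]
    exact this hs hs0 ht ht0 (by omega)
  by_cases hs1 : s = -1
  · subst hs1
    by_cases ht1 : t = -1
    · subst ht1
      rw [h.C_base, h.C_base]
    · rw [h.C_mixed t (by omega), h.C_mixed t (by omega)]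
  · obtain ⟨t, rfl⟩ := Int.eq_ofNat_of_zero_le (show 0 ≤ t by omega)
    obtain ⟨s, rfl⟩ := Int.eq_ofNat_of_zero_le (show 0 ≤ s by omega)
    exact tp_cconst_nat h hL (by omega) (by omega) a hi h1 h2

end

lemma integral_steps {L : ℕ} (hL : 1 ≤ L) (F : ℝ → ℝ)
    (hF : ∀ i < L, ∀ q, (i : ℝ) / L < q → q ≤ ((i + 1 : ℕ) : ℝ) / L →
      F q = F (((i + 1 : ℕ) : ℝ) / L)) :
    ∫ q in Ioc (0 : ℝ) 1, F q = (1 / (L : ℝ)) * ∑ m ∈ Finset.range L, F (((m + 1 : ℕ) : ℝ) / L) := by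
  have hLp : (0 : ℝ) < L := by exact_mod_cast hL
  have hle : ∀ i : ℕ, (i : ℝ) / L ≤ ((i + 1 : ℕ) : ℝ) / L := by
    intro i; push_cast; gcongr; linarith
  have hintv : ∀ i < L, IntervalIntegrable F volume ((i : ℝ) / L) (((i + 1 : ℕ) : ℝ) / L) := by
    intro i hi
    rw [intervalIntegrable_iff_integrableOn_Ioc_of_le (hle i)]
    refine (integrableOn_const (C := F (((i + 1 : ℕ) : ℝ) / L)) (by simp)).congr_fun ?_
      measurableSet_Ioc
    intro q hq
    exact (hF i hi q hq.1 hq.2).symm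
  have hsum := intervalIntegral.sum_integral_adjacent_intervals
    (a := fun i : ℕ => (i : ℝ) / L) (n := L) (f := F) (μ := volume) hintv
  simp only [Nat.cast_zero, zero_div, div_self hLp.ne'] at hsum
  rw [← intervalIntegral.integral_of_le zero_le_one, ← hsum, Finset.mul_sum]
  refine Finset.sum_congr rfl fun i hi => ?_
  rw [intervalIntegral.integral_of_le (hle i), setIntegral_congr_fun measurableSet_Ioc
    (g := fun _ => F (((i + 1 : ℕ) : ℝ) / L))
    (fun q hq => hF i (Finset.mem_range.mp hi) q hq.1 hq.2)]
  rw [setIntegral_const, smul_eq_mul, Real.volume_real_Ioc_of_le (hle i)]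
  congr 1
  push_cast
  field_simp
  ring


/-- Oriented discretization of `Γ`. -/
noncomputable def gdisc (L : ℕ) (Γ : ℕ → ℤ → Bool → Bool → ℝ → ℝ → ℝ) (t : ℕ) (r : ℤ) (a b : Bool)
    (i m : ℕ) : ℝ :=
  if a = true then Γ t r true b (((L - i : ℕ) : ℝ) / L) (((L + 1 - m : ℕ) : ℝ) / L)
  else Γ t r false b ((i : ℝ) / L) ((m : ℝ) / L)

/-- Oriented discretization of `C`. -/
noncomputable def cdisc (L : ℕ) (C : ℤ → ℤ → Bool → ℝ → ℝ) (t s : ℤ) (a : Bool) (m : ℕ) : ℝ :=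
  if a = true then C t s true (((L + 1 - m : ℕ) : ℝ) / L) else C t s false ((m : ℝ) / L)

lemma ceil_grid {L : ℕ} (hL : 1 ≤ L) (m : ℕ) : ⌈(L : ℝ) * ((m : ℝ) / L)⌉ = (m : ℤ) := by
  have hLp : (0 : ℝ) < L := by exact_mod_cast hL
  rw [mul_div_cancel₀ _ hLp.ne', Int.ceil_natCast]

lemma ceil_cell {L : ℕ} (hL : 1 ≤ L) {i : ℕ} {q : ℝ} (h1 : (i : ℝ) / L < q)
    (h2 : q ≤ ((i + 1 : ℕ) : ℝ) / L) : ⌈(L : ℝ) * q⌉ = ((i + 1 : ℕ) : ℤ) := by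
  have hLp : (0 : ℝ) < L := by exact_mod_cast hL
  rw [div_lt_iff₀ hLp] at h1
  rw [le_div_iff₀ hLp] at h2
  rw [Int.ceil_eq_iff]
  push_cast at *
  constructor <;> nlinarith

lemma grid_pos {L : ℕ} (hL : 1 ≤ L) {m : ℕ} (hm : 1 ≤ m) : (0 : ℝ) < (m : ℝ) / L := by
  have hLp : (0 : ℝ) < L := by exact_mod_cast hL
  have hLp : (0 : ℝ) < m := by exact_mod_cast hm
  positivity

lemma grid_le {L : ℕ} (hL : 1 ≤ L) {m : ℕ} (hm : m ≤ L) : (m : ℝ) / L ≤ 1 := by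
  have hLp : (0 : ℝ) < L := by exact_mod_cast hL
  rw [div_le_one hLp]
  exact_mod_cast hm

section
variable {T L : ℕ} {ξ : ℕ → ℝ} {ℓ' : ℕ → ℝ → ℝ} {Γ : ℕ → ℤ → Bool → Bool → ℝ → ℝ → ℝ}
  {C : ℤ → ℤ → Bool → ℝ → ℝ} {f χ : ℕ → ℝ}

lemma tp_integral (h : IsLinearTP T L ξ ℓ' Γ C f χ) (hL : 1 ≤ L) {t s : ℕ} (ht : t < T)
    (hs : s ≤ t) {t' s' : ℤ} (ht' : -1 ≤ t') (htt : t' ≤ t) (hs' : -1 ≤ s') (hss : s' ≤ s)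
    (a b : Bool) {i : ℕ} (hi : i ≤ L) :
    ∫ q in Ioc (0 : ℝ) 1, Γ t t' a b ((i : ℝ) / L) q * C t' s' b q * Γ s s' a b ((i : ℝ) / L) q =
      (1 / (L : ℝ)) * ∑ m ∈ Finset.range L,
        Γ t t' a b ((i : ℝ) / L) (((m + 1 : ℕ) : ℝ) / L) * C t' s' b (((m + 1 : ℕ) : ℝ) / L) *
          Γ s s' a b ((i : ℝ) / L) (((m + 1 : ℕ) : ℝ) / L) := by
  refine integral_steps hL _ ?_
  intro j hj q h1 h2
  have hLp : (0 : ℝ) < L := by exact_mod_cast hL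
  have hq : 0 < q := lt_of_le_of_lt (by positivity) h1
  have hq1 : q ≤ 1 := h2.trans (grid_le hL hj)
  have hc : ⌈(L : ℝ) * q⌉ = ⌈(L : ℝ) * (((j + 1 : ℕ) : ℝ) / L)⌉ := by
    rw [ceil_grid hL, ceil_cell hL h1 h2]
  have hp := grid_pos hL (show 1 ≤ j + 1 by omega)
  have hp1 := grid_le hL (show j + 1 ≤ L by omega)
  rw [tp_qconst h hL hq hq1 hp hp1 hc t ht t' ht' a b i hi,
    tp_qconst h hL hq hq1 hp hp1 hc s (by omega) s' hs' a b i hi,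
    tp_cconst h hL (by omega) ht' (by omega) hs' b hj h1 h2]

lemma tp_dtp (h : IsLinearTP T L ξ ℓ' Γ C f χ) (hL : 1 ≤ L) :
    DTP T L (fun t a => if a = true then χ t else ξ t) (gdisc L Γ) (cdisc L C) where
  c_symm t s a m := by
    unfold cdisc
    rw [h.C_symm t s, h.C_symm t s]
  c_base a m := by
    unfold cdisc
    simp only [h.C_base, ite_self]
  c_mixed t ht a m := by
    unfold cdisc
    simp only [h.C_mixed t ht, ite_self]
  g_vanish t r hr a b i m := by
    unfold gdisc
    simp only [h.Γ_vanish t r hr, ite_self]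
  init t ht r hr hrt a b m hm1 hm2 := by
    have hLp : (0 : ℝ) < L := by exact_mod_cast hL
    unfold gdisc
    cases a with
    | false =>
      simp only [Bool.false_eq_true, if_false, Nat.cast_zero, zero_div]
      exact h.fwd_init t ht r hr hrt b _ (grid_pos hL hm1) (grid_le hL hm2)
    | true =>
      simp only [if_true, Nat.sub_zero, div_self hLp.ne']
      exact h.bwd_init t ht r hr hrt b _ (grid_pos hL (by omega)) (grid_le hL (by omega))
  step t ht i hi r hr hrt a b m hm1 hm2 := by
    unfold gdisc cdisc
    cases a with
    | false =>
      simp only [Bool.false_eq_true, if_false, Bool.not_false, if_true]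
      rw [tp_fwd h hL ht hi hr hrt b (grid_pos hL hm1) (grid_le hL hm2), ceil_grid hL]
      rw [show L - (L - (i + 1)) = i + 1 by omega, show L + 1 - (L + 1 - m) = m by omega]
      simp only [Nat.cast_inj]
    | true =>
      simp only [Bool.false_eq_true, if_false, Bool.not_true, if_true]
      have e1 : L - i = L - (i + 1) + 1 := by omega
      have e2 : L + 1 - (i + 1) = L - (i + 1) + 1 := by omega
      rw [tp_bwd h hL ht (show L - (i + 1) < L by omega) hr hrt b
        (grid_pos hL (show 1 ≤ L + 1 - m by omega)) (grid_le hL (show L + 1 - m ≤ L by omega)),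
        ceil_grid hL, e1, e2]
      have e3 : ((L - (i + 1) + 1 : ℕ) : ℤ) = ((L + 1 - m : ℕ) : ℤ) ↔ i + 1 = m := by omega
      simp only [e3]
  cov t ht s hs i hi a := by
    have hLp : (0 : ℝ) < L := by exact_mod_cast hL
    have e : ((i + 1 : ℕ) : ℝ) - 1 = i := by push_cast; ring
    cases a with
    | false =>
      have := h.fwd_C t ht s hs (i + 1) (by omega) (by omega) (((i + 1 : ℕ) : ℝ) / L)
        (by gcongr; linarith) le_rfl
      rw [e] at this
      rw [show cdisc L C t s false (i + 1) = C t s false (((i + 1 : ℕ) : ℝ) / L) by simp [cdisc],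
        this]
      refine Finset.sum_congr rfl fun t' ht' => Finset.sum_congr rfl fun s' hs' =>
        Finset.sum_congr rfl fun b _ => ?_
      rw [Finset.mem_Icc] at ht' hs'
      rw [tp_integral h hL ht hs ht'.1 ht'.2 hs'.1 hs'.2 false b hi.le]
      congr 1
      refine Finset.sum_congr rfl fun m hm => ?_
      have hm := Finset.mem_range.mp hm
      unfold gdisc cbar cdisc
      have e4 : L + 1 - (L + 1 - (m + 1)) = m + 1 := by omega
      cases b <;> simp only [Bool.false_eq_true, if_false, if_true, e4, reduceCtorEq]
    | true =>
      have e5 : L + 1 - (i + 1) = L - i := by omega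
      have := h.bwd_C t ht s hs (L - i) (by omega) (by omega) (((L - i : ℕ) : ℝ) / L)
        (by gcongr; linarith) le_rfl
      rw [show cdisc L C t s true (i + 1) = C t s true (((L - i : ℕ) : ℝ) / L) by
        simp only [cdisc, if_true, e5], this]
      refine Finset.sum_congr rfl fun t' ht' => Finset.sum_congr rfl fun s' hs' =>
        Finset.sum_congr rfl fun b _ => ?_
      rw [Finset.mem_Icc] at ht' hs'
      rw [tp_integral h hL ht hs ht'.1 ht'.2 hs'.1 hs'.2 true b (show L - i ≤ L by omega)]
      congr 1
      rw [← Finset.sum_range_reflect]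
      refine Finset.sum_congr rfl fun m hm => ?_
      have hm := Finset.mem_range.mp hm
      unfold gdisc cbar cdisc
      have e4 : L + 1 - (m + 1) = L - 1 - m + 1 := by omega
      cases b <;> simp only [Bool.false_eq_true, if_false, if_true, e4, reduceCtorEq]

/-- Values of `Γ` at general `q` in terms of the grid. -/
lemma tp_q_grid (h : IsLinearTP T L ξ ℓ' Γ C f χ) (hL : 1 ≤ L) {t : ℕ} (ht : t < T) {r : ℤ}
    (hr : -1 ≤ r) (a b : Bool) {i m : ℕ} (hi : i ≤ L) (hm : m < L) {q : ℝ} (h1 : (m : ℝ) / L < q)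
    (h2 : q ≤ ((m + 1 : ℕ) : ℝ) / L) :
    Γ t r a b ((i : ℝ) / L) q = Γ t r a b ((i : ℝ) / L) (((m + 1 : ℕ) : ℝ) / L) := by
  have hLp : (0 : ℝ) < L := by exact_mod_cast hL
  exact tp_qconst h hL (lt_of_le_of_lt (by positivity) h1) (h2.trans (grid_le hL hm))
    (grid_pos hL (by omega)) (grid_le hL hm) (by rw [ceil_grid hL, ceil_cell hL h1 h2]) t ht r hr
    a b i hi

end

lemma half_cell {N : ℕ} (hN : 1 ≤ N) {i : ℕ} {q : ℝ} (h1 : (i : ℝ) / ((2 * N : ℕ) : ℝ) < q)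
    (h2 : q ≤ ((i + 1 : ℕ) : ℝ) / ((2 * N : ℕ) : ℝ)) :
    ((i / 2 : ℕ) : ℝ) / N < q ∧ q ≤ ((i / 2 + 1 : ℕ) : ℝ) / N := by
  have hNp : (0 : ℝ) < N := by exact_mod_cast hN
  have ha : ((2 * (i / 2) : ℕ) : ℝ) ≤ i := by exact_mod_cast (by omega : 2 * (i / 2) ≤ i)
  have hb : ((i + 1 : ℕ) : ℝ) ≤ ((2 * (i / 2 + 1) : ℕ) : ℝ) := by
    exact_mod_cast (by omega : i + 1 ≤ 2 * (i / 2 + 1))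
  push_cast at *
  rw [div_lt_iff₀ (by positivity)] at h1
  rw [le_div_iff₀ (by positivity)] at h2
  rw [div_lt_iff₀ hNp, le_div_iff₀ hNp]
  constructor <;> nlinarith

lemma exists_cell {L : ℕ} (hL : 1 ≤ L) {q : ℝ} (hq : 0 < q) (hq1 : q ≤ 1) :
    ∃ m < L, (m : ℝ) / L < q ∧ q ≤ ((m + 1 : ℕ) : ℝ) / L := by
  have hLp : (0 : ℝ) < L := by exact_mod_cast hL
  have hpos : 0 < ⌈(L : ℝ) * q⌉₊ := Nat.ceil_pos.mpr (by positivity)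
  have hle : ⌈(L : ℝ) * q⌉₊ ≤ L := Nat.ceil_le.mpr (by nlinarith)
  obtain ⟨m, hm⟩ : ∃ m, ⌈(L : ℝ) * q⌉₊ = m + 1 := ⟨⌈(L : ℝ) * q⌉₊ - 1, by omega⟩
  refine ⟨m, by omega, ?_, ?_⟩
  · rw [div_lt_iff₀ hLp, mul_comm]
    exact Nat.lt_ceil.mp (by omega)
  · rw [le_div_iff₀ hLp, mul_comm, ← hm]
    exact Nat.le_ceil _

section
variable {T N : ℕ} {ξ : ℕ → ℝ} {ℓ' : ℕ → ℝ → ℝ} {ΓN Γ : ℕ → ℤ → Bool → Bool → ℝ → ℝ → ℝ}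
  {CN C : ℤ → ℤ → Bool → ℝ → ℝ} {fN χN f χ : ℕ → ℝ}

lemma final_G (hN1 : 1 ≤ N) (hN : IsLinearTP T N ξ ℓ' ΓN CN fN χN)
    (h : IsLinearTP T (2 * N) ξ ℓ' Γ C f χ) {K : ℝ} {t : ℕ} (ht : t < T) (a : Bool)
    (hG : GD N (2 * N) (gdisc N ΓN) (gdisc (2 * N) Γ) K t a) {r : ℤ} (hr : -1 ≤ r) (hrt : r < t)
    (b : Bool) {q : ℝ} (hq : 0 < q) (hq1 : q ≤ 1) {i : ℕ} (hi : i ≤ 2 * N) :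
    |ΓN t r a b ((i : ℝ) / ((2 * N : ℕ) : ℝ)) q - Γ t r a b ((i : ℝ) / ((2 * N : ℕ) : ℝ)) q| ≤
      K / ((2 * N : ℕ) : ℝ) := by
  have hNp : (0 : ℝ) < N := by exact_mod_cast hN1
  obtain ⟨m, hm, h1, h2⟩ := exists_cell (show 1 ≤ 2 * N by omega) hq hq1
  obtain ⟨h1', h2'⟩ := half_cell hN1 h1 h2
  have hpN : ΓN t r a b ((i : ℝ) / ((2 * N : ℕ) : ℝ)) q =
      ΓN t r a b ((((i + 1) / 2 : ℕ) : ℝ) / N) q := by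
    rcases Nat.eq_zero_or_pos i with rfl | hpos
    · simp
    · obtain ⟨j, rfl⟩ : ∃ j, i = j + 1 := ⟨i - 1, by omega⟩
      have hc := half_cell (i := j) hN1 (q := ((j + 1 : ℕ) : ℝ) / ((2 * N : ℕ) : ℝ))
        (by gcongr; omega) le_rfl
      have e : (j + 1 + 1) / 2 = j / 2 + 1 := by omega
      rw [e]
      exact hN.Γ_const t ht r hr hrt.le a b (j / 2 + 1) (by omega) (by omega) _ q
        (by push_cast at hc ⊢; simpa using hc.1) hc.2 hq hq1
  rw [hpN, tp_q_grid hN hN1 ht hr a b (show (i + 1) / 2 ≤ N by omega) (show m / 2 < N by omega)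
    h1' h2', tp_q_grid h (by omega) ht hr a b hi hm h1 h2]
  cases a with
  | false =>
    have := hG r hr hrt b i ((i + 1) / 2) hi (by omega) (by omega) (by omega) m hm
    simpa only [gdisc, Bool.false_eq_true, if_false] using this
  | true =>
    have := hG r hr hrt b (2 * N - i) (N - (i + 1) / 2) (by omega) (by omega) (by omega) (by omega)
      (2 * N - 1 - m) (by omega)
    simp only [gdisc, if_true] at this
    rw [show N - (N - (i + 1) / 2) = (i + 1) / 2 by omega,
      show N + 1 - ((2 * N - 1 - m) / 2 + 1) = m / 2 + 1 by omega,
      show 2 * N - (2 * N - i) = i by omega,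
      show 2 * N + 1 - (2 * N - 1 - m + 1) = m + 1 by omega] at this
    exact this

lemma final_C (hN1 : 1 ≤ N) (hN : IsLinearTP T N ξ ℓ' ΓN CN fN χN) {K : ℝ} {t : ℕ} (ht : t < T) (a : Bool)
    (hC : CD (2 * N) (cdisc N CN) (cdisc (2 * N) C) K t a) {r : ℤ} (hr : -1 ≤ r) (hrt : r < t)
    {i : ℕ} (hi1 : 1 ≤ i) (hi : i ≤ 2 * N) :
    |CN t r a ((i : ℝ) / ((2 * N : ℕ) : ℝ)) - C t r a ((i : ℝ) / ((2 * N : ℕ) : ℝ))| ≤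
      K / ((2 * N : ℕ) : ℝ) := by
  have hNp : (0 : ℝ) < N := by exact_mod_cast hN1
  obtain ⟨j, rfl⟩ : ∃ j, i = j + 1 := ⟨i - 1, by omega⟩
  have hc := half_cell (i := j) hN1 (q := ((j + 1 : ℕ) : ℝ) / ((2 * N : ℕ) : ℝ))
    (by gcongr; omega) le_rfl
  rw [tp_cconst hN hN1 (by omega) (by omega) (by omega) hr a (show j / 2 < N by omega) hc.1 hc.2]
  cases a with
  | false =>
    have := hC r hr hrt.le j (by omega)
    simpa only [cdisc, Bool.false_eq_true, if_false] using this
  | true =>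
    have := hC r hr hrt.le (2 * N - 1 - j) (by omega)
    simp only [cdisc, if_true] at this
    rw [show N + 1 - ((2 * N - 1 - j) / 2 + 1) = j / 2 + 1 by omega,
      show 2 * N + 1 - (2 * N - 1 - j + 1) = j + 1 by omega] at this
    exact this

end


/-- Dyadic-depth doubling estimate: for `L = 2^k`, `k ≥ k₀ + 1`,
`|Γ^{L/2}(p,q) − Γ^L(p,q)| ≤ c/L` and `|C^{L/2}(p) − C^L(p)| ≤ c/L` at grid points
`p ∈ {0, 1/L, …, 1}`; in particular the dyadic sequences converge at geometric rate. -/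
theorem stmt_13
    (T : ℕ) (hT : 1 ≤ T) (ξ : ℕ → ℝ) (ℓ : ℕ → ℝ → ℝ) (ℓ' : ℕ → ℝ → ℝ)
    (hderiv : ∀ (t : ℕ) (x : ℝ), HasDerivAt (ℓ t) (ℓ' t x) x)
    (hlip : ∀ t : ℕ, LocallyLipschitz (ℓ' t))
    (Γ : ℕ → ℕ → ℤ → Bool → Bool → ℝ → ℝ → ℝ)
    (C : ℕ → ℤ → ℤ → Bool → ℝ → ℝ)
    (f χ : ℕ → ℕ → ℝ)
    (hTP : ∀ L : ℕ, 1 ≤ L → IsLinearTP T L ξ ℓ' (Γ L) (C L) (f L) (χ L)) :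
    ∃ c : ℝ, 0 < c ∧ ∃ k₀ : ℕ, ∀ k : ℕ, k₀ + 1 ≤ k →
      ∀ t : ℕ, t < T → ∀ r : ℤ, -1 ≤ r → r < (t : ℤ) → ∀ a b : Bool,
        ∀ q : ℝ, 0 < q → q ≤ 1 →
          ∀ i : ℕ, i ≤ 2 ^ k →
            |Γ (2 ^ (k - 1)) t r a b ((i : ℝ) / (2 : ℝ) ^ k) q -
                Γ (2 ^ k) t r a b ((i : ℝ) / (2 : ℝ) ^ k) q| ≤ c / (2 : ℝ) ^ k ∧
            (1 ≤ i →
              |C (2 ^ (k - 1)) (t : ℤ) r a ((i : ℝ) / (2 : ℝ) ^ k) -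
                  C (2 ^ k) (t : ℤ) r a ((i : ℝ) / (2 : ℝ) ^ k)| ≤ c / (2 : ℝ) ^ k) := by
  obtain ⟨K, hK, hall⟩ := all_diffs (T := T) (ξ := ξ) (ℓ' := ℓ')
    (x := fun L t a => if a = true then χ L t else ξ t)
    (g := fun L => gdisc L (Γ L)) (c := fun L => cdisc L (C L)) hlip
    (fun L hL => tp_dtp (hTP L hL) hL)
    (fun L hL t ht => by simp)
    (fun L hL t ht => by
      have hLp : (0 : ℝ) < L := by exact_mod_cast hL
      have h := hTP L hL
      simp only [if_true, gdisc, Bool.false_eq_true, if_false, div_self hLp.ne']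
      rw [h.χ_def t ht, h.f_def t ht]) T le_rfl
  refine ⟨K, by linarith, 0, ?_⟩
  intro k hk t ht r hr hrt a b q hq hq1 i hi
  obtain ⟨n, rfl⟩ : ∃ n, k = n + 1 := ⟨k - 1, by omega⟩
  have hN1 : 1 ≤ 2 ^ n := Nat.one_le_two_pow
  have e : 2 ^ (n + 1) = 2 * 2 ^ n := by ring
  have e' : (2 : ℝ) ^ (n + 1) = ((2 * 2 ^ n : ℕ) : ℝ) := by push_cast; ring
  obtain ⟨hG, hC⟩ := hall (2 ^ n) hN1 t ht a
  rw [Nat.add_sub_cancel, e', e]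
  rw [e] at hi
  exact ⟨final_G hN1 (hTP _ hN1) (hTP _ (by omega)) ht a hG hr hrt b hq hq1 hi,
    fun hi1 => final_C hN1 (hTP _ hN1) ht a hC hr hrt hi1 hi⟩
end

section
/- With Γ^L and C^L as defined in the context, there exist a constant c > 0 and an integer k₀ such that for every L = 2^k with k ≥ k₀, every admissible index pair (s, r) with r < s ≤ T−1, and every grid point p ∈ {2/L, 3/L, …, (L−1)/L}: |Γ^L_{s,r,0,1}(p − 1/L, p + 1/L) − Γ^L_{s,r,0,1}(p − 1/L, p)| ≤ c/L and |Γ^L_{s,r,1,0}(p, p) − Γ^L_{s,r,1,0}(p, p − 1/L)| ≤ c/L; i.e., near the diagonal, Γ^L varies by at most O(1/L) when its second (base-variable) argument q is shifted by one grid step, uniformly in L. -/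
open MeasureTheory Set Finset Filter Topology

namespace LTP

lemma tri_bound (T t s : ℕ) (ht : t < T) (hs : s ≤ t) (F : ℤ → ℤ → Bool → ℝ) (D : ℝ) (hD : 0 ≤ D)
    (hF : ∀ t' s' : ℤ, -1 ≤ t' → t' ≤ t → -1 ≤ s' → s' ≤ s → ∀ b, |F t' s' b| ≤ D) :
    |∑ t' ∈ Finset.Icc (-1 : ℤ) (t : ℤ), ∑ s' ∈ Finset.Icc (-1 : ℤ) (s : ℤ), ∑ b : Bool, F t' s' b|
      ≤ 2 * ((T : ℝ) + 2) ^ 2 * D := by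
  have hT : (t : ℝ) ≤ T := by exact_mod_cast ht.le
  have hT' : (s : ℝ) ≤ T := by exact_mod_cast hs.trans ht.le
  have c1 : ∀ n : ℕ, ((Finset.Icc (-1 : ℤ) (n : ℤ)).card : ℝ) = n + 2 := by
    intro n
    have : (Finset.Icc (-1 : ℤ) (n : ℤ)).card = n + 2 := by
      rw [Int.card_Icc]; omega
    rw [this]; push_cast; ring
  calc _ ≤ ∑ t' ∈ Finset.Icc (-1 : ℤ) (t : ℤ), ((s : ℝ) + 2) * (2 * D) := by
        refine (Finset.abs_sum_le_sum_abs _ _).trans (Finset.sum_le_sum fun t' h1 => ?_)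
        rw [Finset.mem_Icc] at h1
        refine (Finset.abs_sum_le_sum_abs _ _).trans ?_
        rw [← c1 s, ← nsmul_eq_mul]
        refine Finset.sum_le_card_nsmul _ _ _ fun s' h2 => ?_
        rw [Finset.mem_Icc] at h2
        rw [Fintype.sum_bool]
        have := abs_add_le (F t' s' true) (F t' s' false)
        have := hF t' s' h1.1 h1.2 h2.1 h2.2 true
        have := hF t' s' h1.1 h1.2 h2.1 h2.2 false
        linarith
    _ = ((t : ℝ) + 2) * (((s : ℝ) + 2) * (2 * D)) := by
        rw [Finset.sum_const, nsmul_eq_mul, c1]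
    _ ≤ ((T : ℝ) + 2) * (((T : ℝ) + 2) * (2 * D)) := by gcongr
    _ = _ := by ring

lemma int_const (f : ℝ → ℝ) (R : ℝ) (hf : ∀ q, 0 < q → q ≤ 1 → |f q| ≤ R) :
    |∫ q in Ioc (0 : ℝ) 1, f q| ≤ R := by
  have := norm_setIntegral_le_of_norm_le_const (μ := volume) (s := Ioc (0 : ℝ) 1) (f := f) (C := R)
    (by simp) (fun q hq => hf q hq.1 hq.2)
  simpa using this

lemma int_fwd (f : ℝ → ℝ) (R c x : ℝ) (hc : 0 < c) (hR : 0 ≤ R) (hx : 0 ≤ x) (hx1 : x ≤ 1)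
    (hf : ∀ q, 0 < q → q ≤ x → |f q| ≤ R * Real.exp (c * q))
    (hf0 : ∀ q, x < q → q ≤ 1 → f q = 0) :
    |∫ q in Ioc (0 : ℝ) 1, f q| ≤ R * Real.exp (c * x) / c := by
  have e : ∫ q in Ioc (0 : ℝ) 1, f q = ∫ q in Ioc (0 : ℝ) x, f q := by
    refine setIntegral_eq_of_subset_of_forall_sdiff_eq_zero measurableSet_Ioc
      (Set.Ioc_subset_Ioc_right hx1) fun q hq => hf0 q ?_ hq.1.2
    by_contra h
    exact hq.2 ⟨hq.1.1, not_lt.1 h⟩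
  have hi : IntegrableOn (fun q => R * Real.exp (c * q)) (Ioc 0 x) :=
    (Continuous.integrableOn_Icc (by fun_prop)).mono_set Set.Ioc_subset_Icc_self
  have h1 : |∫ q in Ioc (0 : ℝ) x, f q| ≤ ∫ q in Ioc (0 : ℝ) x, R * Real.exp (c * q) := by
    refine norm_integral_le_of_norm_le (f := f) hi ?_
    exact (ae_restrict_mem measurableSet_Ioc).mono fun q hq => hf q hq.1 hq.2
  have h2 : ∫ q in Ioc (0 : ℝ) x, R * Real.exp (c * q)
      = R * Real.exp (c * x) / c - R * Real.exp (c * 0) / c := by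
    rw [← intervalIntegral.integral_of_le hx]
    refine intervalIntegral.integral_eq_sub_of_hasDerivAt (f := fun q => R * Real.exp (c * q) / c)
      (fun q _ => ?_) (Continuous.intervalIntegrable (by fun_prop) _ _)
    have := ((((hasDerivAt_id q).const_mul c).exp).const_mul R).div_const c
    simp only [id, mul_one] at this
    exact this.congr_deriv (by field_simp)
  rw [e]
  have : 0 ≤ R * Real.exp (c * 0) / c := by positivity
  linarith

lemma int_bwd (f : ℝ → ℝ) (R c x : ℝ) (hc : 0 < c) (hR : 0 ≤ R) (hx : 0 ≤ x) (hx1 : x ≤ 1)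
    (hf : ∀ q, x < q → q ≤ 1 → |f q| ≤ R * Real.exp (c * (1 - q)))
    (hf0 : ∀ q, 0 < q → q ≤ x → f q = 0) :
    |∫ q in Ioc (0 : ℝ) 1, f q| ≤ R * Real.exp (c * (1 - x)) / c := by
  have e : ∫ q in Ioc (0 : ℝ) 1, f q = ∫ q in Ioc x 1, f q := by
    refine setIntegral_eq_of_subset_of_forall_sdiff_eq_zero measurableSet_Ioc
      (Set.Ioc_subset_Ioc_left hx) fun q hq => hf0 q hq.1.1 ?_
    by_contra h
    exact hq.2 ⟨not_le.1 h, hq.1.2⟩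
  have hi : IntegrableOn (fun q => R * Real.exp (c * (1 - q))) (Ioc x 1) :=
    (Continuous.integrableOn_Icc (by fun_prop)).mono_set Set.Ioc_subset_Icc_self
  have h1 : |∫ q in Ioc x 1, f q| ≤ ∫ q in Ioc x 1, R * Real.exp (c * (1 - q)) := by
    refine norm_integral_le_of_norm_le (f := f) hi ?_
    exact (ae_restrict_mem measurableSet_Ioc).mono fun q hq => hf q hq.1 hq.2
  have h2 : ∫ q in Ioc x 1, R * Real.exp (c * (1 - q))
      = -(R * Real.exp (c * (1 - 1)) / c) - -(R * Real.exp (c * (1 - x)) / c) := by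
    rw [← intervalIntegral.integral_of_le hx1]
    refine intervalIntegral.integral_eq_sub_of_hasDerivAt
      (f := fun q => -(R * Real.exp (c * (1 - q)) / c))
      (fun q _ => ?_) (Continuous.intervalIntegrable (by fun_prop) _ _)
    have := (((((hasDerivAt_id q).const_sub 1).const_mul c).exp.const_mul R).div_const c).neg
    simp only [id] at this
    exact HasDerivAt.congr_deriv this (by field_simp)
  rw [e]
  have : 0 ≤ R * Real.exp (c * (1 - 1)) / c := by positivity
  linarith

lemma ar1 (N M A c Y : ℝ) (hN : 0 ≤ N) (hM : 1 ≤ M) (hA : A = 2 * N * M ^ 2)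
    (hc0 : 0 < c) (hc : 2 * N * M ≤ c) (hY : 0 ≤ Y) :
    N * (M ^ 2 * Y + M * (A * Y) / c) ≤ A * Y := by
  have hAY : 0 ≤ A * Y := by rw [hA]; positivity
  have h1 : N * (M * (A * Y) / c) ≤ A * Y / 2 := by
    rw [← mul_div_assoc, div_le_iff₀ hc0]
    nlinarith
  have h2 : N * (M ^ 2 * Y) = A * Y / 2 := by rw [hA]; ring
  rw [mul_add]; linarith

lemma ar2 (L : ℕ) (T M A c Y : ℝ) (hc : T * M * (1 + A) ≤ c) (hY : 0 ≤ Y) :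
    Y + 1 / (L : ℝ) * (T * (M * (Y + A * Y))) ≤ Y * Real.exp (c / L) := by
  have h := Real.add_one_le_exp (c / (L : ℝ))
  have h3 : 1 / (L : ℝ) * (T * M * (1 + A)) ≤ c / L := by
    rw [div_eq_mul_inv c, mul_comm c, one_div]
    gcongr
  calc _ = Y * (1 / (L : ℝ) * (T * M * (1 + A)) + 1) := by ring
    _ ≤ _ := by gcongr; linarith

section
variable {T L : ℕ} {ξ : ℕ → ℝ} {ℓ' : ℕ → ℝ → ℝ}
    {Γ : ℕ → ℤ → Bool → Bool → ℝ → ℝ → ℝ} {C : ℤ → ℤ → Bool → ℝ → ℝ} {f χ : ℕ → ℝ}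

lemma fwd_grid (h : IsLinearTP T L ξ ℓ' Γ C f χ) {t : ℕ} (ht : t < T) {j : ℕ} (hj : j < L)
    {r : ℤ} (hr : -1 ≤ r) (hrt : r ≤ t) (b : Bool) {q : ℝ} (hq : 0 < q) (hq1 : q ≤ 1) :
    Γ t r false b ((j + 1 : ℝ) / L) q =
        Γ t r false b ((j : ℝ) / L) q
          + (if (t : ℤ) = r ∧ b = false ∧ (j + 1 : ℤ) = ⌈(L : ℝ) * q⌉ then 1 else 0)
          + (1 / (L : ℝ)) * ∑ s ∈ Finset.range t,
              Γ s r true b ((j + 1 : ℝ) / L) q *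
                (Γ t (s : ℤ) false true ((j : ℝ) / L) ((j + 1 : ℝ) / L)
                  - C (t : ℤ) (s : ℤ) false ((j + 1 : ℝ) / L)) := by
  have hL : (0 : ℝ) < L := by exact_mod_cast (by omega : 0 < L)
  have := h.fwd_step t ht (j + 1) (by omega) (by omega) r hr hrt b ((j + 1 : ℝ) / L) q
    (by push_cast; gcongr; linarith) (by push_cast; rfl) hq hq1
  simpa using this

lemma bwd_grid (h : IsLinearTP T L ξ ℓ' Γ C f χ) {t : ℕ} (ht : t < T) {j : ℕ} (hj : j < L)
    {r : ℤ} (hr : -1 ≤ r) (hrt : r ≤ t) (b : Bool) {q : ℝ} (hq : 0 < q) (hq1 : q ≤ 1) :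
    Γ t r true b ((j : ℝ) / L) q =
        Γ t r true b ((j + 1 : ℝ) / L) q
          + (if (t : ℤ) = r ∧ b = true ∧ (j + 1 : ℤ) = ⌈(L : ℝ) * q⌉ then 1 else 0)
          + (1 / (L : ℝ)) * ∑ s ∈ Finset.range t,
              Γ s r false b ((j : ℝ) / L) q *
                (Γ t (s : ℤ) true false ((j + 1 : ℝ) / L) ((j + 1 : ℝ) / L)
                  - C (t : ℤ) (s : ℤ) true ((j + 1 : ℝ) / L)) := by
  have hL : (0 : ℝ) < L := by exact_mod_cast (by omega : 0 < L)
  have := h.bwd_step t ht (j + 1) (by omega) (by omega) r hr hrt b ((j : ℝ) / L) q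
    (by push_cast; gcongr; linarith) (by push_cast; simp) (by positivity) hq hq1
  simpa using this

/-- Backward induction on the grid. -/
lemma desc_ind {L : ℕ} {P : ℕ → Prop} (h0 : P L) (hs : ∀ j, j < L → P (j + 1) → P j) :
    ∀ j, j ≤ L → P j := by
  intro j hj
  induction hn : L - j generalizing j with
  | zero => have : j = L := by omega
            exact this ▸ h0
  | succ n ih => exact hs j (by omega) (ih (j + 1) (by omega) (by omega))

lemma diag_fwd (h : IsLinearTP T L ξ ℓ' Γ C f χ) {t : ℕ} (ht : t < T) (hL : 1 ≤ L)
    (b : Bool) {q : ℝ} (hq : 0 < q) (hq1 : q ≤ 1) : ∀ j : ℕ, j ≤ L →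
    Γ t t false b ((j : ℝ) / L) q = if b = false ∧ ⌈(L : ℝ) * q⌉ ≤ (j : ℤ) then 1 else 0 := by
  have hL' : (0 : ℝ) < L := by exact_mod_cast hL
  have hpos : 0 < ⌈(L : ℝ) * q⌉ := Int.ceil_pos.2 (by positivity)
  intro j
  induction j with
  | zero =>
    intro _
    have := h.fwd_init t ht t (by omega) le_rfl b q hq hq1
    rw [if_neg (by omega)] at this
    rw [if_neg (by push_cast; omega)]
    simpa using this
  | succ j ih =>
    intro hj
    have := fwd_grid h ht (j := j) (by omega) (r := t) (by omega) le_rfl b hq hq1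
    rw [Finset.sum_eq_zero] at this
    · push_cast
      rw [this, ih (by omega)]
      cases b <;> simp
      split_ifs <;> first | omega | simp
    · intro s hs
      rw [Finset.mem_range] at hs
      rw [h.Γ_vanish s t (by exact_mod_cast hs), zero_mul]

lemma diag_bwd (h : IsLinearTP T L ξ ℓ' Γ C f χ) {t : ℕ} (ht : t < T) (hL : 1 ≤ L)
    (b : Bool) {q : ℝ} (hq : 0 < q) (hq1 : q ≤ 1) : ∀ j : ℕ, j ≤ L →
    Γ t t true b ((j : ℝ) / L) q = if b = true ∧ (j : ℤ) < ⌈(L : ℝ) * q⌉ then 1 else 0 := by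
  have hL' : (0 : ℝ) < L := by exact_mod_cast hL
  have hle : ⌈(L : ℝ) * q⌉ ≤ L := Int.ceil_le.2 (by push_cast; nlinarith)
  refine desc_ind ?_ ?_
  · have := h.bwd_init t ht t (by omega) le_rfl b q hq hq1
    rw [if_neg (by omega)] at this
    rw [if_neg (by omega), div_self hL'.ne']
    exact this
  · intro j hj ih
    have := bwd_grid h ht (j := j) (by omega) (r := t) (by omega) le_rfl b hq hq1
    rw [Finset.sum_eq_zero] at this
    · push_cast at ih
      rw [this, ih]
      cases b <;> simp
      split_ifs <;> first | omega | simp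
    · intro s hs
      rw [Finset.mem_range] at hs
      rw [h.Γ_vanish s t (by exact_mod_cast hs), zero_mul]

/-- Uniform bounds on everything produced at times `< n`. -/
def Bd (L n : ℕ) (M : ℝ) (Γ : ℕ → ℤ → Bool → Bool → ℝ → ℝ → ℝ) (C : ℤ → ℤ → Bool → ℝ → ℝ) : Prop :=
  (∀ s : ℕ, s < n → ∀ r : ℤ, -1 ≤ r → r ≤ s → ∀ a b : Bool, ∀ j : ℕ, j ≤ L →
    ∀ q : ℝ, 0 < q → q ≤ 1 → |Γ s r a b ((j : ℝ) / L) q| ≤ M) ∧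
  (∀ s : ℕ, s < n → ∀ s' : ℕ, s' ≤ s → ∀ a : Bool, ∀ p : ℝ, 0 < p → p ≤ 1 → |C s s' a p| ≤ M)

lemma Cprev (h : IsLinearTP T L ξ ℓ' Γ C f χ) {n : ℕ} {M : ℝ} (hM : 1 ≤ M) (hB : Bd L n M Γ C)
    (t s : ℤ) (ht : -1 ≤ t) (htn : t < n) (hs : -1 ≤ s) (hsn : s < n) (b : Bool)
    {p : ℝ} (hp : 0 < p) (hp1 : p ≤ 1) : |C t s b p| ≤ M := by
  rcases (by omega : t = -1 ∨ 0 ≤ t) with rfl | ht0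
  · rcases (by omega : s = -1 ∨ 0 ≤ s) with rfl | hs0
    · rw [h.C_base]; simpa using hM
    · rw [h.C_symm, h.C_mixed s hs0]; simp; linarith
  · rcases (by omega : s = -1 ∨ 0 ≤ s) with rfl | hs0
    · rw [h.C_mixed t ht0]; simp; linarith
    · lift t to ℕ using ht0
      lift s to ℕ using hs0
      rcases le_total s t with hst | hst
      · exact hB.2 t (by omega) s hst b p hp hp1
      · rw [h.C_symm]
        exact hB.2 s (by omega) t hst b p hp hp1

lemma grid01 {j : ℕ} (hL : 1 ≤ L) (hj : j ≤ L) : (0 : ℝ) ≤ (j : ℝ) / L ∧ (j : ℝ) / L ≤ 1 := by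
  have hL' : (0 : ℝ) < L := by exact_mod_cast hL
  refine ⟨by positivity, ?_⟩
  rw [div_le_one hL']
  exact_mod_cast hj

lemma diag_fwd_zero (h : IsLinearTP T L ξ ℓ' Γ C f χ) {t : ℕ} (ht : t < T) (hL : 1 ≤ L)
    (b : Bool) {q : ℝ} (hq : 0 < q) (hq1 : q ≤ 1) {j : ℕ} (hj : j ≤ L)
    (hz : b = true ∨ (j : ℝ) / L < q) : Γ t t false b ((j : ℝ) / L) q = 0 := by
  have hL' : (0 : ℝ) < L := by exact_mod_cast hL
  rw [diag_fwd h ht hL b hq hq1 j hj, if_neg]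
  rintro ⟨rfl, h2⟩
  simp only [Bool.false_eq_true, false_or] at hz
  rw [Int.ceil_le] at h2
  rw [div_lt_iff₀ hL'] at hz
  push_cast at h2
  linarith

lemma diag_bwd_zero (h : IsLinearTP T L ξ ℓ' Γ C f χ) {t : ℕ} (ht : t < T) (hL : 1 ≤ L)
    (b : Bool) {q : ℝ} (hq : 0 < q) (hq1 : q ≤ 1) {j : ℕ} (hj : j ≤ L)
    (hz : b = false ∨ q ≤ (j : ℝ) / L) : Γ t t true b ((j : ℝ) / L) q = 0 := by
  have hL' : (0 : ℝ) < L := by exact_mod_cast hL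
  rw [diag_bwd h ht hL b hq hq1 j hj, if_neg]
  rintro ⟨rfl, h2⟩
  simp only [Bool.true_eq_false, false_or] at hz
  rw [Int.lt_ceil] at h2
  rw [le_div_iff₀ hL'] at hz
  push_cast at h2
  linarith

lemma diag_le (h : IsLinearTP T L ξ ℓ' Γ C f χ) {t : ℕ} (ht : t < T) (hL : 1 ≤ L)
    (a b : Bool) {q : ℝ} (hq : 0 < q) (hq1 : q ≤ 1) {j : ℕ} (hj : j ≤ L) :
    |Γ t t a b ((j : ℝ) / L) q| ≤ 1 := by
  cases a
  · rw [diag_fwd h ht hL b hq hq1 j hj]; split_ifs <;> simp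
  · rw [diag_bwd h ht hL b hq hq1 j hj]; split_ifs <;> simp

lemma mul3 {a b c A B D : ℝ} (ha : |a| ≤ A) (hb : |b| ≤ B) (hc : |c| ≤ D) :
    |a * b * c| ≤ A * B * D := by
  rw [abs_mul, abs_mul]
  have := abs_nonneg a
  have := abs_nonneg b
  have := abs_nonneg c
  have : 0 ≤ A := by linarith
  have : 0 ≤ B := by linarith
  gcongr

lemma sum_bd (t : ℕ) (ht : t < T) (F G K : ℕ → ℝ) (M Y A : ℝ) (hY : 0 ≤ Y) (hA : 0 ≤ A) (hM : 0 ≤ M)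
    (hF : ∀ s < t, |F s| ≤ M) (hG : ∀ s < t, |G s| ≤ Y) (hK : ∀ s < t, |K s| ≤ A * Y) :
    |∑ s ∈ Finset.range t, F s * (G s - K s)| ≤ T * (M * (Y + A * Y)) := by
  have hT : (t : ℝ) ≤ T := by exact_mod_cast ht.le
  calc _ ≤ ∑ s ∈ Finset.range t, M * (Y + A * Y) := by
        refine (Finset.abs_sum_le_sum_abs _ _).trans (Finset.sum_le_sum fun s hs => ?_)
        rw [Finset.mem_range] at hs
        rw [abs_mul]
        have := (abs_sub (G s) (K s)).trans (add_le_add (hG s hs) (hK s hs))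
        have := hF s hs
        gcongr
    _ = t * (M * (Y + A * Y)) := by simp
    _ ≤ _ := by gcongr

lemma fwd_phase (h : IsLinearTP T L ξ ℓ' Γ C f χ) {t : ℕ} (ht : t < T) (hL : 1 ≤ L)
    {M X N A c : ℝ} (hM : 1 ≤ M) (hB : Bd L t M Γ C) (hX : |ξ t| ≤ X)
    (hN : N = 2 * ((T : ℝ) + 2) ^ 2) (hA : A = 2 * N * M ^ 2)
    (hc : c = 2 * N * M + T * M * (1 + A)) :
    ∀ j : ℕ, j ≤ L →
      (∀ r : ℤ, -1 ≤ r → r < t → ∀ b, ∀ q : ℝ, 0 < q → q ≤ 1 →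
        |Γ t r false b ((j : ℝ) / L) q| ≤ X * Real.exp (c * ((j : ℝ) / L))) ∧
      (∀ s : ℕ, s < t → ∀ q : ℝ, 0 < q → q ≤ (j : ℝ) / L →
        |C t s false q| ≤ A * (X * Real.exp (c * q))) := by
  have hL' : (0 : ℝ) < L := by exact_mod_cast hL
  have hX0 : 0 ≤ X := (abs_nonneg _).trans hX
  have hN0 : 0 < N := by rw [hN]; positivity
  have hA0 : 0 ≤ A := by rw [hA]; positivity
  have hc0 : 0 < c := by rw [hc]; positivity
  intro j
  induction j with
  | zero =>
    intro _
    constructor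
    · intro r hr hrt b q hq hq1
      have := h.fwd_init t ht r hr hrt.le b q hq hq1
      simp only [Nat.cast_zero, zero_div, mul_zero, Real.exp_zero, mul_one]
      rw [this]
      split_ifs
      · exact hX
      · simpa using hX0
    · intro s _ q hq hq0
      simp at hq0
      linarith
  | succ j ih =>
    intro hj
    obtain ⟨ih1, ih2⟩ := ih (by omega)
    have hx := grid01 (j := j) hL (by omega)
    have hx' := grid01 (j := j + 1) hL hj
    set x : ℝ := (j : ℝ) / L with hxdef
    set Y : ℝ := X * Real.exp (c * x) with hY
    have hY0 : 0 ≤ Y := by positivity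
    have hCstep : ∀ s : ℕ, s < t → ∀ q : ℝ, x < q → q ≤ ((j + 1 : ℕ) : ℝ) / L →
        |C t s false q| ≤ A * Y := by
      intro s hs p hp hp1
      have e := h.fwd_C t ht s hs.le (j + 1) (by omega) hj p (by simpa using hp) hp1
      rw [e]
      refine le_trans (tri_bound T t s ht hs.le _ (M ^ 2 * Y + M * (A * Y) / c) (by positivity) ?_)
        (by rw [← hN]; exact ar1 N M A c Y hN0.le hM hA hc0
              (by rw [hc]; have : 0 ≤ T * M * (1 + A) := by positivity
                  linarith) hY0)
      intro t' s' ht' htt' hs' hss' b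
      have ex : (((j + 1 : ℕ) : ℝ) - 1) / L = x := by push_cast; rw [hxdef]; ring
      rw [ex]
      have hΓs : ∀ q : ℝ, 0 < q → q ≤ 1 → |Γ s s' false b x q| ≤ M := fun q hq hq1 =>
        hB.1 s hs s' hs' hss' false b j (by omega) q hq hq1
      rcases htt'.lt_or_eq with hlt | rfl
      · have : |∫ q in Ioc (0 : ℝ) 1, Γ t t' false b x q * C t' s' b q * Γ s s' false b x q|
            ≤ Y * M * M :=
          int_const _ _ fun q hq hq1 => mul3 (ih1 t' ht' hlt b q hq hq1)
            (Cprev h hM hB t' s' ht' hlt hs' (by omega) b hq hq1) (hΓs q hq hq1)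
        have h0 : 0 ≤ M * (A * Y) / c := by positivity
        nlinarith
      · have : |∫ q in Ioc (0 : ℝ) 1, Γ t t false b x q * C t s' b q * Γ s s' false b x q|
            ≤ (1 * (A * X) * M) * Real.exp (c * x) / c := by
          refine int_fwd _ _ c x hc0 (by positivity) hx.1 hx.2 ?_ ?_
          · intro q hq hqx
            have hq1 : q ≤ 1 := hqx.trans hx.2
            cases b
            · have hCs : |C t s' false q| ≤ A * (X * Real.exp (c * q)) := by
                rcases (by omega : s' = -1 ∨ 0 ≤ s') with rfl | hs0
                · rw [h.C_mixed t (by omega)]; simp; positivity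
                · lift s' to ℕ using hs0
                  exact ih2 s' (by omega) q hq hqx
              have := mul3 (diag_le h ht hL false false hq hq1 (j := j) (by omega)) hCs
                (hΓs q hq hq1)
              refine this.trans (le_of_eq (by ring))
            · rw [diag_fwd_zero h ht hL true hq hq1 (by omega) (Or.inl rfl)]
              simp; positivity
          · intro q hq hq1
            rw [diag_fwd_zero h ht hL b (hx.1.trans_lt hq) hq1 (by omega) (Or.inr hq)]
            simp
        have h0 : 0 ≤ M ^ 2 * Y := by positivity
        have h1 : (1 * (A * X) * M) * Real.exp (c * x) / c = M * (A * Y) / c := by rw [hY]; ring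
        linarith
    constructor
    · intro r hr hrt b q hq hq1
      have e := fwd_grid h ht (j := j) (by omega) hr hrt.le b hq hq1
      rw [if_neg (by omega), add_zero] at e
      push_cast
      rw [e]
      have hsum := sum_bd (T := T) t ht (fun s => Γ s r true b ((j + 1 : ℝ) / L) q)
        (fun s => Γ t (s : ℤ) false true x ((j + 1 : ℝ) / L))
        (fun s => C (t : ℤ) (s : ℤ) false ((j + 1 : ℝ) / L)) M Y A hY0 hA0 (by linarith)
        (by
          intro s hs
          rcases lt_or_ge (s : ℤ) r with h1 | h1
          · simp only [h.Γ_vanish s r h1, abs_zero]; linarith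
          · have := hB.1 s hs r hr h1 true b (j + 1) hj q hq hq1
            push_cast at this
            exact this)
        (by
          intro s hs
          refine ih1 s (by omega) (by omega) true _ (by positivity) ?_
          have := hx'.2
          push_cast at this
          exact this)
        (by
          intro s hs
          refine hCstep s hs _ ?_ ?_
          · rw [hxdef]; gcongr; linarith
          · push_cast; rfl)
      have hYY := ih1 r hr hrt b q hq hq1
      have h2 := ar2 L T M A c Y (by rw [hc]; have : 0 ≤ 2 * N * M := by positivity
                                     linarith) hY0
      have h3 : Y * Real.exp (c / L) = X * Real.exp (c * ((j + 1 : ℝ) / L)) := by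
        rw [hY, mul_assoc, ← Real.exp_add]; congr 2; rw [hxdef]; ring
      rw [← h3]
      refine le_trans ?_ h2
      refine (abs_add_le _ _).trans (add_le_add hYY ?_)
      rw [abs_mul, abs_of_nonneg (by positivity : (0 : ℝ) ≤ 1 / L)]
      exact mul_le_mul_of_nonneg_left hsum (by positivity)
    · intro s hs q hq hq1
      rcases le_or_gt q x with h1 | h1
      · exact ih2 s hs q hq h1
      · refine (hCstep s hs q h1 hq1).trans ?_
        rw [hY]
        gcongr

lemma bwd_phase (h : IsLinearTP T L ξ ℓ' Γ C f χ) {t : ℕ} (ht : t < T) (hL : 1 ≤ L)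
    {M X N A c : ℝ} (hM : 1 ≤ M) (hB : Bd L t M Γ C) (hX : |χ t| ≤ X)
    (hN : N = 2 * ((T : ℝ) + 2) ^ 2) (hA : A = 2 * N * M ^ 2)
    (hc : c = 2 * N * M + T * M * (1 + A)) :
    ∀ j : ℕ, j ≤ L →
      (∀ r : ℤ, -1 ≤ r → r < t → ∀ b, ∀ q : ℝ, 0 < q → q ≤ 1 →
        |Γ t r true b ((j : ℝ) / L) q| ≤ X * Real.exp (c * (1 - (j : ℝ) / L))) ∧
      (∀ s : ℕ, s < t → ∀ q : ℝ, (j : ℝ) / L < q → q ≤ 1 →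
        |C t s true q| ≤ A * (X * Real.exp (c * (1 - q)))) := by
  have hL' : (0 : ℝ) < L := by exact_mod_cast hL
  have hX0 : 0 ≤ X := (abs_nonneg _).trans hX
  have hN0 : 0 < N := by rw [hN]; positivity
  have hA0 : 0 ≤ A := by rw [hA]; positivity
  have hc0 : 0 < c := by rw [hc]; positivity
  refine desc_ind ?_ ?_
  · constructor
    · intro r hr hrt b q hq hq1
      have := h.bwd_init t ht r hr hrt.le b q hq hq1
      rw [div_self hL'.ne', this]
      simp only [sub_self, mul_zero, Real.exp_zero, mul_one]
      split_ifs
      · exact hX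
      · simpa using hX0
    · intro s _ q hq hq0
      rw [div_self hL'.ne'] at hq
      linarith
  · intro j hj ih
    obtain ⟨ih1, ih2⟩ := ih
    have hx := grid01 (j := j + 1) hL hj
    have hx' := grid01 (j := j) hL hj.le
    set x : ℝ := ((j + 1 : ℕ) : ℝ) / L with hxdef
    have hx2 : (j + 1 : ℝ) / L = x := by rw [hxdef]; push_cast; rfl
    have hx0 : 0 < x := by rw [← hx2]; positivity
    set Y : ℝ := X * Real.exp (c * (1 - x)) with hY
    have hY0 : 0 ≤ Y := by positivity
    have hCstep : ∀ s : ℕ, s < t → ∀ q : ℝ, (j : ℝ) / L < q → q ≤ x →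
        |C t s true q| ≤ A * Y := by
      intro s hs p hp hp1
      have e := h.bwd_C t ht s hs.le (j + 1) (by omega) hj p (by simpa using hp) hp1
      rw [e]
      refine le_trans (tri_bound T t s ht hs.le _ (M ^ 2 * Y + M * (A * Y) / c) (by positivity) ?_)
        (by rw [← hN]; exact ar1 N M A c Y hN0.le hM hA hc0
              (by rw [hc]; have : 0 ≤ T * M * (1 + A) := by positivity
                  linarith) hY0)
      intro t' s' ht' htt' hs' hss' b
      rw [← hxdef]
      have hΓs : ∀ q : ℝ, 0 < q → q ≤ 1 → |Γ s s' true b x q| ≤ M := fun q hq hq1 =>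
        hB.1 s hs s' hs' hss' true b (j + 1) (by omega) q hq hq1
      rcases htt'.lt_or_eq with hlt | rfl
      · have : |∫ q in Ioc (0 : ℝ) 1, Γ t t' true b x q * C t' s' b q * Γ s s' true b x q|
            ≤ Y * M * M :=
          int_const _ _ fun q hq hq1 => mul3 (ih1 t' ht' hlt b q hq hq1)
            (Cprev h hM hB t' s' ht' hlt hs' (by omega) b hq hq1) (hΓs q hq hq1)
        have h0 : 0 ≤ M * (A * Y) / c := by positivity
        nlinarith
      · have : |∫ q in Ioc (0 : ℝ) 1, Γ t t true b x q * C t s' b q * Γ s s' true b x q|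
            ≤ (1 * (A * X) * M) * Real.exp (c * (1 - x)) / c := by
          refine int_bwd _ _ c x hc0 (by positivity) hx.1 hx.2 ?_ ?_
          · intro q hqx hq1
            have hq : 0 < q := hx.1.trans_lt hqx
            cases b
            · rw [diag_bwd_zero h ht hL false hq hq1 (by omega) (Or.inl rfl)]
              simp; positivity
            · have hCs : |C t s' true q| ≤ A * (X * Real.exp (c * (1 - q))) := by
                rcases (by omega : s' = -1 ∨ 0 ≤ s') with rfl | hs0
                · rw [h.C_mixed t (by omega)]; simp; positivity
                · lift s' to ℕ using hs0
                  exact ih2 s' (by omega) q hqx hq1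
              have := mul3 (diag_le h ht hL true true hq hq1 (j := j + 1) (by omega)) hCs
                (hΓs q hq hq1)
              refine this.trans (le_of_eq (by ring))
          · intro q hq hqx
            rw [diag_bwd_zero h ht hL b hq (hqx.trans hx.2) (by omega) (Or.inr hqx)]
            simp
        have h0 : 0 ≤ M ^ 2 * Y := by positivity
        have h1 : (1 * (A * X) * M) * Real.exp (c * (1 - x)) / c = M * (A * Y) / c := by
          rw [hY]; ring
        linarith
    constructor
    · intro r hr hrt b q hq hq1
      have e := bwd_grid h ht (j := j) (by omega) hr hrt.le b hq hq1
      rw [if_neg (by omega), add_zero, hx2] at e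
      rw [e]
      have hsum := sum_bd (T := T) t ht (fun s => Γ s r false b ((j : ℝ) / L) q)
        (fun s => Γ t (s : ℤ) true false x x)
        (fun s => C (t : ℤ) (s : ℤ) true x) M Y A hY0 hA0 (by linarith)
        (by
          intro s hs
          rcases lt_or_ge (s : ℤ) r with h1 | h1
          · simp only [h.Γ_vanish s r h1, abs_zero]; linarith
          · exact hB.1 s hs r hr h1 false b j hj.le q hq hq1)
        (by
          intro s hs
          exact ih1 s (by omega) (by omega) false _ hx0 hx.2)
        (by
          intro s hs
          refine hCstep s hs _ ?_ le_rfl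
          rw [← hx2]; gcongr; linarith)
      have hYY := ih1 r hr hrt b q hq hq1
      have h2 := ar2 L T M A c Y (by rw [hc]; have : 0 ≤ 2 * N * M := by positivity
                                     linarith) hY0
      have h3 : Y * Real.exp (c / L) = X * Real.exp (c * (1 - (j : ℝ) / L)) := by
        rw [hY, mul_assoc, ← Real.exp_add]; congr 2; rw [← hx2]; ring
      rw [← h3]
      refine le_trans ?_ h2
      refine (abs_add_le _ _).trans (add_le_add hYY ?_)
      rw [abs_mul, abs_of_nonneg (by positivity : (0 : ℝ) ≤ 1 / L)]
      exact mul_le_mul_of_nonneg_left hsum (by positivity)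
    · intro s hs q hq hq1
      rcases lt_or_ge x q with h1 | h1
      · exact ih2 s hs q h1 hq1
      · refine (hCstep s hs q hq h1).trans ?_
        rw [hY]
        gcongr

/-- Bounds at the current time `t`, except for the diagonal covariance. -/
def Bd1 (L t : ℕ) (M : ℝ) (Γ : ℕ → ℤ → Bool → Bool → ℝ → ℝ → ℝ) (C : ℤ → ℤ → Bool → ℝ → ℝ) : Prop :=
  (∀ r : ℤ, -1 ≤ r → r ≤ t → ∀ a b : Bool, ∀ j : ℕ, j ≤ L →
    ∀ q : ℝ, 0 < q → q ≤ 1 → |Γ t r a b ((j : ℝ) / L) q| ≤ M) ∧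
  (∀ s' : ℕ, s' < t → ∀ a : Bool, ∀ p : ℝ, 0 < p → p ≤ 1 → |C t s' a p| ≤ M)

lemma Cprev1 (h : IsLinearTP T L ξ ℓ' Γ C f χ) {t : ℕ} {M : ℝ} (hM : 1 ≤ M) (hB : Bd L t M Γ C)
    (hB1 : Bd1 L t M Γ C)
    (t' s' : ℤ) (ht : -1 ≤ t') (htn : t' ≤ t) (hs : -1 ≤ s') (hsn : s' ≤ t)
    (hne : ¬ (t' = t ∧ s' = t)) (b : Bool)
    {p : ℝ} (hp : 0 < p) (hp1 : p ≤ 1) : |C t' s' b p| ≤ M := by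
  have key : ∀ s' : ℤ, -1 ≤ s' → s' < t → |C t s' b p| ≤ M := by
    intro s' hs hst
    rcases (by omega : s' = -1 ∨ 0 ≤ s') with rfl | hs0
    · rw [h.C_mixed t (by omega)]; simp; linarith
    · lift s' to ℕ using hs0
      exact hB1.2 s' (by omega) b p hp hp1
  rcases htn.lt_or_eq with h1 | h1
  · rcases hsn.lt_or_eq with h2 | h2
    · exact Cprev h hM hB t' s' ht h1 hs h2 b hp hp1
    · rw [h.C_symm, h2]
      exact key t' ht h1
  · rw [h1]
    exact key s' hs (by omega)

lemma diag_fwd_phase (h : IsLinearTP T L ξ ℓ' Γ C f χ) {t : ℕ} (ht : t < T) (hL : 1 ≤ L)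
    {M N A c : ℝ} (hM : 1 ≤ M) (hB : Bd L t M Γ C) (hB1 : Bd1 L t M Γ C)
    (hN : N = 2 * ((T : ℝ) + 2) ^ 2) (hA : A = 2 * N * M ^ 2)
    (hc : c = 2 * N * M + T * M * (1 + A)) :
    ∀ j : ℕ, j ≤ L → ∀ q : ℝ, 0 < q → q ≤ (j : ℝ) / L →
        |C t t false q| ≤ A * (M * Real.exp (c * q)) := by
  have hL' : (0 : ℝ) < L := by exact_mod_cast hL
  have hN0 : 0 < N := by rw [hN]; positivity
  have hA0 : 0 ≤ A := by rw [hA]; positivity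
  have hc0 : 0 < c := by rw [hc]; positivity
  intro j
  induction j with
  | zero =>
    intro _ q hq hq0
    simp at hq0
    linarith
  | succ j ih =>
    intro hj p hp0 hp1
    have ih2 := ih (by omega)
    have hx := grid01 (j := j) hL (by omega)
    set x : ℝ := (j : ℝ) / L with hxdef
    set Y : ℝ := M * Real.exp (c * x) with hY
    have hY0 : 0 ≤ Y := by positivity
    have hYM : M ≤ Y := by
      rw [hY]
      have : 1 ≤ Real.exp (c * x) := Real.one_le_exp (mul_nonneg hc0.le hx.1)
      nlinarith
    rcases le_or_gt p x with hp | hp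
    · exact ih2 p hp0 hp
    refine le_trans (b := A * Y) ?_ (by rw [hY]; gcongr)
    have e := h.fwd_C t ht t le_rfl (j + 1) (by omega) hj p (by simpa using hp) hp1
    rw [e]
    refine le_trans (tri_bound T t t ht le_rfl _ (M ^ 2 * Y + M * (A * Y) / c) (by positivity) ?_)
      (by rw [← hN]; exact ar1 N M A c Y hN0.le hM hA hc0
            (by rw [hc]; have : 0 ≤ T * M * (1 + A) := by positivity
                linarith) hY0)
    intro t' s' ht' htt' hs' hss' b
    have ex : (((j + 1 : ℕ) : ℝ) - 1) / L = x := by push_cast; rw [hxdef]; ring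
    rw [ex]
    by_cases hne : t' = t ∧ s' = t
    · obtain ⟨rfl, rfl⟩ := hne
      have : |∫ q in Ioc (0 : ℝ) 1, Γ t t false b x q * C t t b q * Γ t t false b x q|
          ≤ (A * M) * Real.exp (c * x) / c := by
        refine int_fwd _ _ c x hc0 (by positivity) hx.1 hx.2 ?_ ?_
        · intro q hq hqx
          have hq1 : q ≤ 1 := hqx.trans hx.2
          cases b
          · have hd := diag_le h ht hL false false hq hq1 (j := j) (by omega)
            exact (mul3 hd (ih2 q hq hqx) hd).trans (le_of_eq (by ring))
          · rw [diag_fwd_zero h ht hL true hq hq1 (by omega) (Or.inl rfl)]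
            simp; positivity
        · intro q hq hq1
          rw [diag_fwd_zero h ht hL b (hx.1.trans_lt hq) hq1 (by omega) (Or.inr hq)]
          simp
      have h0 : 0 ≤ M ^ 2 * Y := by positivity
      have h1 : (A * M) * Real.exp (c * x) / c = (A * Y) / c := by rw [hY]; ring
      have h2 : (A * Y) / c ≤ M * (A * Y) / c := by
        refine div_le_div_of_nonneg_right ?_ hc0.le
        exact le_mul_of_one_le_left (by positivity) hM
      linarith
    · have : |∫ q in Ioc (0 : ℝ) 1, Γ t t' false b x q * C t' s' b q * Γ t s' false b x q|
          ≤ M * M * M :=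
        int_const _ _ fun q hq hq1 => mul3
          (hB1.1 t' ht' htt' false b j (by omega) q hq hq1)
          (Cprev1 h hM hB hB1 t' s' ht' htt' hs' hss' hne b hq hq1)
          (hB1.1 s' hs' hss' false b j (by omega) q hq hq1)
      have h0 : 0 ≤ M * (A * Y) / c := by positivity
      have h1 : M * M * M ≤ M ^ 2 * Y := by rw [← sq]; gcongr
      linarith

lemma diag_bwd_phase (h : IsLinearTP T L ξ ℓ' Γ C f χ) {t : ℕ} (ht : t < T) (hL : 1 ≤ L)
    {M N A c : ℝ} (hM : 1 ≤ M) (hB : Bd L t M Γ C) (hB1 : Bd1 L t M Γ C)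
    (hN : N = 2 * ((T : ℝ) + 2) ^ 2) (hA : A = 2 * N * M ^ 2)
    (hc : c = 2 * N * M + T * M * (1 + A)) :
    ∀ j : ℕ, j ≤ L → ∀ q : ℝ, (j : ℝ) / L < q → q ≤ 1 →
        |C t t true q| ≤ A * (M * Real.exp (c * (1 - q))) := by
  have hL' : (0 : ℝ) < L := by exact_mod_cast hL
  have hN0 : 0 < N := by rw [hN]; positivity
  have hA0 : 0 ≤ A := by rw [hA]; positivity
  have hc0 : 0 < c := by rw [hc]; positivity
  refine desc_ind ?_ ?_
  · intro q hq hq0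
    rw [div_self hL'.ne'] at hq
    linarith
  · intro j hj ih2 p hp0 hp1
    have hx := grid01 (j := j + 1) hL hj
    set x : ℝ := ((j + 1 : ℕ) : ℝ) / L with hxdef
    set Y : ℝ := M * Real.exp (c * (1 - x)) with hY
    have hY0 : 0 ≤ Y := by positivity
    have hYM : M ≤ Y := by
      rw [hY]
      have : 1 ≤ Real.exp (c * (1 - x)) := Real.one_le_exp (mul_nonneg hc0.le (by linarith [hx.2]))
      nlinarith
    rcases lt_or_ge x p with hp | hp
    · exact ih2 p hp hp1
    refine le_trans (b := A * Y) ?_ (by rw [hY]; gcongr)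
    have e := h.bwd_C t ht t le_rfl (j + 1) (by omega) hj p (by simpa using hp0) hp
    rw [e]
    refine le_trans (tri_bound T t t ht le_rfl _ (M ^ 2 * Y + M * (A * Y) / c) (by positivity) ?_)
      (by rw [← hN]; exact ar1 N M A c Y hN0.le hM hA hc0
            (by rw [hc]; have : 0 ≤ T * M * (1 + A) := by positivity
                linarith) hY0)
    intro t' s' ht' htt' hs' hss' b
    rw [← hxdef]
    by_cases hne : t' = t ∧ s' = t
    · obtain ⟨rfl, rfl⟩ := hne
      have : |∫ q in Ioc (0 : ℝ) 1, Γ t t true b x q * C t t b q * Γ t t true b x q|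
          ≤ (A * M) * Real.exp (c * (1 - x)) / c := by
        refine int_bwd _ _ c x hc0 (by positivity) hx.1 hx.2 ?_ ?_
        · intro q hqx hq1
          have hq : 0 < q := hx.1.trans_lt hqx
          cases b
          · rw [diag_bwd_zero h ht hL false hq hq1 (by omega) (Or.inl rfl)]
            simp; positivity
          · have hd := diag_le h ht hL true true hq hq1 (j := j + 1) (by omega)
            exact (mul3 hd (ih2 q hqx hq1) hd).trans (le_of_eq (by ring))
        · intro q hq hqx
          rw [diag_bwd_zero h ht hL b hq (hqx.trans hx.2) (by omega) (Or.inr hqx)]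
          simp
      have h0 : 0 ≤ M ^ 2 * Y := by positivity
      have h1 : (A * M) * Real.exp (c * (1 - x)) / c = (A * Y) / c := by rw [hY]; ring
      have h2 : (A * Y) / c ≤ M * (A * Y) / c := by
        refine div_le_div_of_nonneg_right ?_ hc0.le
        exact le_mul_of_one_le_left (by positivity) hM
      linarith
    · have : |∫ q in Ioc (0 : ℝ) 1, Γ t t' true b x q * C t' s' b q * Γ t s' true b x q|
          ≤ M * M * M :=
        int_const _ _ fun q hq hq1 => mul3
          (hB1.1 t' ht' htt' true b (j + 1) (by omega) q hq hq1)
          (Cprev1 h hM hB hB1 t' s' ht' htt' hs' hss' hne b hq hq1)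
          (hB1.1 s' hs' hss' true b (j + 1) (by omega) q hq hq1)
      have h0 : 0 ≤ M * (A * Y) / c := by positivity
      have h1 : M * M * M ≤ M ^ 2 * Y := by rw [← sq]; gcongr
      linarith

lemma Bd.mono {n : ℕ} {M M' : ℝ} (hMM : M ≤ M') (hB : Bd L n M Γ C) : Bd L n M' Γ C :=
  ⟨fun s hs r h1 h2 a b j hj q hq hq1 => (hB.1 s hs r h1 h2 a b j hj q hq hq1).trans hMM,
   fun s hs s' hs' a p hp hp1 => (hB.2 s hs s' hs' a p hp hp1).trans hMM⟩

end

lemma bound_all (T : ℕ) (ξ : ℕ → ℝ) (ℓ' : ℕ → ℝ → ℝ)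
    (hcont : ∀ t : ℕ, Continuous (ℓ' t))
    (Γ : ℕ → ℕ → ℤ → Bool → Bool → ℝ → ℝ → ℝ)
    (C : ℕ → ℤ → ℤ → Bool → ℝ → ℝ)
    (f χ : ℕ → ℕ → ℝ)
    (hTP : ∀ L : ℕ, 1 ≤ L → IsLinearTP T L ξ ℓ' (Γ L) (C L) (f L) (χ L)) :
    ∀ n : ℕ, n ≤ T → ∃ M : ℝ, 1 ≤ M ∧ ∀ L : ℕ, 1 ≤ L → Bd L n M (Γ L) (C L) := by
  intro n
  induction n with
  | zero => intro _; exact ⟨1, le_rfl, fun L _ => ⟨fun s hs => by omega, fun s hs => by omega⟩⟩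
  | succ t ih =>
    intro htT
    have ht : t < T := by omega
    obtain ⟨M, hM, hB⟩ := ih (by omega)
    obtain ⟨N, hN⟩ : ∃ N : ℝ, N = 2 * ((T : ℝ) + 2) ^ 2 := ⟨_, rfl⟩
    obtain ⟨A, hA⟩ : ∃ A : ℝ, A = 2 * N * M ^ 2 := ⟨_, rfl⟩
    obtain ⟨c, hc⟩ : ∃ c : ℝ, c = 2 * N * M + T * M * (1 + A) := ⟨_, rfl⟩
    have hN0 : 0 < N := by rw [hN]; positivity
    have hA0 : 0 ≤ A := by rw [hA]; positivity
    have hc0 : 0 < c := by rw [hc]; positivity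
    set X : ℝ := |ξ t| with hX
    have hX0 : 0 ≤ X := abs_nonneg _
    obtain ⟨X', hX'⟩ := (isCompact_Icc (a := -(X * Real.exp c)) (b := X * Real.exp c)).exists_bound_of_continuousOn
      (hcont t).continuousOn
    have hX'0 : 0 ≤ X' := (norm_nonneg _).trans (hX' 0 ⟨by simp; positivity, by positivity⟩)
    have hχ : ∀ L : ℕ, 1 ≤ L → |χ L t| ≤ X' := by
      intro L hL
      have hL' : (0 : ℝ) < L := by exact_mod_cast hL
      have h := hTP L hL
      rw [h.χ_def t ht]
      apply hX'
      rw [h.f_def t ht]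
      have := (fwd_phase h ht hL hM (hB L hL) le_rfl hN hA hc L le_rfl).1 (-1) le_rfl (by omega)
        true 1 one_pos le_rfl
      rw [div_self hL'.ne', mul_one] at this
      exact abs_le.1 this
    obtain ⟨M1, hM1⟩ : ∃ M1 : ℝ, M1 = M + (1 + A) * (X * Real.exp c) + (1 + A) * (X' * Real.exp c) :=
      ⟨_, rfl⟩
    have p1 : 0 ≤ X * Real.exp c := by positivity
    have p2 : 0 ≤ X' * Real.exp c := by positivity
    have p3 : 0 ≤ A * (X * Real.exp c) := by positivity
    have p4 : 0 ≤ A * (X' * Real.exp c) := by positivity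
    have hMM1 : M ≤ M1 := by rw [hM1]; linarith
    have hM11 : 1 ≤ M1 := hM.trans hMM1
    have hB1 : ∀ L : ℕ, 1 ≤ L → Bd1 L t M1 (Γ L) (C L) := by
      intro L hL
      have hL' : (0 : ℝ) < L := by exact_mod_cast hL
      have h := hTP L hL
      have F := fwd_phase h ht hL hM (hB L hL) le_rfl hN hA hc
      have G := bwd_phase h ht hL hM (hB L hL) (hχ L hL) hN hA hc
      constructor
      · intro r hr hrt a b j hj q hq hq1
        rcases hrt.lt_or_eq with hlt | rfl
        · have hg := grid01 hL hj
          cases a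
          · refine ((F j hj).1 r hr hlt b q hq hq1).trans ?_
            have : X * Real.exp (c * ((j : ℝ) / L)) ≤ X * Real.exp c := by
              gcongr; nlinarith
            linarith
          · refine ((G j hj).1 r hr hlt b q hq hq1).trans ?_
            have : X' * Real.exp (c * (1 - (j : ℝ) / L)) ≤ X' * Real.exp c := by
              gcongr; nlinarith
            linarith
        · exact (diag_le h ht hL a b hq hq1 hj).trans hM11
      · intro s hs a p hp hp1
        cases a
        · refine ((F L le_rfl).2 s hs p hp (by rwa [div_self hL'.ne'])).trans ?_
          have : A * (X * Real.exp (c * p)) ≤ A * (X * Real.exp c) := by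
            gcongr; nlinarith
          linarith
        · refine ((G 0 (by omega)).2 s hs p (by simpa using hp) hp1).trans ?_
          have : A * (X' * Real.exp (c * (1 - p))) ≤ A * (X' * Real.exp c) := by
            gcongr; nlinarith
          linarith
    obtain ⟨A1, hA1⟩ : ∃ A1 : ℝ, A1 = 2 * N * M1 ^ 2 := ⟨_, rfl⟩
    obtain ⟨c1, hc1⟩ : ∃ c1 : ℝ, c1 = 2 * N * M1 + T * M1 * (1 + A1) := ⟨_, rfl⟩
    have hA10 : 0 ≤ A1 := by rw [hA1]; positivity
    have hc10 : 0 < c1 := by rw [hc1]; positivity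
    have p5 : 0 ≤ A1 * (M1 * Real.exp c1) := by positivity
    refine ⟨M1 + A1 * (M1 * Real.exp c1), by linarith, fun L hL => ?_⟩
    have hL' : (0 : ℝ) < L := by exact_mod_cast hL
    have h := hTP L hL
    have hBL := (hB L hL).mono hMM1
    have F := diag_fwd_phase h ht hL hM11 hBL (hB1 L hL) hN hA1 hc1
    have G := diag_bwd_phase h ht hL hM11 hBL (hB1 L hL) hN hA1 hc1
    constructor
    · intro s hs r hr hrs a b j hj q hq hq1
      rcases Nat.lt_succ_iff_lt_or_eq.1 hs with hlt | rfl
      · exact (hBL.1 s hlt r hr hrs a b j hj q hq hq1).trans (by linarith)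
      · exact ((hB1 L hL).1 r hr hrs a b j hj q hq hq1).trans (by linarith)
    · intro s hs s' hs' a p hp hp1
      rcases Nat.lt_succ_iff_lt_or_eq.1 hs with hlt | rfl
      · exact (hBL.2 s hlt s' hs' a p hp hp1).trans (by linarith)
      · rcases hs'.lt_or_eq with hlt | rfl
        · exact ((hB1 L hL).2 s' hlt a p hp hp1).trans (by linarith)
        · cases a
          · refine (F L le_rfl p hp (by rwa [div_self hL'.ne'])).trans ?_
            have : A1 * (M1 * Real.exp (c1 * p)) ≤ A1 * (M1 * Real.exp c1) := by
              gcongr; nlinarith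
            linarith
          · refine (G 0 (by omega) p (by simpa using hp) hp1).trans ?_
            have : A1 * (M1 * Real.exp (c1 * (1 - p))) ≤ A1 * (M1 * Real.exp c1) := by
              gcongr; nlinarith
            linarith

/-- Sum over the grid of the increments in the second argument. -/
lemma delta_bound (T : ℕ) (M : ℝ) (hM : 1 ≤ M) : ∀ n : ℕ, n ≤ T → ∃ K : ℝ, 1 ≤ K ∧
    ∀ (L : ℕ) (ξ : ℕ → ℝ) (ℓ' : ℕ → ℝ → ℝ) (Γ : ℕ → ℤ → Bool → Bool → ℝ → ℝ → ℝ)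
      (C : ℤ → ℤ → Bool → ℝ → ℝ) (f χ : ℕ → ℝ), 1 ≤ L → IsLinearTP T L ξ ℓ' Γ C f χ →
      Bd L T M Γ C → ∀ m : ℕ, 1 ≤ m → m + 1 ≤ L → ∀ s : ℕ, s < n → ∀ r : ℤ, -1 ≤ r → ∀ a b : Bool,
      (∑ j ∈ Finset.range (L + 1), |Γ s r a b ((j : ℝ) / L) ((m + 1 : ℝ) / L)
          - Γ s r a b ((j : ℝ) / L) ((m : ℝ) / L)| ≤ K) ∧
      (r < s → ∀ j : ℕ, j ≤ L → |Γ s r a b ((j : ℝ) / L) ((m + 1 : ℝ) / L)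
          - Γ s r a b ((j : ℝ) / L) ((m : ℝ) / L)| ≤ K / L) := by
  intro n
  induction n with
  | zero => intro _; exact ⟨1, le_rfl, by intros; omega⟩
  | succ t ih =>
    intro hn
    have ht : t < T := by omega
    obtain ⟨K, hK, H⟩ := ih (by omega)
    set D : ℝ := T * (K * (2 * M)) with hD
    have hD0 : 0 ≤ D := by positivity
    refine ⟨K + 2 * D, by linarith, ?_⟩
    intro L ξ ℓ' Γ C f χ hL h hB m hm hmL s hs r hr a b
    have hL' : (0 : ℝ) < L := by exact_mod_cast hL
    have hL1 : (1 : ℝ) ≤ L := by exact_mod_cast hL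
    rcases Nat.lt_succ_iff_lt_or_eq.1 hs with hlt | rfl
    · obtain ⟨h1, h2⟩ := H L ξ ℓ' Γ C f χ hL h hB m hm hmL s hlt r hr a b
      refine ⟨by linarith, fun hrs j hj => (h2 hrs j hj).trans ?_⟩
      gcongr
      linarith
    have hq := grid01 hL (by omega : m ≤ L)
    have hq' := grid01 hL hmL
    have hm0 : (0 : ℝ) < m := by exact_mod_cast hm
    set q : ℝ := (m : ℝ) / L with hqd
    push_cast at hq'
    set q' : ℝ := (m + 1 : ℝ) / L with hqd'
    have hq0 : 0 < q := by positivity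
    have hq0' : 0 < q' := by positivity
    rcases lt_trichotomy r (s : ℤ) with hrs | rfl | hrs
    · -- the main case
      have hstepsum : ∀ (a' : Bool) (w : ℕ → ℕ), (∀ i < L, w i ≤ L) →
          (∀ i < L, ∀ i' < L, w i = w i' → i = i') →
          ∀ E : ℕ → ℕ → ℝ, (∀ i < L, ∀ u < s, |E i u| ≤ 2 * M) →
          ∑ i ∈ Finset.range L, |∑ u ∈ Finset.range s,
            (Γ u r a' b ((w i : ℝ) / L) q' - Γ u r a' b ((w i : ℝ) / L) q) * E i u| ≤ D := by
        intro a' w hw hinj E hE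
        calc _ ≤ ∑ i ∈ Finset.range L, ∑ u ∈ Finset.range s,
              |Γ u r a' b ((w i : ℝ) / L) q' - Γ u r a' b ((w i : ℝ) / L) q| * (2 * M) := by
              refine Finset.sum_le_sum fun i hi => (Finset.abs_sum_le_sum_abs _ _).trans
                (Finset.sum_le_sum fun u hu => ?_)
              rw [Finset.mem_range] at hi hu
              rw [abs_mul]
              have := hE i hi u hu
              gcongr
          _ = ∑ u ∈ Finset.range s, (∑ i ∈ Finset.range L,
              |Γ u r a' b ((w i : ℝ) / L) q' - Γ u r a' b ((w i : ℝ) / L) q|) * (2 * M) := by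
              rw [Finset.sum_comm]
              simp_rw [Finset.sum_mul]
          _ ≤ ∑ u ∈ Finset.range s, K * (2 * M) := by
              refine Finset.sum_le_sum fun u hu => ?_
              rw [Finset.mem_range] at hu
              refine mul_le_mul_of_nonneg_right ?_ (by linarith)
              refine le_trans ?_ (H L ξ ℓ' Γ C f χ hL h hB m hm hmL u hu r hr a' b).1
              rw [← Finset.sum_image (s := Finset.range L) (g := w)
                (f := fun j : ℕ => |Γ u r a' b ((j : ℝ) / L) q' - Γ u r a' b ((j : ℝ) / L) q|)]
              · refine Finset.sum_le_sum_of_subset_of_nonneg ?_ fun _ _ _ => abs_nonneg _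
                intro j hj
                obtain ⟨i, hi, rfl⟩ := Finset.mem_image.1 hj
                have := hw i (Finset.mem_range.1 hi)
                exact Finset.mem_range.2 (by omega)
              · intro i hi i' hi' hii
                exact hinj i (by simpa using hi) i' (by simpa using hi') hii
          _ = s * (K * (2 * M)) := by simp
          _ ≤ D := by
              rw [hD]
              gcongr
      have main : ∀ j : ℕ, j ≤ L → |Γ s r a b ((j : ℝ) / L) q' - Γ s r a b ((j : ℝ) / L) q|
          ≤ D / L := by
        cases a
        · set E : ℕ → ℕ → ℝ := fun i u => Γ s (u : ℤ) false true ((i : ℝ) / L) ((i + 1 : ℝ) / L)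
                  - C (s : ℤ) (u : ℤ) false ((i + 1 : ℝ) / L) with hE
          set S : ℕ → ℝ := fun i => |∑ u ∈ Finset.range s,
            (Γ u r true b (((i + 1 : ℕ) : ℝ) / L) q' - Γ u r true b (((i + 1 : ℕ) : ℝ) / L) q)
              * E i u| with hS
          have hsum : ∑ i ∈ Finset.range L, S i ≤ D := by
            refine hstepsum true (fun i => i + 1) (fun i hi => hi) (fun i _ i' _ e => by simpa using e)
              E ?_
            intro i hi u hu
            have hg := grid01 hL (by omega : i + 1 ≤ L)
            push_cast at hg
            have e1 := hB.1 s ht u (by omega) (by omega) false true i hi.le ((i + 1 : ℝ) / L)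
              (by positivity) hg.2
            have e2 := hB.2 s ht u hu.le false ((i + 1 : ℝ) / L) (by positivity) hg.2
            have := abs_sub (Γ s (u : ℤ) false true ((i : ℝ) / L) ((i + 1 : ℝ) / L))
              (C (s : ℤ) (u : ℤ) false ((i + 1 : ℝ) / L))
            rw [hE]; linarith
          have part : ∀ j : ℕ, j ≤ L → |Γ s r false b ((j : ℝ) / L) q'
              - Γ s r false b ((j : ℝ) / L) q| ≤ 1 / (L : ℝ) * ∑ i ∈ Finset.range j, S i := by
            intro j
            induction j with
            | zero =>
              intro _
              have e1 := h.fwd_init s ht r hr hrs.le b q hq0 hq.2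
              have e2 := h.fwd_init s ht r hr hrs.le b q' hq0' hq'.2
              simp [e1, e2]
            | succ j ihj =>
              intro hj
              have e1 := fwd_grid h ht (j := j) (by omega) hr hrs.le b hq0 hq.2
              have e2 := fwd_grid h ht (j := j) (by omega) hr hrs.le b hq0' hq'.2
              rw [if_neg (by omega), add_zero] at e1 e2
              have key : Γ s r false b (((j + 1 : ℕ) : ℝ) / L) q'
                  - Γ s r false b (((j + 1 : ℕ) : ℝ) / L) q
                  = (Γ s r false b ((j : ℝ) / L) q' - Γ s r false b ((j : ℝ) / L) q)
                  + 1 / (L : ℝ) * ∑ u ∈ Finset.range s,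
                    (Γ u r true b (((j + 1 : ℕ) : ℝ) / L) q'
                      - Γ u r true b (((j + 1 : ℕ) : ℝ) / L) q) * E j u := by
                push_cast
                rw [e1, e2]
                simp_rw [sub_mul]
                rw [Finset.sum_sub_distrib]
                ring
              rw [key, Finset.sum_range_succ, mul_add]
              refine (abs_add_le _ _).trans (add_le_add (ihj (by omega)) ?_)
              rw [abs_mul, abs_of_nonneg (by positivity : (0 : ℝ) ≤ 1 / L)]
          intro j hj
          refine (part j hj).trans ?_
          rw [div_eq_mul_one_div D, mul_comm D]
          refine mul_le_mul_of_nonneg_left (le_trans ?_ hsum) (by positivity)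
          refine Finset.sum_le_sum_of_subset_of_nonneg ?_ fun _ _ _ => abs_nonneg _
          exact Finset.range_subset_range.2 hj
        · set E : ℕ → ℕ → ℝ := fun i u => Γ s (u : ℤ) true false ((i + 1 : ℝ) / L) ((i + 1 : ℝ) / L)
                  - C (s : ℤ) (u : ℤ) true ((i + 1 : ℝ) / L) with hE
          set S : ℕ → ℝ := fun i => |∑ u ∈ Finset.range s,
            (Γ u r false b ((i : ℝ) / L) q' - Γ u r false b ((i : ℝ) / L) q)
              * E i u| with hS
          have hsum : ∑ i ∈ Finset.range L, S i ≤ D := by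
            refine hstepsum false (fun i => i) (fun i hi => hi.le) (fun i _ i' _ e => e)
              E ?_
            intro i hi u hu
            have hg := grid01 hL (by omega : i + 1 ≤ L)
            push_cast at hg
            have e1 := hB.1 s ht u (by omega) (by omega) true false (i + 1) hi ((i + 1 : ℝ) / L)
              (by positivity) hg.2
            push_cast at e1
            have e2 := hB.2 s ht u hu.le true ((i + 1 : ℝ) / L) (by positivity) hg.2
            have := abs_sub (Γ s (u : ℤ) true false ((i + 1 : ℝ) / L) ((i + 1 : ℝ) / L))
              (C (s : ℤ) (u : ℤ) true ((i + 1 : ℝ) / L))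
            rw [hE]; linarith
          have part : ∀ j : ℕ, j ≤ L → |Γ s r true b ((j : ℝ) / L) q'
              - Γ s r true b ((j : ℝ) / L) q| ≤ 1 / (L : ℝ) * ∑ i ∈ Finset.Ico j L, S i := by
            refine desc_ind ?_ ?_
            · have e1 := h.bwd_init s ht r hr hrs.le b q hq0 hq.2
              have e2 := h.bwd_init s ht r hr hrs.le b q' hq0' hq'.2
              rw [div_self hL'.ne', e1, e2]
              simp
            · intro j hj ihj
              have e1 := bwd_grid h ht (j := j) (by omega) hr hrs.le b hq0 hq.2
              have e2 := bwd_grid h ht (j := j) (by omega) hr hrs.le b hq0' hq'.2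
              rw [if_neg (by omega), add_zero] at e1 e2
              have key : Γ s r true b ((j : ℝ) / L) q' - Γ s r true b ((j : ℝ) / L) q
                  = (Γ s r true b (((j + 1 : ℕ) : ℝ) / L) q'
                    - Γ s r true b (((j + 1 : ℕ) : ℝ) / L) q)
                  + 1 / (L : ℝ) * ∑ u ∈ Finset.range s,
                    (Γ u r false b ((j : ℝ) / L) q'
                      - Γ u r false b ((j : ℝ) / L) q) * E j u := by
                push_cast
                rw [e1, e2]
                simp_rw [sub_mul]
                rw [Finset.sum_sub_distrib]
                ring
              rw [key, Finset.sum_eq_sum_Ico_succ_bot hj, add_comm (S j), mul_add]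
              refine (abs_add_le _ _).trans (add_le_add ihj ?_)
              rw [abs_mul, abs_of_nonneg (by positivity : (0 : ℝ) ≤ 1 / L)]
          intro j hj
          refine (part j hj).trans ?_
          rw [div_eq_mul_one_div D, mul_comm D]
          refine mul_le_mul_of_nonneg_left (le_trans ?_ hsum) (by positivity)
          refine Finset.sum_le_sum_of_subset_of_nonneg ?_ fun _ _ _ => abs_nonneg _
          intro i hi
          rw [Finset.mem_Ico] at hi
          exact Finset.mem_range.2 hi.2
      refine ⟨?_, fun _ j hj => (main j hj).trans ?_⟩
      · calc _ ≤ ∑ j ∈ Finset.range (L + 1), D / L :=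
              Finset.sum_le_sum fun j hj => main j (by rw [Finset.mem_range] at hj; omega)
          _ = (L + 1) * (D / L) := by simp
          _ = D + D / L := by field_simp
          _ ≤ D + D := by gcongr; exact div_le_self hD0 hL1
          _ ≤ _ := by linarith
      · gcongr
        linarith
    · -- diagonal
      refine ⟨?_, fun hh => absurd hh (lt_irrefl _)⟩
      have c1 : ⌈(L : ℝ) * q⌉ = (m : ℤ) := by
        rw [hqd, mul_div_cancel₀ _ hL'.ne']; simp
      have c2 : ⌈(L : ℝ) * q'⌉ = (m : ℤ) + 1 := by
        rw [hqd', mul_div_cancel₀ _ hL'.ne']; simp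
      calc _ ≤ ∑ j ∈ Finset.range (L + 1), (if j = m then (1 : ℝ) else 0) := by
            refine Finset.sum_le_sum fun j hj => ?_
            have hj : j ≤ L := by rw [Finset.mem_range] at hj; omega
            cases a
            · rw [diag_fwd h ht hL b hq0 hq.2 j hj, diag_fwd h ht hL b hq0' hq'.2 j hj, c1, c2]
              cases b <;> simp <;> split_ifs <;> first | omega | simp
            · rw [diag_bwd h ht hL b hq0 hq.2 j hj, diag_bwd h ht hL b hq0' hq'.2 j hj, c1, c2]
              cases b <;> simp <;> split_ifs <;> first | omega | simp
        _ ≤ 1 := by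
            rw [Finset.sum_ite_eq']
            split_ifs <;> norm_num
        _ ≤ _ := by linarith
    · refine ⟨?_, fun hh => absurd hh (by omega)⟩
      simp only [h.Γ_vanish s r hrs, sub_self, abs_zero, Finset.sum_const_zero]
      linarith

end LTP

/-- Near-diagonal increments in the second argument: for `L = 2^k`,
`k ≥ k₀`, grid points `p = i/L` with `2 ≤ i ≤ L − 1`, and `r < s ≤ T − 1`:
`|Γ^L_{s,r,0,1}(p − 1/L, p + 1/L) − Γ^L_{s,r,0,1}(p − 1/L, p)| ≤ c/L` and
`|Γ^L_{s,r,1,0}(p, p) − Γ^L_{s,r,1,0}(p, p − 1/L)| ≤ c/L`. -/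
theorem stmt_14
    (T : ℕ) (hT : 1 ≤ T) (ξ : ℕ → ℝ) (ℓ : ℕ → ℝ → ℝ) (ℓ' : ℕ → ℝ → ℝ)
    (hderiv : ∀ (t : ℕ) (x : ℝ), HasDerivAt (ℓ t) (ℓ' t x) x)
    (hlip : ∀ t : ℕ, LocallyLipschitz (ℓ' t))
    (Γ : ℕ → ℕ → ℤ → Bool → Bool → ℝ → ℝ → ℝ)
    (C : ℕ → ℤ → ℤ → Bool → ℝ → ℝ)
    (f χ : ℕ → ℕ → ℝ)
    (hTP : ∀ L : ℕ, 1 ≤ L → IsLinearTP T L ξ ℓ' (Γ L) (C L) (f L) (χ L)) :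
    ∃ c : ℝ, 0 < c ∧ ∃ k₀ : ℕ, ∀ k : ℕ, k₀ ≤ k →
      ∀ s : ℕ, s < T → ∀ r : ℤ, -1 ≤ r → r < (s : ℤ) →
        ∀ i : ℕ, 2 ≤ i → i ≤ 2 ^ k - 1 →
          |Γ (2 ^ k) s r false true ((i : ℝ) / (2 : ℝ) ^ k - 1 / (2 : ℝ) ^ k)
                ((i : ℝ) / (2 : ℝ) ^ k + 1 / (2 : ℝ) ^ k) -
              Γ (2 ^ k) s r false true ((i : ℝ) / (2 : ℝ) ^ k - 1 / (2 : ℝ) ^ k)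
                ((i : ℝ) / (2 : ℝ) ^ k)| ≤ c / (2 : ℝ) ^ k ∧
          |Γ (2 ^ k) s r true false ((i : ℝ) / (2 : ℝ) ^ k) ((i : ℝ) / (2 : ℝ) ^ k) -
              Γ (2 ^ k) s r true false ((i : ℝ) / (2 : ℝ) ^ k)
                ((i : ℝ) / (2 : ℝ) ^ k - 1 / (2 : ℝ) ^ k)| ≤ c / (2 : ℝ) ^ k := by
  obtain ⟨M, hM, hB⟩ := LTP.bound_all T ξ ℓ' (fun t => (hlip t).continuous) Γ C f χ hTP T le_rfl
  obtain ⟨K, hK, H⟩ := LTP.delta_bound T M hM T le_rfl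
  refine ⟨K, by linarith, 0, ?_⟩
  intro k _ s hs r hr hrs i hi hik
  have hL : 1 ≤ 2 ^ k := Nat.one_le_two_pow
  have hcast : ((2 ^ k : ℕ) : ℝ) = (2 : ℝ) ^ k := by push_cast; rfl
  constructor
  · have := (H (2 ^ k) ξ ℓ' _ _ _ _ hL (hTP _ hL) (hB _ hL) i (by omega) (by omega) s hs r hr
      false true).2 hrs (i - 1) (by omega)
    rw [hcast, Nat.cast_sub (by omega : 1 ≤ i)] at this
    rw [← sub_div, ← add_div]
    simpa using this
  · have := (H (2 ^ k) ξ ℓ' _ _ _ _ hL (hTP _ hL) (hB _ hL) (i - 1) (by omega) (by omega) s hs r hr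
      true false).2 hrs i (by omega)
    rw [hcast, Nat.cast_sub (by omega : 1 ≤ i)] at this
    rw [← sub_div]
    simpa using this
end
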